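/- arXiv:1312.2917 — 3 statements merged into one kernel-verified Lean document; each statement's English description precedes it below -/
import Mathlib

section
/- Commutator estimate (Lemma 3.5): For every φ ∈ C₂, one has ‖H*M*φ − M*H*φ‖_{L¹(ℝ)} ≲ ε·log(1/ε). -/
noncomputable section
open Set MeasureTheory Filter Real

/-- The principal value at `α` of the integral `∫_ℝ F(β) dβ`, understood as the limit of the
integrals over `{β : r < |α − β|}` as `r → 0⁺`. -/
def pvI (F : ℝ → ℝ) (α : ℝ) : ℝ :=
  limUnder (nhdsWithin (0:ℝ) (Ioi 0)) (fun r => ∫ β in {β : ℝ | r < |α - β|}, F β)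

/-- `ψ` is a smooth even cutoff, with values in `[0,1]`, supported in `[−1,1]`,
equal to `1` on `[−1/2,1/2]`. -/
def IsCutoff (ψ : ℝ → ℝ) : Prop :=
  ContDiff ℝ (⊤ : ℕ∞) ψ ∧ (∀ x : ℝ, ψ (-x) = ψ x) ∧ (∀ x : ℝ, ψ x ∈ Icc (0:ℝ) 1) ∧
    (∀ x : ℝ, 1 < |x| → ψ x = 0) ∧ (∀ x : ℝ, |x| ≤ 1/2 → ψ x = 1)

/-- The rescaled cutoff `ψ_r(x) = ψ(x/r)`. -/
def scut (ψ : ℝ → ℝ) (r x : ℝ) : ℝ := ψ (x / r)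

/-- `X̃(α) = 2ε + f(α) + g(α)`. -/
def Xt (ε : ℝ) (f g : ℝ → ℝ) (α : ℝ) : ℝ := 2 * ε + f α + g α

/-- The operator `T_{1,f}`. -/
def T1 (ψ : ℝ → ℝ) (ε : ℝ) (f : ℝ → ℝ) (h : ℝ → ℝ) (α : ℝ) : ℝ :=
  (2 * π)⁻¹ * pvI (fun β =>
    (f α - f β) / ((α - β) ^ 2 + (f α - f β) ^ 2) * h β * scut ψ (Real.sqrt ε) (α - β)) α

/-- The operator `T_{2,f}`. -/
def T2 (ψ : ℝ → ℝ) (ε : ℝ) (f : ℝ → ℝ) (h : ℝ → ℝ) (α : ℝ) : ℝ :=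
  (2 * π)⁻¹ * pvI (fun β =>
    (α - β) / ((α - β) ^ 2 + (f α - f β) ^ 2) * h β * scut ψ (Real.sqrt ε) (α - β)) α

/-- The operator `T_{3,(f,g)}`. -/
def T3 (ψ : ℝ → ℝ) (ε : ℝ) (f g : ℝ → ℝ) (h : ℝ → ℝ) (α : ℝ) : ℝ :=
  (2 * π)⁻¹ * ∫ β : ℝ,
    (2 * ε + f α + g β) / ((α - β) ^ 2 + (2 * ε + f α + g β) ^ 2) * h β *
      scut ψ (Real.sqrt ε) (α - β)

/-- The operator `T_{4,(f,g)}`. -/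
def T4 (ψ : ℝ → ℝ) (ε : ℝ) (f g : ℝ → ℝ) (h : ℝ → ℝ) (α : ℝ) : ℝ :=
  (2 * π)⁻¹ * ∫ β : ℝ,
    (α - β) / ((α - β) ^ 2 + (2 * ε + f α + g β) ^ 2) * h β * scut ψ (Real.sqrt ε) (α - β)

/-- The kernel of the operator `H`. -/
def Hker (ψ : ℝ → ℝ) (ε : ℝ) (f g : ℝ → ℝ) (α β : ℝ) : ℝ :=
  (α - β)⁻¹ * ((Xt ε f g α) ^ 2 / ((α - β) ^ 2 + (Xt ε f g α) ^ 2)) *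
    scut ψ (Real.sqrt ε / 2 ^ 6) α * scut ψ (Real.sqrt ε / 2 ^ 6) (α - β)

/-- The kernel of the operator `M`. -/
def Mker (ψ : ℝ → ℝ) (ε : ℝ) (f g : ℝ → ℝ) (α β : ℝ) : ℝ :=
  (Xt ε f g α) / ((α - β) ^ 2 + (Xt ε f g α) ^ 2) *
    scut ψ (Real.sqrt ε / 2 ^ 6) α * scut ψ (Real.sqrt ε / 2 ^ 6) (α - β)

/-- The operator `H` (a principal value integral in the second variable of the kernel). -/
def Hop (ψ : ℝ → ℝ) (ε : ℝ) (f g : ℝ → ℝ) (h : ℝ → ℝ) (α : ℝ) : ℝ :=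
  (2 * π)⁻¹ * pvI (fun β => Hker ψ ε f g α β * h β) α

/-- The adjoint operator `H*` (integration of the kernel of `H` in its first variable). -/
def Hstar (ψ : ℝ → ℝ) (ε : ℝ) (f g : ℝ → ℝ) (φ : ℝ → ℝ) (β : ℝ) : ℝ :=
  (2 * π)⁻¹ * pvI (fun α => Hker ψ ε f g α β * φ α) β

/-- The operator `M`. -/
def Mop (ψ : ℝ → ℝ) (ε : ℝ) (f g : ℝ → ℝ) (h : ℝ → ℝ) (α : ℝ) : ℝ :=
  (2 * π)⁻¹ * ∫ β : ℝ, Mker ψ ε f g α β * h β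

/-- The adjoint operator `M*` (integration of the kernel of `M` in its first variable). -/
def Mstar (ψ : ℝ → ℝ) (ε : ℝ) (f g : ℝ → ℝ) (φ : ℝ → ℝ) (β : ℝ) : ℝ :=
  (2 * π)⁻¹ * ∫ α : ℝ, Mker ψ ε f g α β * φ α

/-- The class `C₂` of test functions: `C¹` functions compactly supported in `I_δ = (−δ,δ)` with
`|φ⁽ᵏ⁾(α)| ≤ ε/(ε^{2+k} + |α|^{2+k})` on `I_δ` for `k ∈ {0,1}`. -/
def InC2 (δ ε : ℝ) (φ : ℝ → ℝ) : Prop :=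
  ContDiff ℝ 1 φ ∧ HasCompactSupport φ ∧ tsupport φ ⊆ Ioo (-δ) δ ∧
    ∀ α ∈ Ioo (-δ) δ,
      |φ α| ≤ ε / (ε ^ 2 + |α| ^ 2) ∧ |deriv φ α| ≤ ε / (ε ^ 3 + |α| ^ 3)

/-- The standing hypotheses on `f, g : (−δ,δ) → ℝ`: they are `C⁵`, with
`‖f‖_{C³} + ‖g‖_{C³} ≤ A`, `f(0) = f'(0) = g(0) = g'(0) = 0`, and
`f(α) + g(β) ≥ −ε` for `α, β ∈ (−4√ε, 4√ε)`. -/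
def GoodFG (δ A ε : ℝ) (f g : ℝ → ℝ) : Prop :=
  ContDiffOn ℝ 5 f (Ioo (-δ) δ) ∧ ContDiffOn ℝ 5 g (Ioo (-δ) δ) ∧
    f 0 = 0 ∧ g 0 = 0 ∧
    derivWithin f (Ioo (-δ) δ) 0 = 0 ∧ derivWithin g (Ioo (-δ) δ) 0 = 0 ∧
    (∀ x ∈ Ioo (-δ) δ, ∀ i : ℕ, i ≤ 3 →
      |iteratedDerivWithin i f (Ioo (-δ) δ) x| + |iteratedDerivWithin i g (Ioo (-δ) δ) x| ≤ A) ∧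
    (∀ α ∈ Ioo (-(4 * Real.sqrt ε)) (4 * Real.sqrt ε),
      ∀ β ∈ Ioo (-(4 * Real.sqrt ε)) (4 * Real.sqrt ε), -ε ≤ f α + g β)

/-! Auxiliary kernels. -/

def PP (ε s : ℝ) : ℝ := ε / (s ^ 2 + ε ^ 2)

def PC (ε ρ s : ℝ) : ℝ := if |s| ≤ ρ then PP ε s else 0

def jr (r t : ℝ) : ℝ := if r < |t| then t⁻¹ else 0

def ww (ψ : ℝ → ℝ) (ρ x t : ℝ) : ℝ := x ^ 2 / (t ^ 2 + x ^ 2) * ψ (t / ρ)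

def mm (ψ : ℝ → ℝ) (ρ x t : ℝ) : ℝ := x / (t ^ 2 + x ^ 2) * ψ (t / ρ)

structure Cor (ε ρ B : ℝ) (ψ X : ℝ → ℝ) : Prop where
  ε0 : 0 < ε
  ρ0 : 0 < ρ
  B1 : 1 ≤ B
  small : ρ ^ 2 + ε ^ 2 ≤ 1
  ψd : Differentiable ℝ ψ
  ψc : Continuous (deriv ψ)
  ψe : ∀ x, ψ (-x) = ψ x
  ψ0 : ∀ x, 0 ≤ ψ x
  ψ1 : ∀ x, ψ x ≤ 1
  ψs : ∀ x, 1 < |x| → ψ x = 0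
  ψB : ∀ x, |deriv ψ x| ≤ B
  χB : ∀ x, |deriv ψ (x / ρ) / ρ| ≤ B * |x| / ε
  Xd : Differentiable ℝ X
  Xc : Continuous (deriv X)
  Xl : ∀ x, ε ≤ X x
  Xu : ∀ x, X x ≤ B * ε
  Xb : ∀ x, |deriv X x| ≤ B * |x|

lemma PP_pos {ε : ℝ} (h : 0 < ε) (s : ℝ) : 0 < PP ε s := by unfold PP; positivity

lemma PC_nonneg {ε : ℝ} (h : 0 < ε) (ρ s : ℝ) : 0 ≤ PC ε ρ s := by
  unfold PC; split_ifs
  · exact (PP_pos h s).le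
  · exact le_rfl

lemma PP_meas (ε : ℝ) : Measurable (PP ε) := by unfold PP; fun_prop

lemma PC_meas (ε ρ : ℝ) : Measurable (PC ε ρ) := by
  unfold PC
  exact Measurable.ite (measurableSet_le (by fun_prop) (by fun_prop)) (PP_meas ε) measurable_const

lemma jr_meas (r : ℝ) : Measurable (jr r) := by
  unfold jr
  exact Measurable.ite (measurableSet_lt (by fun_prop) (by fun_prop)) (by fun_prop) measurable_const

lemma jr_neg (r t : ℝ) : jr r (-t) = - jr r t := by
  unfold jr; rw [abs_neg]; split_ifs <;> simp [inv_neg]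

lemma jr_bd {r : ℝ} (hr : 0 < r) (t : ℝ) : |jr r t| ≤ r⁻¹ := by
  unfold jr; split_ifs with h
  · rw [abs_inv]; exact inv_anti₀ hr h.le
  · simp [hr.le]

lemma jr_mul (r t : ℝ) : |t| * |jr r t| ≤ 1 := by
  unfold jr; split_ifs with h
  · rw [abs_inv]; exact mul_inv_le_one
  · simp

lemma PP_int {ε : ℝ} (h : 0 < ε) : ∫⁻ s, ENNReal.ofReal (PP ε s) = ENNReal.ofReal π := by
  have e : PP ε = fun s => ε⁻¹ * (1 + (s / ε) ^ 2)⁻¹ := by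
    funext s; unfold PP; field_simp; ring
  have i : Integrable (PP ε) := by
    rw [e]; exact (integrable_inv_one_add_sq.comp_div h.ne').const_mul _
  rw [← ofReal_integral_eq_lintegral_ofReal i (Eventually.of_forall fun s => (PP_pos h s).le)]
  congr 1
  rw [e, integral_const_mul, Measure.integral_comp_div (fun s : ℝ => (1 + s ^ 2)⁻¹),
    integral_univ_inv_one_add_sq, abs_of_pos h, smul_eq_mul]
  field_simp

lemma PC_int1 {ε ρ : ℝ} (h : 0 < ε) :
    ∫⁻ s, ENNReal.ofReal (PC ε ρ s) ≤ ENNReal.ofReal π := by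
  rw [← PP_int h]
  refine lintegral_mono fun s => ENNReal.ofReal_le_ofReal ?_
  unfold PC; split_ifs
  · exact le_rfl
  · exact (PP_pos h s).le

lemma half_int (F : ℝ → ℝ) (hF : Integrable F) :
    ∫ t, F t = ∫ t in Ioi (0:ℝ), (F t + F (-t)) := by
  rw [integral_add hF.integrableOn hF.comp_neg.integrableOn, integral_comp_neg_Ioi, neg_zero,
    add_comm]
  rw [← compl_Iic, integral_add_compl measurableSet_Iic hF]

lemma PC_int2 {ε ρ : ℝ} (h : 0 < ε) (hρ : 0 < ρ) (hs : ρ ^ 2 + ε ^ 2 ≤ 1) :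
    ∫⁻ s, ENNReal.ofReal (PC ε ρ s * |s|) ≤ ENNReal.ofReal (2 * ε * Real.log (1 / ε)) := by
  have e : (fun s => PC ε ρ s * |s|) = (Icc (-ρ) ρ).indicator (fun s => PP ε s * |s|) := by
    funext s; unfold PC indicator
    simp only [mem_Icc, abs_le]; split_ifs <;> simp
  have c : Continuous (fun s => PP ε s * |s|) := by
    unfold PP
    have : ∀ s : ℝ, s ^ 2 + ε ^ 2 ≠ 0 := fun s => by positivity
    fun_prop (disch := assumption)
  have i : Integrable (fun s => PC ε ρ s * |s|) := by
    rw [e, integrable_indicator_iff measurableSet_Icc]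
    exact c.continuousOn.integrableOn_compact isCompact_Icc
  rw [← ofReal_integral_eq_lintegral_ofReal i
    (Eventually.of_forall fun s => mul_nonneg (PC_nonneg h _ _) (abs_nonneg _))]
  refine ENNReal.ofReal_le_ofReal ?_
  rw [half_int _ i]
  have e2 : ∫ t in Ioi (0:ℝ), (PC ε ρ t * |t| + PC ε ρ (-t) * |-t|)
      = ∫ t in (0:ℝ)..ρ, ε * (2 * t / (t ^ 2 + ε ^ 2)) := by
    rw [intervalIntegral.integral_of_le hρ.le, ← integral_indicator measurableSet_Ioi,
      ← integral_indicator measurableSet_Ioc]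
    congr 1; funext t
    unfold indicator PC PP
    simp only [mem_Ioi, mem_Ioc]
    by_cases ht : 0 < t
    · simp only [ht, if_true, true_and, abs_neg, abs_of_pos ht]
      split_ifs
      · ring
      · simp
    · simp [ht]
  rw [e2, intervalIntegral.integral_const_mul]
  have e3 : ∫ t in (0:ℝ)..ρ, (2 * t / (t ^ 2 + ε ^ 2)) =
      Real.log (ρ ^ 2 + ε ^ 2) - Real.log (0 ^ 2 + ε ^ 2) := by
    refine intervalIntegral.integral_eq_sub_of_hasDerivAt
      (f := fun t => Real.log (t ^ 2 + ε ^ 2)) (fun t _ => ?_) ?_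
    · have := (((hasDerivAt_id t).pow 2).add_const (ε ^ 2)).log (by simp; positivity)
      simpa using this
    · apply Continuous.intervalIntegrable
      have : ∀ s : ℝ, s ^ 2 + ε ^ 2 ≠ 0 := fun s => by positivity
      fun_prop (disch := assumption)
  rw [e3]
  have l1 : Real.log (ρ ^ 2 + ε ^ 2) ≤ 0 := Real.log_nonpos (by positivity) hs
  have l2 : Real.log (0 ^ 2 + ε ^ 2) = 2 * Real.log ε := by
    rw [zero_pow two_ne_zero, zero_add, Real.log_pow]; norm_num
  rw [l2, one_div, Real.log_inv]
  nlinarith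

def QQ (ε ρ γ : ℝ) : ENNReal := ∫⁻ s, ENNReal.ofReal (PC ε ρ s * (2 * |γ| + |s|))

lemma QQ_le {ε ρ : ℝ} (h : 0 < ε) (hρ : 0 < ρ) (hs : ρ ^ 2 + ε ^ 2 ≤ 1) (γ : ℝ) :
    QQ ε ρ γ ≤ ENNReal.ofReal (2 * |γ| * π + 2 * ε * Real.log (1 / ε)) := by
  have hL : 0 ≤ Real.log (1 / ε) := Real.log_nonneg (by
    rw [le_div_iff₀ h]; nlinarith)
  unfold QQ
  calc _ = ∫⁻ s, (ENNReal.ofReal (2 * |γ|) * ENNReal.ofReal (PC ε ρ s)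
        + ENNReal.ofReal (PC ε ρ s * |s|)) := by
        refine lintegral_congr fun s => ?_
        have := PC_nonneg h ρ s
        rw [← ENNReal.ofReal_mul (by positivity), ← ENNReal.ofReal_add (by positivity)
          (by positivity)]
        congr 1; ring
    _ = ENNReal.ofReal (2 * |γ|) * (∫⁻ s, ENNReal.ofReal (PC ε ρ s))
        + ∫⁻ s, ENNReal.ofReal (PC ε ρ s * |s|) := by
        have := PC_meas ε ρ
        rw [lintegral_add_left (by fun_prop), lintegral_const_mul _ (by fun_prop)]
    _ ≤ ENNReal.ofReal (2 * |γ|) * ENNReal.ofReal π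
        + ENNReal.ofReal (2 * ε * Real.log (1 / ε)) := by
        gcongr
        · exact PC_int1 h
        · exact PC_int2 h hρ hs
    _ = _ := by
        rw [← ENNReal.ofReal_mul (by positivity), ← ENNReal.ofReal_add (by positivity)
          (by positivity)]

lemma QQ_total {ε ρ : ℝ} (h : 0 < ε) (hρ : 0 < ρ) (hs : ρ ^ 2 + ε ^ 2 ≤ 1) :
    ∫⁻ γ, ENNReal.ofReal (PC ε ρ γ) * QQ ε ρ γ
      ≤ ENNReal.ofReal (6 * π * ε * Real.log (1 / ε)) := by
  have hL : 0 ≤ Real.log (1 / ε) := Real.log_nonneg (by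
    rw [le_div_iff₀ h]; nlinarith)
  have := PC_meas ε ρ
  calc _ ≤ ∫⁻ γ, (ENNReal.ofReal (2 * π) * ENNReal.ofReal (PC ε ρ γ * |γ|)
        + ENNReal.ofReal (2 * ε * Real.log (1 / ε)) * ENNReal.ofReal (PC ε ρ γ)) := by
        refine lintegral_mono fun γ => ?_
        have := PC_nonneg h ρ γ
        refine (mul_le_mul_right (QQ_le h hρ hs γ) _).trans ?_
        rw [← ENNReal.ofReal_mul (by positivity), ← ENNReal.ofReal_mul (by positivity),
          ← ENNReal.ofReal_mul (by positivity), ← ENNReal.ofReal_add (by positivity)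
          (by positivity)]
        apply le_of_eq; congr 1; ring
    _ = ENNReal.ofReal (2 * π) * (∫⁻ γ, ENNReal.ofReal (PC ε ρ γ * |γ|))
        + ENNReal.ofReal (2 * ε * Real.log (1 / ε)) * ∫⁻ γ, ENNReal.ofReal (PC ε ρ γ) := by
        rw [lintegral_add_left (by fun_prop), lintegral_const_mul _ (by fun_prop),
          lintegral_const_mul _ (by fun_prop)]
    _ ≤ ENNReal.ofReal (2 * π) * ENNReal.ofReal (2 * ε * Real.log (1 / ε))
        + ENNReal.ofReal (2 * ε * Real.log (1 / ε)) * ENNReal.ofReal π := by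
        gcongr
        · exact PC_int2 h hρ hs
        · exact PC_int1 h
    _ = _ := by
        rw [← ENNReal.ofReal_mul (by positivity), ← ENNReal.ofReal_mul (by positivity),
          ← ENNReal.ofReal_add (by positivity) (by positivity)]
        congr 1; ring


section core
variable {ε ρ B : ℝ} {ψ X : ℝ → ℝ}

lemma Cor.χd (h : Cor ε ρ B ψ X) (α : ℝ) :
    HasDerivAt (fun a => ψ (a / ρ)) (deriv ψ (α / ρ) / ρ) α := by
  have := (h.ψd (α / ρ)).hasDerivAt.comp α ((hasDerivAt_id α).div_const ρ)
  simpa [Function.comp_def, div_eq_mul_inv] using this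

lemma Cor.Xp (h : Cor ε ρ B ψ X) (α : ℝ) : 0 < X α := h.ε0.trans_le (h.Xl α)

lemma Cor.ψa (h : Cor ε ρ B ψ X) (x : ℝ) : |ψ x| ≤ 1 := by
  rw [abs_of_nonneg (h.ψ0 x)]; exact h.ψ1 x

lemma Cor.ψz (h : Cor ε ρ B ψ X) {s : ℝ} (hs : ¬ |s| ≤ ρ) : ψ (s / ρ) = 0 := by
  apply h.ψs
  rw [abs_div, abs_of_pos h.ρ0, one_lt_div h.ρ0]
  exact not_le.mp hs

/-- basic algebraic bounds -/
lemma base_bd {ε B x t : ℝ} (hε : 0 < ε) (h1 : ε ≤ x) (h2 : x ≤ B * ε) :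
    x / (t ^ 2 + x ^ 2) ≤ B * PP ε t := by
  have hx : 0 < x := hε.trans_le h1
  unfold PP
  rw [← mul_div_assoc]
  have : ε ^ 2 ≤ x ^ 2 := by gcongr
  exact div_le_div₀ (by nlinarith) h2 (by positivity) (by linarith)

lemma base_bd2 {ε B x t : ℝ} (hε : 0 < ε) (h1 : ε ≤ x) (h2 : x ≤ B * ε) (hB : 1 ≤ B) :
    x ^ 2 / (t ^ 2 + x ^ 2) ≤ B ^ 2 * ε * PP ε t := by
  have hx : 0 < x := hε.trans_le h1
  have := base_bd (t := t) hε h1 h2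
  have hP := PP_pos hε t
  calc x ^ 2 / (t ^ 2 + x ^ 2) = x * (x / (t ^ 2 + x ^ 2)) := by ring
    _ ≤ (B * ε) * (B * PP ε t) := by gcongr
    _ = _ := by ring

lemma base_inv {ε x t : ℝ} (hε : 0 < ε) (h1 : ε ≤ x) :
    1 / (t ^ 2 + x ^ 2) ≤ PP ε t / ε := by
  have hx : 0 < x := hε.trans_le h1
  unfold PP
  have e : ε / (t ^ 2 + ε ^ 2) / ε = 1 / (t ^ 2 + ε ^ 2) := by field_simp
  rw [e]
  have : ε ^ 2 ≤ x ^ 2 := by gcongr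
  gcongr

def dw (ψ X : ℝ → ℝ) (ρ t α : ℝ) : ℝ :=
  deriv ψ (α / ρ) / ρ * ww ψ ρ (X α) t +
    ψ (α / ρ) * (2 * X α * deriv X α * t ^ 2 / (t ^ 2 + X α ^ 2) ^ 2 * ψ (t / ρ))

lemma Cor.dw_has (h : Cor ε ρ B ψ X) (t α : ℝ) :
    HasDerivAt (fun a => ψ (a / ρ) * ww ψ ρ (X a) t) (dw ψ X ρ t α) α := by
  have hX := (h.Xd α).hasDerivAt
  have hp := h.Xp α
  have h2 : HasDerivAt (fun a => X a ^ 2) (2 * X α * deriv X α) α := by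
    simpa using hX.fun_pow 2
  have hd : t ^ 2 + X α ^ 2 ≠ 0 := by positivity
  have h3 := (h2.fun_div (h2.const_add (t ^ 2)) hd).mul_const (ψ (t / ρ))
  unfold dw ww
  refine ((h.χd α).fun_mul h3).congr_deriv ?_
  congr 3
  ring

lemma Cor.dw_bd (h : Cor ε ρ B ψ X) (t α : ℝ) :
    |dw ψ X ρ t α| ≤ 3 * B ^ 3 * |α| * PP ε t := by
  have hε := h.ε0
  have hB := h.B1
  have hp := h.Xp α
  have hP := PP_pos hε t
  have b2 := base_bd2 (t := t) hε (h.Xl α) (h.Xu α) hB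
  have b1 := base_bd (t := t) hε (h.Xl α) (h.Xu α)
  unfold dw
  have A1 : |deriv ψ (α / ρ) / ρ * ww ψ ρ (X α) t| ≤ (B * |α| / ε) * (B ^ 2 * ε * PP ε t * 1) := by
    rw [abs_mul]
    refine mul_le_mul (h.χB α) ?_ (abs_nonneg _) (by positivity)
    unfold ww
    rw [abs_mul, abs_of_nonneg (by positivity : 0 ≤ X α ^ 2 / (t ^ 2 + X α ^ 2))]
    exact mul_le_mul b2 (h.ψa _) (abs_nonneg _) (by positivity)
  have A2 : |ψ (α / ρ) * (2 * X α * deriv X α * t ^ 2 / (t ^ 2 + X α ^ 2) ^ 2 * ψ (t / ρ))|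
      ≤ 1 * ((2 * (B * PP ε t) * (B * |α|) * 1) * 1) := by
    rw [abs_mul]
    refine mul_le_mul (h.ψa _) ?_ (abs_nonneg _) zero_le_one
    rw [abs_mul]
    refine mul_le_mul ?_ (h.ψa _) (abs_nonneg _) (by positivity)
    have : 2 * X α * deriv X α * t ^ 2 / (t ^ 2 + X α ^ 2) ^ 2
        = 2 * (X α / (t ^ 2 + X α ^ 2)) * deriv X α * (t ^ 2 / (t ^ 2 + X α ^ 2)) := by
      field_simp
    rw [this, abs_mul, abs_mul, abs_of_nonneg (by positivity : 0 ≤ t ^ 2 / (t ^ 2 + X α ^ 2)),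
      abs_of_nonneg (by positivity : 0 ≤ 2 * (X α / (t ^ 2 + X α ^ 2)))]
    have h1 : t ^ 2 / (t ^ 2 + X α ^ 2) ≤ 1 := by
      rw [div_le_one (by positivity)]; nlinarith
    have := h.Xb α
    gcongr
  refine (abs_add_le _ _).trans ((add_le_add A1 A2).trans ?_)
  have : (B * |α| / ε) * (B ^ 2 * ε * PP ε t * 1) = B ^ 3 * |α| * PP ε t := by field_simp
  rw [this]
  have h23 : B ^ 2 ≤ B ^ 3 := pow_le_pow_right₀ hB (by norm_num)
  have : 0 ≤ |α| * PP ε t := by positivity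
  nlinarith

/-- from a derivative bound `|F'(a)| ≤ K |a|` to differences. -/
lemma diff_bd {F F' : ℝ → ℝ} {K : ℝ} (hK : 0 ≤ K) (hF : ∀ a, HasDerivAt F (F' a) a)
    (hb : ∀ a, |F' a| ≤ K * |a|) (α γ : ℝ) :
    |F α - F γ| ≤ K * (|α - γ| * (2 * |γ| + |γ - α|)) := by
  have key : ∀ x ∈ uIcc γ α, ‖F' x‖ ≤ K * (|γ| + |γ - α|) := by
    intro x hx
    refine (hb x).trans ?_
    gcongr
    have h1 : |x - γ| ≤ |α - γ| := abs_sub_left_of_mem_uIcc hx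
    have : |x| ≤ |γ| + |x - γ| := by
      have := abs_add_le γ (x - γ); simpa using this
    rw [abs_sub_comm γ α]; linarith
  have := (convex_uIcc γ α).norm_image_sub_le_of_norm_hasDerivWithin_le
    (fun x _ => (hF x).hasDerivWithinAt) key left_mem_uIcc right_mem_uIcc
  rw [Real.norm_eq_abs, Real.norm_eq_abs] at this
  refine this.trans ?_
  have : 0 ≤ |γ| := abs_nonneg _
  have : 0 ≤ K * |α - γ| := by positivity
  nlinarith

def dm (ψ X : ℝ → ℝ) (ρ t α : ℝ) : ℝ :=
  deriv ψ (α / ρ) / ρ * mm ψ ρ (X α) t +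
    ψ (α / ρ) * (deriv X α * (t ^ 2 - X α ^ 2) / (t ^ 2 + X α ^ 2) ^ 2 * ψ (t / ρ))

lemma Cor.dm_has (h : Cor ε ρ B ψ X) (t α : ℝ) :
    HasDerivAt (fun a => ψ (a / ρ) * mm ψ ρ (X a) t) (dm ψ X ρ t α) α := by
  have hX := (h.Xd α).hasDerivAt
  have hp := h.Xp α
  have h2 : HasDerivAt (fun a => X a ^ 2) (2 * X α * deriv X α) α := by
    simpa using hX.fun_pow 2
  have hd : t ^ 2 + X α ^ 2 ≠ 0 := by positivity
  have h3 := (hX.fun_div (h2.const_add (t ^ 2)) hd).mul_const (ψ (t / ρ))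
  unfold dm mm
  refine ((h.χd α).fun_mul h3).congr_deriv ?_
  congr 3
  ring

lemma Cor.dm_bd (h : Cor ε ρ B ψ X) (t α : ℝ) :
    |dm ψ X ρ t α| ≤ 2 * B ^ 2 * PP ε t / ε * |α| := by
  have hε := h.ε0
  have hB := h.B1
  have hp := h.Xp α
  have hP := PP_pos hε t
  have b1 := base_bd (t := t) hε (h.Xl α) (h.Xu α)
  have b0 := base_inv (t := t) hε (h.Xl α)
  unfold dm
  have A1 : |deriv ψ (α / ρ) / ρ * mm ψ ρ (X α) t| ≤ (B * |α| / ε) * (B * PP ε t * 1) := by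
    rw [abs_mul]
    refine mul_le_mul (h.χB α) ?_ (abs_nonneg _) (by positivity)
    unfold mm
    rw [abs_mul, abs_of_nonneg (by positivity : 0 ≤ X α / (t ^ 2 + X α ^ 2))]
    exact mul_le_mul b1 (h.ψa _) (abs_nonneg _) (by positivity)
  have A2 : |ψ (α / ρ) * (deriv X α * (t ^ 2 - X α ^ 2) / (t ^ 2 + X α ^ 2) ^ 2 * ψ (t / ρ))|
      ≤ 1 * (((B * |α|) * 1 * (PP ε t / ε)) * 1) := by
    rw [abs_mul]
    refine mul_le_mul (h.ψa _) ?_ (abs_nonneg _) zero_le_one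
    rw [abs_mul]
    refine mul_le_mul ?_ (h.ψa _) (abs_nonneg _) (by positivity)
    have : deriv X α * (t ^ 2 - X α ^ 2) / (t ^ 2 + X α ^ 2) ^ 2
        = deriv X α * ((t ^ 2 - X α ^ 2) / (t ^ 2 + X α ^ 2)) * (1 / (t ^ 2 + X α ^ 2)) := by
      field_simp
    rw [this, abs_mul, abs_mul, abs_of_nonneg (by positivity : 0 ≤ 1 / (t ^ 2 + X α ^ 2))]
    have h1 : |(t ^ 2 - X α ^ 2) / (t ^ 2 + X α ^ 2)| ≤ 1 := by
      rw [abs_div, abs_of_pos (by positivity : 0 < t ^ 2 + X α ^ 2), div_le_one (by positivity),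
        abs_le]
      constructor <;> nlinarith
    have := h.Xb α
    gcongr
  refine (abs_add_le _ _).trans ((add_le_add A1 A2).trans ?_)
  have e1 : (B * |α| / ε) * (B * PP ε t * 1) = B ^ 2 * (PP ε t / ε * |α|) := by ring
  have e2 : 1 * (((B * |α|) * 1 * (PP ε t / ε)) * 1) = B * (PP ε t / ε * |α|) := by ring
  rw [e1, e2, show 2 * B ^ 2 * PP ε t / ε * |α| = 2 * B ^ 2 * (PP ε t / ε * |α|) by ring]
  have hh : 0 ≤ PP ε t / ε * |α| := by positivity
  have : B * (PP ε t / ε * |α|) ≤ B ^ 2 * (PP ε t / ε * |α|) :=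
    mul_le_mul_of_nonneg_right (by nlinarith) hh
  linarith

lemma Cor.mm_bd (h : Cor ε ρ B ψ X) (γ s : ℝ) : |mm ψ ρ (X γ) s| ≤ B * PC ε ρ s := by
  unfold PC mm
  have hp := h.Xp γ
  have hP := PP_pos h.ε0 s
  have := h.B1
  split_ifs with hs
  · rw [abs_mul, abs_of_nonneg (by positivity : 0 ≤ X γ / (s ^ 2 + X γ ^ 2))]
    have := mul_le_mul (base_bd (t := s) h.ε0 (h.Xl γ) (h.Xu γ)) (h.ψa (s / ρ)) (abs_nonneg _)
      (by positivity)
    simpa using this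
  · simp [h.ψz hs]

lemma Cor.ww_bd (h : Cor ε ρ B ψ X) (γ s : ℝ) : |ww ψ ρ (X γ) s| ≤ B ^ 2 * ε * PC ε ρ s := by
  unfold PC ww
  have hp := h.Xp γ
  have hP := PP_pos h.ε0 s
  have := h.B1
  have hε := h.ε0
  split_ifs with hs
  · rw [abs_mul, abs_of_nonneg (by positivity : 0 ≤ X γ ^ 2 / (s ^ 2 + X γ ^ 2))]
    have := mul_le_mul (base_bd2 (t := s) h.ε0 (h.Xl γ) (h.Xu γ) h.B1) (h.ψa (s / ρ))
      (abs_nonneg _) (by positivity)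
    simpa using this
  · simp [h.ψz hs]

def ms (ψ : ℝ → ℝ) (ρ x s : ℝ) : ℝ :=
  - (2 * x * s) / (s ^ 2 + x ^ 2) ^ 2 * ψ (s / ρ) + x / (s ^ 2 + x ^ 2) * (deriv ψ (s / ρ) / ρ)

lemma Cor.ms_has (h : Cor ε ρ B ψ X) (γ s : ℝ) :
    HasDerivAt (mm ψ ρ (X γ)) (ms ψ ρ (X γ) s) s := by
  have hp := h.Xp γ
  have hd : s ^ 2 + X γ ^ 2 ≠ 0 := by positivity
  have h2 : HasDerivAt (fun a : ℝ => a ^ 2 + X γ ^ 2) (2 * s) s := by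
    simpa using ((hasDerivAt_id s).fun_pow 2).add_const (X γ ^ 2)
  have h3 := (((hasDerivAt_const s (X γ)).fun_div h2 hd)).fun_mul (h.χd s)
  unfold ms mm
  refine h3.congr_deriv ?_
  congr 2
  ring

lemma Cor.dψz (h : Cor ε ρ B ψ X) {s : ℝ} (hs : ¬ |s| ≤ ρ) : deriv ψ (s / ρ) = 0 := by
  have h1 : 1 < |s / ρ| := by
    rw [abs_div, abs_of_pos h.ρ0, one_lt_div h.ρ0]; exact not_le.mp hs
  have : ψ =ᶠ[nhds (s / ρ)] fun _ => 0 := by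
    have ho : IsOpen {x : ℝ | 1 < |x|} := isOpen_lt continuous_const continuous_abs
    filter_upwards [ho.mem_nhds h1] with x hx using h.ψs x hx
  rw [this.deriv_eq]; simp

lemma Cor.ms_bd (h : Cor ε ρ B ψ X) (γ s : ℝ) :
    |s| * |ms ψ ρ (X γ) s| ≤ 3 * B ^ 2 * PC ε ρ s := by
  unfold PC ms
  have hp := h.Xp γ
  have hP := PP_pos h.ε0 s
  have hB := h.B1
  have hε := h.ε0
  have hρ := h.ρ0
  split_ifs with hs
  · have b := base_bd (t := s) h.ε0 (h.Xl γ) (h.Xu γ)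
    have A1 : |s| * |- (2 * X γ * s) / (s ^ 2 + X γ ^ 2) ^ 2 * ψ (s / ρ)| ≤
        2 * (B * PP ε s) * 1 * 1 := by
      rw [abs_mul, ← mul_assoc]
      refine mul_le_mul ?_ (h.ψa _) (abs_nonneg _) (by positivity)
      have : |s| * |- (2 * X γ * s) / (s ^ 2 + X γ ^ 2) ^ 2| =
          2 * (X γ / (s ^ 2 + X γ ^ 2)) * (s ^ 2 / (s ^ 2 + X γ ^ 2)) := by
        rw [abs_div, abs_neg, abs_mul, abs_mul, abs_of_pos hp, abs_of_pos (two_pos (α := ℝ)),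
          abs_of_pos (by positivity : 0 < (s ^ 2 + X γ ^ 2) ^ 2), ← sq_abs s]
        field_simp
      rw [this]
      have h1 : s ^ 2 / (s ^ 2 + X γ ^ 2) ≤ 1 := by
        rw [div_le_one (by positivity)]; nlinarith
      gcongr
    have A2 : |s| * |X γ / (s ^ 2 + X γ ^ 2) * (deriv ψ (s / ρ) / ρ)| ≤ (B * PP ε s) * B := by
      rw [abs_mul, abs_of_nonneg (by positivity : 0 ≤ X γ / (s ^ 2 + X γ ^ 2)), mul_left_comm]
      refine mul_le_mul b ?_ (by positivity) (by positivity)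
      rw [abs_div, abs_of_pos hρ, ← mul_div_assoc, div_le_iff₀ hρ, mul_comm]
      exact mul_le_mul (h.ψB _) hs (abs_nonneg _) (by positivity)
    have := mul_le_mul_of_nonneg_left (abs_add_le (- (2 * X γ * s) / (s ^ 2 + X γ ^ 2) ^ 2 *
      ψ (s / ρ)) (X γ / (s ^ 2 + X γ ^ 2) * (deriv ψ (s / ρ) / ρ))) (abs_nonneg s)
    have e : B * PP ε s ≤ B ^ 2 * PP ε s := by
      gcongr; nlinarith
    nlinarith
  · simp [h.ψz hs, h.dψz hs]

end core


section core
variable {ε ρ B : ℝ} {ψ X : ℝ → ℝ}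

lemma PC_int {ε : ℝ} (h : 0 < ε) (ρ : ℝ) : Integrable (PC ε ρ) := by
  refine ⟨(PC_meas ε ρ).aestronglyMeasurable, ?_⟩
  rw [hasFiniteIntegral_iff_ofReal (Eventually.of_forall fun s => PC_nonneg h ρ s)]
  exact (PC_int1 h).trans_lt ENNReal.ofReal_lt_top

lemma PC_le {ε : ℝ} (h : 0 < ε) (ρ s : ℝ) : PC ε ρ s ≤ ε⁻¹ := by
  unfold PC PP
  split_ifs
  · rw [div_le_iff₀ (by positivity)]
    have : ε⁻¹ * (s ^ 2 + ε ^ 2) = ε⁻¹ * s ^ 2 + ε := by field_simp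
    rw [this]
    have : 0 ≤ ε⁻¹ * s ^ 2 := by positivity
    linarith
  · positivity

lemma Cor.Xm (h : Cor ε ρ B ψ X) : Measurable X := h.Xd.continuous.measurable
lemma Cor.ψm (h : Cor ε ρ B ψ X) : Measurable ψ := h.ψd.continuous.measurable

lemma Cor.mm_le (h : Cor ε ρ B ψ X) (γ s : ℝ) : |mm ψ ρ (X γ) s| ≤ B * ε⁻¹ :=
  (h.mm_bd γ s).trans (mul_le_mul_of_nonneg_left (PC_le h.ε0 ρ s) (by linarith [h.B1]))

lemma Cor.ww_le (h : Cor ε ρ B ψ X) (γ s : ℝ) : |ww ψ ρ (X γ) s| ≤ B ^ 2 := by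
  have hε := h.ε0
  refine (h.ww_bd γ s).trans ((mul_le_mul_of_nonneg_left (PC_le h.ε0 ρ s)
    (by positivity)).trans (le_of_eq ?_))
  field_simp

lemma Cor.E2 (h : Cor ε ρ B ψ X) (r γ : ℝ) :
    ∫⁻ β, ‖∫ α, jr r (γ - α) * ww ψ ρ (X γ) (γ - α) *
      (ψ (α / ρ) * mm ψ ρ (X α) (α - β) - ψ (γ / ρ) * mm ψ ρ (X γ) (α - β))‖ₑ
      ≤ ENNReal.ofReal (2 * B ^ 4 * π) * QQ ε ρ γ := by
  have hε := h.ε0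
  have hB := h.B1
  have hPP := PP_meas ε
  have hPC := PC_meas ε ρ
  calc _ ≤ ∫⁻ β, ∫⁻ α, ENNReal.ofReal (2 * B ^ 4 * (PC ε ρ (γ - α) * (2 * |γ| + |γ - α|))) *
        ENNReal.ofReal (PP ε (α - β)) := by
        refine lintegral_mono fun β => (enorm_integral_le_lintegral_enorm _).trans
          (lintegral_mono fun α => ?_)
        have hc := PC_nonneg hε ρ (γ - α)
        have hp := PP_pos hε (α - β)
        rw [← ENNReal.ofReal_mul (by positivity), Real.enorm_eq_ofReal_abs]
        refine ENNReal.ofReal_le_ofReal ?_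
        rw [abs_mul, abs_mul]
        have d := diff_bd (by positivity) (h.dm_has (α - β)) (h.dm_bd (α - β)) α γ
        have j := jr_mul r (γ - α)
        have w := h.ww_bd γ (γ - α)
        rw [abs_sub_comm α γ] at d
        calc _ ≤ |jr r (γ - α)| * (B ^ 2 * ε * PC ε ρ (γ - α)) *
              (2 * B ^ 2 * PP ε (α - β) / ε * (|γ - α| * (2 * |γ| + |γ - α|))) := by gcongr
          _ = (|γ - α| * |jr r (γ - α)|) * (2 * B ^ 4 * (PC ε ρ (γ - α) * (2 * |γ| + |γ - α|)) *
              PP ε (α - β)) := by field_simp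
          _ ≤ 1 * _ := by gcongr
          _ = _ := one_mul _
    _ = ∫⁻ α, ∫⁻ β, ENNReal.ofReal (2 * B ^ 4 * (PC ε ρ (γ - α) * (2 * |γ| + |γ - α|))) *
        ENNReal.ofReal (PP ε (α - β)) := by
        refine lintegral_lintegral_swap ?_
        apply Measurable.aemeasurable
        unfold Function.uncurry
        fun_prop
    _ = ∫⁻ α, ENNReal.ofReal (2 * B ^ 4 * π) *
          ENNReal.ofReal (PC ε ρ (γ - α) * (2 * |γ| + |γ - α|)) := by
        refine lintegral_congr fun α => ?_
        rw [lintegral_const_mul _ (by fun_prop),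
          lintegral_sub_left_eq_self (fun x => ENNReal.ofReal (PP ε x)) α, PP_int hε,
          ← ENNReal.ofReal_mul (by have hc := PC_nonneg hε ρ (γ - α); positivity),
          ← ENNReal.ofReal_mul (by positivity)]
        congr 1; ring
    _ = _ := by
        rw [lintegral_const_mul _ (by fun_prop),
          lintegral_sub_left_eq_self (fun s => ENNReal.ofReal (PC ε ρ s * (2 * |γ| + |s|))) γ]
        rfl

lemma shift_bd {q q' b : ℝ → ℝ} (hq : ∀ a, HasDerivAt q (q' a) a) (hc : Continuous q')
    (hb : ∀ a, |q' a| ≤ b a) (hm : Measurable b) {t : ℝ} (ht : 0 ≤ t) :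
    ∫⁻ β, ‖q (β + t) - q (β - t)‖ₑ ≤ ENNReal.ofReal (2 * t) * ∫⁻ a, ENNReal.ofReal (b a) := by
  calc _ ≤ ∫⁻ β, ∫⁻ u in Ioc (-t) t, ENNReal.ofReal (b (β + u)) := by
        refine lintegral_mono fun β => ?_
        have e : q (β + t) - q (β - t) = ∫ u in (-t)..t, q' (β + u) := by
          rw [intervalIntegral.integral_comp_add_left]
          rw [intervalIntegral.integral_eq_sub_of_hasDerivAt (fun x _ => hq x)
            (hc.intervalIntegrable _ _), sub_eq_add_neg β t]
        rw [e, intervalIntegral.integral_of_le (by linarith)]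
        refine (enorm_integral_le_lintegral_enorm _).trans (lintegral_mono fun u => ?_)
        rw [Real.enorm_eq_ofReal_abs]
        exact ENNReal.ofReal_le_ofReal (hb _)
    _ = ∫⁻ u in Ioc (-t) t, ∫⁻ β, ENNReal.ofReal (b (β + u)) := by
        refine lintegral_lintegral_swap ?_
        apply Measurable.aemeasurable
        unfold Function.uncurry
        fun_prop
    _ = ∫⁻ u in Ioc (-t) t, ∫⁻ β, ENNReal.ofReal (b β) := by
        refine lintegral_congr fun u => ?_
        rw [lintegral_add_right_eq_self (fun x => ENNReal.ofReal (b x)) u]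
    _ = _ := by
        rw [setLIntegral_const, Real.volume_Ioc, mul_comm]
        congr 2; ring

def qq (ψ X : ℝ → ℝ) (ρ γ t α : ℝ) : ℝ :=
  mm ψ ρ (X γ) (γ - α) * (ψ (α / ρ) * ww ψ ρ (X α) t - ψ (γ / ρ) * ww ψ ρ (X γ) t)

def dq (ψ X : ℝ → ℝ) (ρ γ t α : ℝ) : ℝ :=
  -ms ψ ρ (X γ) (γ - α) * (ψ (α / ρ) * ww ψ ρ (X α) t - ψ (γ / ρ) * ww ψ ρ (X γ) t)
    + mm ψ ρ (X γ) (γ - α) * dw ψ X ρ t α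

lemma Cor.dq_has (h : Cor ε ρ B ψ X) (γ t α : ℝ) :
    HasDerivAt (qq ψ X ρ γ t) (dq ψ X ρ γ t α) α := by
  unfold qq dq
  have h1 : HasDerivAt (fun a => mm ψ ρ (X γ) (γ - a)) (-ms ψ ρ (X γ) (γ - α)) α := by
    have := (h.ms_has γ (γ - α)).comp α ((hasDerivAt_id α).const_sub γ)
    simpa [Function.comp_def] using this
  exact h1.fun_mul ((h.dw_has t α).sub_const _)

lemma Cor.dq_cont (h : Cor ε ρ B ψ X) (γ t : ℝ) : Continuous (dq ψ X ρ γ t) := by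
  have c1 := h.ψd.continuous
  have c2 := h.Xd.continuous
  have c3 := h.ψc
  have c4 := h.Xc
  have d : ∀ (s α : ℝ), s ^ 2 + X α ^ 2 ≠ 0 := fun s α => by
    have := h.Xp α
    positivity
  have d' : ∀ (s α : ℝ), (s ^ 2 + X α ^ 2) ^ 2 ≠ 0 := fun s α => pow_ne_zero _ (d s α)
  unfold dq ms mm dw ww
  fun_prop (disch := first | (intro x; apply d) | (intro x; apply d') | apply d | apply d')

lemma Cor.dq_bd (h : Cor ε ρ B ψ X) (γ t α : ℝ) :
    |dq ψ X ρ γ t α| ≤ 12 * B ^ 5 * PP ε t * (PC ε ρ (γ - α) * (2 * |γ| + |γ - α|)) := by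
  have hε := h.ε0
  have hB := h.B1
  have hp := PP_pos hε t
  have hc := PC_nonneg hε ρ (γ - α)
  have d := diff_bd (K := 3 * B ^ 3 * PP ε t) (by positivity) (h.dw_has t)
    (fun a => (h.dw_bd t a).trans (le_of_eq (by ring))) α γ
  rw [abs_sub_comm α γ] at d
  have w := h.dw_bd t α
  have m := h.mm_bd γ (γ - α)
  have s := h.ms_bd γ (γ - α)
  have ha : |α| ≤ 2 * |γ| + |γ - α| := by
    have := abs_sub γ (γ - α)
    have h0 := abs_nonneg γ
    rw [sub_sub_cancel] at this
    linarith
  unfold dq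
  refine (abs_add_le _ _).trans ?_
  rw [abs_mul, abs_mul, abs_neg]
  calc _ ≤ |ms ψ ρ (X γ) (γ - α)| * (3 * B ^ 3 * PP ε t * (|γ - α| * (2 * |γ| + |γ - α|)))
        + (B * PC ε ρ (γ - α)) * (3 * B ^ 3 * (2 * |γ| + |γ - α|) * PP ε t) := by
        refine add_le_add (by gcongr) (mul_le_mul m (w.trans (by gcongr)) (abs_nonneg _)
          (by positivity))
    _ = (|γ - α| * |ms ψ ρ (X γ) (γ - α)|) * (3 * B ^ 3 * PP ε t * (2 * |γ| + |γ - α|))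
        + (B * PC ε ρ (γ - α)) * (3 * B ^ 3 * (2 * |γ| + |γ - α|) * PP ε t) := by ring
    _ ≤ (3 * B ^ 2 * PC ε ρ (γ - α)) * (3 * B ^ 3 * PP ε t * (2 * |γ| + |γ - α|))
        + (B ^ 2 * PC ε ρ (γ - α)) * (3 * B ^ 3 * (2 * |γ| + |γ - α|) * PP ε t) := by
        have : B ≤ B ^ 2 := by nlinarith
        gcongr
    _ = _ := by ring

def GG (ψ X : ℝ → ℝ) (ρ r γ β α : ℝ) : ℝ :=
  mm ψ ρ (X γ) (γ - α) * (ψ (α / ρ) * (jr r (α - β) * ww ψ ρ (X α) (α - β))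
    - ψ (γ / ρ) * (jr r (α - β) * ww ψ ρ (X γ) (α - β)))

lemma Cor.GG_int (h : Cor ε ρ B ψ X) {r : ℝ} (hr : 0 < r) (γ β : ℝ) :
    Integrable (GG ψ X ρ r γ β) := by
  have hB := h.B1
  have m1 := h.Xm
  have m2 := h.ψm
  have m3 := jr_meas r
  refine Integrable.mono' (g := fun α => B * PC ε ρ (γ - α) * (1 * (r⁻¹ * B ^ 2)
    + 1 * (r⁻¹ * B ^ 2))) ?_ ?_ (Eventually.of_forall fun α => ?_)
  · exact (((PC_int h.ε0 ρ).comp_sub_left γ).const_mul _).mul_const _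
  · apply Measurable.aestronglyMeasurable
    unfold GG mm ww
    fun_prop
  · rw [Real.norm_eq_abs]
    unfold GG
    rw [abs_mul]
    have hc := PC_nonneg h.ε0 ρ (γ - α)
    refine mul_le_mul (h.mm_bd γ _) ((abs_sub _ _).trans ?_) (abs_nonneg _) (by positivity)
    simp only [abs_mul]
    have := h.ψa (α / ρ)
    have := h.ψa (γ / ρ)
    have := jr_bd hr (α - β)
    have := h.ww_le α (α - β)
    have := h.ww_le γ (α - β)
    gcongr

lemma Cor.ww_neg (h : Cor ε ρ B ψ X) (x t : ℝ) : ww ψ ρ x (-t) = ww ψ ρ x t := by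
  unfold ww; rw [neg_div, h.ψe, neg_sq]

lemma Cor.E1 (h : Cor ε ρ B ψ X) {r : ℝ} (hr : 0 < r) (γ : ℝ) :
    ∫⁻ β, ‖∫ α, GG ψ X ρ r γ β α‖ₑ ≤ ENNReal.ofReal (24 * B ^ 5 * π) * QQ ε ρ γ := by
  have hε := h.ε0
  have hB := h.B1
  have hPP := PP_meas ε
  have hPC := PC_meas ε ρ
  have m1 := h.Xm
  have m2 := h.ψm
  have m3 := jr_meas r
  calc _ = ∫⁻ β, ‖∫ t in Ioi (0:ℝ), jr r t * (qq ψ X ρ γ t (β + t) - qq ψ X ρ γ t (β - t))‖ₑ := by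
        refine lintegral_congr fun β => ?_
        have i := h.GG_int hr γ β
        rw [← integral_add_left_eq_self (GG ψ X ρ r γ β) β, half_int _ (i.comp_add_left β)]
        congr 2
        funext t
        unfold GG qq
        rw [add_sub_cancel_left, add_sub_cancel_left, jr_neg, h.ww_neg, h.ww_neg,
          ← sub_eq_add_neg]
        ring
    _ ≤ ∫⁻ β, ∫⁻ t in Ioi (0:ℝ), ‖jr r t * (qq ψ X ρ γ t (β + t) - qq ψ X ρ γ t (β - t))‖ₑ :=
        lintegral_mono fun β => enorm_integral_le_lintegral_enorm _
    _ = ∫⁻ t in Ioi (0:ℝ), ∫⁻ β, ‖jr r t * (qq ψ X ρ γ t (β + t) - qq ψ X ρ γ t (β - t))‖ₑ := by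
        refine lintegral_lintegral_swap ?_
        apply Measurable.aemeasurable
        unfold Function.uncurry qq mm ww
        fun_prop
    _ ≤ ∫⁻ t in Ioi (0:ℝ), ENNReal.ofReal (24 * B ^ 5) * ENNReal.ofReal (PP ε t) * QQ ε ρ γ := by
        refine setLIntegral_mono (by fun_prop) fun t ht => ?_
        have ht : 0 < t := ht
        have hp := PP_pos hε t
        have s := shift_bd (h.dq_has γ t) (h.dq_cont γ t) (h.dq_bd γ t) (by fun_prop) ht.le
        have e : ∫⁻ a, ENNReal.ofReal (12 * B ^ 5 * PP ε t *
            (PC ε ρ (γ - a) * (2 * |γ| + |γ - a|)))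
            = ENNReal.ofReal (12 * B ^ 5 * PP ε t) * QQ ε ρ γ := by
          simp_rw [ENNReal.ofReal_mul (show 0 ≤ 12 * B ^ 5 * PP ε t by positivity)]
          rw [lintegral_const_mul _ (by fun_prop),
            lintegral_sub_left_eq_self (fun s => ENNReal.ofReal (PC ε ρ s * (2 * |γ| + |s|))) γ]
          rfl
        rw [e] at s
        have mq : Measurable fun β => qq ψ X ρ γ t (β + t) - qq ψ X ρ γ t (β - t) := by
          unfold qq mm ww
          fun_prop
        simp_rw [enorm_mul]
        rw [lintegral_const_mul _ mq.enorm]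
        refine (mul_le_mul_right s _).trans ?_
        rw [← mul_assoc, ← mul_assoc, Real.enorm_eq_ofReal_abs,
          ← ENNReal.ofReal_mul (abs_nonneg _), ← ENNReal.ofReal_mul (by positivity),
          ← ENNReal.ofReal_mul (by positivity)]
        refine mul_le_mul_left (ENNReal.ofReal_le_ofReal ?_) _
        have j := jr_mul r t
        rw [abs_of_pos ht] at j
        have : 0 ≤ 24 * B ^ 5 * PP ε t := by positivity
        calc _ = (t * |jr r t|) * (24 * B ^ 5 * PP ε t) := by ring
          _ ≤ 1 * (24 * B ^ 5 * PP ε t) := by gcongr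
          _ = _ := one_mul _
    _ ≤ ∫⁻ t, ENNReal.ofReal (24 * B ^ 5) * ENNReal.ofReal (PP ε t) * QQ ε ρ γ :=
        setLIntegral_le_lintegral _ _
    _ = _ := by
        rw [lintegral_mul_const _ (by fun_prop), lintegral_const_mul _ (by fun_prop), PP_int hε,
          ENNReal.ofReal_mul (show 0 ≤ 24 * B ^ 5 by positivity)]

end core


section core
variable {ε ρ B : ℝ} {ψ X : ℝ → ℝ}

def Hr (ψ X : ℝ → ℝ) (ρ r : ℝ) (F : ℝ → ℝ) (β : ℝ) : ℝ :=
  ∫ α, ψ (α / ρ) * (jr r (α - β) * ww ψ ρ (X α) (α - β)) * F α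

def Ms (ψ X : ℝ → ℝ) (ρ : ℝ) (F : ℝ → ℝ) (β : ℝ) : ℝ :=
  ∫ α, ψ (α / ρ) * mm ψ ρ (X α) (α - β) * F α

lemma Cor.χ_int (h : Cor ε ρ B ψ X) : Integrable (fun α => ψ (α / ρ)) := by
  have c := h.ψd.continuous
  refine Continuous.integrable_of_hasCompactSupport (by fun_prop)
    (HasCompactSupport.intro (K := Icc (-ρ) ρ) isCompact_Icc fun x hx => h.ψz ?_)
  rwa [abs_le, ← mem_Icc]

lemma Cor.Hr_meas (h : Cor ε ρ B ψ X) (r : ℝ) {F : ℝ → ℝ} (hF : Measurable F) :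
    Measurable (Hr ψ X ρ r F) := by
  have m1 := h.Xm
  have m2 := h.ψm
  have m3 := jr_meas r
  have : StronglyMeasurable (fun p : ℝ × ℝ => ψ (p.2 / ρ) *
      (jr r (p.2 - p.1) * ww ψ ρ (X p.2) (p.2 - p.1)) * F p.2) := by
    apply Measurable.stronglyMeasurable
    unfold ww
    fun_prop
  exact (this.integral_prod_right').measurable

lemma Cor.Ms_meas (h : Cor ε ρ B ψ X) {F : ℝ → ℝ} (hF : Measurable F) :
    Measurable (Ms ψ X ρ F) := by
  have m1 := h.Xm
  have m2 := h.ψm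
  have : StronglyMeasurable (fun p : ℝ × ℝ => ψ (p.2 / ρ) *
      mm ψ ρ (X p.2) (p.2 - p.1) * F p.2) := by
    apply Measurable.stronglyMeasurable
    unfold mm
    fun_prop
  exact (this.integral_prod_right').measurable

lemma int_of_PC (hε : 0 < ε) (γ C : ℝ) {F : ℝ → ℝ} (hm : Measurable F)
    (hb : ∀ α, |F α| ≤ C * PC ε ρ (γ - α)) : Integrable F :=
  Integrable.mono' (((PC_int hε ρ).comp_sub_left γ).const_mul C) hm.aestronglyMeasurable
    (Eventually.of_forall hb)

def EE (ψ X : ℝ → ℝ) (ρ r γ β α : ℝ) : ℝ :=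
  jr r (γ - α) * ww ψ ρ (X γ) (γ - α) *
      (ψ (α / ρ) * mm ψ ρ (X α) (α - β) - ψ (γ / ρ) * mm ψ ρ (X γ) (α - β))

lemma Cor.commute (h : Cor ε ρ B ψ X) {r : ℝ} (hr : 0 < r) (γ β : ℝ) :
    (∫ α, ψ (α / ρ) * (jr r (α - β) * ww ψ ρ (X α) (α - β)) * mm ψ ρ (X γ) (γ - α)) -
    (∫ α, ψ (α / ρ) * mm ψ ρ (X α) (α - β) * (jr r (γ - α) * ww ψ ρ (X γ) (γ - α)))
    = (∫ α, GG ψ X ρ r γ β α) - ∫ α, EE ψ X ρ r γ β α := by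
  have hε := h.ε0
  have hB := h.B1
  have m1 := h.Xm
  have m2 := h.ψm
  have m3 := jr_meas r
  have i1 : Integrable (fun α => ψ (α / ρ) * (jr r (α - β) * ww ψ ρ (X α) (α - β)) *
      mm ψ ρ (X γ) (γ - α)) := by
    refine int_of_PC (ρ := ρ) hε γ ((1 * (r⁻¹ * B ^ 2)) * B) (by unfold mm ww; fun_prop) fun α => ?_
    rw [abs_mul, abs_mul, abs_mul, mul_assoc _ B]
    have := h.ψa (α / ρ)
    have := jr_bd hr (α - β)
    have := h.ww_le α (α - β)
    have := h.mm_bd γ (γ - α)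
    gcongr
  have i2 : Integrable (fun α => ψ (γ / ρ) * ((jr r (α - β) * ww ψ ρ (X γ) (α - β)) *
      mm ψ ρ (X γ) (γ - α))) := by
    refine Integrable.const_mul ?_ _
    refine int_of_PC (ρ := ρ) hε γ ((r⁻¹ * B ^ 2) * B) (by unfold mm ww; fun_prop) fun α => ?_
    rw [abs_mul, abs_mul, mul_assoc _ B]
    have := jr_bd hr (α - β)
    have := h.ww_le γ (α - β)
    have := h.mm_bd γ (γ - α)
    gcongr
  have i3 : Integrable (fun α => ψ (α / ρ) * mm ψ ρ (X α) (α - β) *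
      (jr r (γ - α) * ww ψ ρ (X γ) (γ - α))) := by
    refine int_of_PC (ρ := ρ) hε γ ((1 * (B * ε⁻¹)) * (r⁻¹ * (B ^ 2 * ε))) (by unfold mm ww; fun_prop) fun α => ?_
    rw [abs_mul, abs_mul, abs_mul, mul_assoc _ (r⁻¹ * (B ^ 2 * ε)), mul_assoc r⁻¹]
    have := h.ψa (α / ρ)
    have := jr_bd hr (γ - α)
    have := h.ww_bd γ (γ - α)
    have := h.mm_le α (α - β)
    gcongr
  have i4 : Integrable (fun α => ψ (γ / ρ) * (mm ψ ρ (X γ) (α - β) *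
      (jr r (γ - α) * ww ψ ρ (X γ) (γ - α)))) := by
    refine Integrable.const_mul ?_ _
    refine int_of_PC (ρ := ρ) hε γ ((B * ε⁻¹) * (r⁻¹ * (B ^ 2 * ε))) (by unfold mm ww; fun_prop) fun α => ?_
    rw [abs_mul, abs_mul, mul_assoc _ (r⁻¹ * (B ^ 2 * ε)), mul_assoc r⁻¹]
    have := jr_bd hr (γ - α)
    have := h.ww_bd γ (γ - α)
    have := h.mm_le γ (α - β)
    gcongr
  have e1 : (∫ α, GG ψ X ρ r γ β α) = (∫ α, ψ (α / ρ) * (jr r (α - β) * ww ψ ρ (X α) (α - β)) *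
      mm ψ ρ (X γ) (γ - α)) - ψ (γ / ρ) * ∫ α, ((jr r (α - β) * ww ψ ρ (X γ) (α - β)) *
      mm ψ ρ (X γ) (γ - α)) := by
    rw [← integral_const_mul, ← integral_sub i1 i2]
    congr 1; funext α; unfold GG; ring
  have e2 : (∫ α, EE ψ X ρ r γ β α) = (∫ α, ψ (α / ρ) * mm ψ ρ (X α) (α - β) *
      (jr r (γ - α) * ww ψ ρ (X γ) (γ - α))) - ψ (γ / ρ) * ∫ α, (mm ψ ρ (X γ) (α - β) *
      (jr r (γ - α) * ww ψ ρ (X γ) (γ - α))) := by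
    rw [← integral_const_mul, ← integral_sub i3 i4]
    congr 1; funext α; unfold EE; ring
  have e3 : ∫ α, ((jr r (α - β) * ww ψ ρ (X γ) (α - β)) * mm ψ ρ (X γ) (γ - α)) =
      ∫ α, (mm ψ ρ (X γ) (α - β) * (jr r (γ - α) * ww ψ ρ (X γ) (γ - α))) := by
    rw [← integral_sub_left_eq_self _ _ (γ + β)]
    congr 1; funext α
    rw [show γ + β - α - β = γ - α by ring, show γ - (γ + β - α) = α - β by ring]
    ring
  rw [e1, e2, e3]; ring

lemma Cor.trunc_eq (h : Cor ε ρ B ψ X) {r : ℝ} (hr : 0 < r) {φ : ℝ → ℝ} (hφ : Measurable φ)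
    (hb : ∀ γ, |ψ (γ / ρ) * φ γ| ≤ PC ε ρ γ) (β : ℝ) :
    Hr ψ X ρ r (Ms ψ X ρ φ) β - Ms ψ X ρ (Hr ψ X ρ r φ) β =
      ∫ γ, (ψ (γ / ρ) * φ γ) * ((∫ α, GG ψ X ρ r γ β α) - ∫ α, EE ψ X ρ r γ β α) := by
  have hε := h.ε0
  have hB := h.B1
  have m1 := h.Xm
  have m2 := h.ψm
  have m3 := jr_meas r
  have i0 : Integrable (fun p : ℝ × ℝ => |ψ (p.1 / ρ)| * PC ε ρ p.2) (volume.prod volume) :=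
    (h.χ_int.abs).mul_prod (PC_int hε ρ)
  have iA : Integrable (fun p : ℝ × ℝ => ψ (p.1 / ρ) * (jr r (p.1 - β) * ww ψ ρ (X p.1) (p.1 - β))
      * (ψ (p.2 / ρ) * mm ψ ρ (X p.2) (p.2 - p.1) * φ p.2)) (volume.prod volume) := by
    refine Integrable.mono' (i0.const_mul ((r⁻¹ * B ^ 2) * (B * ε⁻¹))) ?_
      (Eventually.of_forall fun p => ?_)
    · apply Measurable.aestronglyMeasurable
      unfold mm ww; fun_prop
    · rw [Real.norm_eq_abs, show ψ (p.1 / ρ) * (jr r (p.1 - β) * ww ψ ρ (X p.1) (p.1 - β))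
        * (ψ (p.2 / ρ) * mm ψ ρ (X p.2) (p.2 - p.1) * φ p.2) =
        ((jr r (p.1 - β) * ww ψ ρ (X p.1) (p.1 - β)) * mm ψ ρ (X p.2) (p.2 - p.1)) *
        (ψ (p.1 / ρ) * (ψ (p.2 / ρ) * φ p.2)) by ring]
      rw [abs_mul, abs_mul, abs_mul, abs_mul (ψ (p.1 / ρ))]
      have := hb p.2
      have := jr_bd hr (p.1 - β)
      have := h.ww_le p.1 (p.1 - β)
      have := h.mm_le p.2 (p.2 - p.1)
      gcongr
  have iB : Integrable (fun p : ℝ × ℝ => ψ (p.1 / ρ) * mm ψ ρ (X p.1) (p.1 - β)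
      * (ψ (p.2 / ρ) * (jr r (p.2 - p.1) * ww ψ ρ (X p.2) (p.2 - p.1)) * φ p.2))
      (volume.prod volume) := by
    refine Integrable.mono' (i0.const_mul ((r⁻¹ * B ^ 2) * (B * ε⁻¹))) ?_
      (Eventually.of_forall fun p => ?_)
    · apply Measurable.aestronglyMeasurable
      unfold mm ww; fun_prop
    · rw [Real.norm_eq_abs, show ψ (p.1 / ρ) * mm ψ ρ (X p.1) (p.1 - β)
        * (ψ (p.2 / ρ) * (jr r (p.2 - p.1) * ww ψ ρ (X p.2) (p.2 - p.1)) * φ p.2) =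
        ((jr r (p.2 - p.1) * ww ψ ρ (X p.2) (p.2 - p.1)) * mm ψ ρ (X p.1) (p.1 - β)) *
        (ψ (p.1 / ρ) * (ψ (p.2 / ρ) * φ p.2)) by ring]
      rw [abs_mul, abs_mul, abs_mul, abs_mul (ψ (p.1 / ρ))]
      have := hb p.2
      have := jr_bd hr (p.2 - p.1)
      have := h.ww_le p.2 (p.2 - p.1)
      have := h.mm_le p.1 (p.1 - β)
      gcongr
  have eA : Hr ψ X ρ r (Ms ψ X ρ φ) β = ∫ γ, ∫ α,
      ψ (α / ρ) * (jr r (α - β) * ww ψ ρ (X α) (α - β))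
      * (ψ (γ / ρ) * mm ψ ρ (X γ) (γ - α) * φ γ) := by
    rw [← integral_integral_swap iA]
    unfold Hr Ms
    congr 1; funext α
    rw [integral_const_mul]
  have eB : Ms ψ X ρ (Hr ψ X ρ r φ) β = ∫ γ, ∫ α,
      ψ (α / ρ) * mm ψ ρ (X α) (α - β)
      * (ψ (γ / ρ) * (jr r (γ - α) * ww ψ ρ (X γ) (γ - α)) * φ γ) := by
    rw [← integral_integral_swap iB]
    unfold Hr Ms
    congr 1; funext α
    rw [integral_const_mul]
  rw [eA, eB, ← integral_sub iA.integral_prod_right iB.integral_prod_right]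
  congr 1; funext γ
  rw [← h.commute hr γ β, mul_sub, ← integral_const_mul, ← integral_const_mul]
  congr 2 <;> (funext α; ring)

lemma Cor.GG_meas (h : Cor ε ρ B ψ X) (r : ℝ) :
    Measurable (fun p : ℝ × ℝ => ∫ α, GG ψ X ρ r p.1 p.2 α) := by
  have m1 := h.Xm
  have m2 := h.ψm
  have m3 := jr_meas r
  have : StronglyMeasurable (fun q : (ℝ × ℝ) × ℝ => GG ψ X ρ r q.1.1 q.1.2 q.2) := by
    apply Measurable.stronglyMeasurable
    unfold GG mm ww
    fun_prop
  exact (this.integral_prod_right').measurable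

lemma Cor.EE_meas (h : Cor ε ρ B ψ X) (r : ℝ) :
    Measurable (fun p : ℝ × ℝ => ∫ α, EE ψ X ρ r p.1 p.2 α) := by
  have m1 := h.Xm
  have m2 := h.ψm
  have m3 := jr_meas r
  have : StronglyMeasurable (fun q : (ℝ × ℝ) × ℝ => EE ψ X ρ r q.1.1 q.1.2 q.2) := by
    apply Measurable.stronglyMeasurable
    unfold EE mm ww
    fun_prop
  exact (this.integral_prod_right').measurable

lemma Cor.trunc_bd (h : Cor ε ρ B ψ X) {r : ℝ} (hr : 0 < r) {φ : ℝ → ℝ} (hφ : Measurable φ)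
    (hb : ∀ γ, |ψ (γ / ρ) * φ γ| ≤ PC ε ρ γ) :
    ∫⁻ β, ‖Hr ψ X ρ r (Ms ψ X ρ φ) β - Ms ψ X ρ (Hr ψ X ρ r φ) β‖ₑ ≤
      ENNReal.ofReal (26 * B ^ 5 * π * (6 * π * ε * Real.log (1 / ε))) := by
  have hε := h.ε0
  have hB := h.B1
  have m1 := h.Xm
  have m2 := h.ψm
  have mG := h.GG_meas r
  have mE := h.EE_meas r
  calc _ ≤ ∫⁻ β, ∫⁻ γ, ENNReal.ofReal (PC ε ρ γ) *
        (‖∫ α, GG ψ X ρ r γ β α‖ₑ + ‖∫ α, EE ψ X ρ r γ β α‖ₑ) := by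
        refine lintegral_mono fun β => ?_
        rw [h.trunc_eq hr hφ hb]
        refine (enorm_integral_le_lintegral_enorm _).trans (lintegral_mono fun γ => ?_)
        rw [enorm_mul]
        refine mul_le_mul' ?_ enorm_sub_le
        rw [Real.enorm_eq_ofReal_abs]
        exact ENNReal.ofReal_le_ofReal (hb γ)
    _ = ∫⁻ γ, ∫⁻ β, ENNReal.ofReal (PC ε ρ γ) *
        (‖∫ α, GG ψ X ρ r γ β α‖ₑ + ‖∫ α, EE ψ X ρ r γ β α‖ₑ) := by
        refine lintegral_lintegral_swap ?_
        apply Measurable.aemeasurable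
        have mC := PC_meas ε ρ
        have a1 : Measurable (fun p : ℝ × ℝ => ENNReal.ofReal (PC ε ρ p.2)) := by fun_prop
        exact a1.mul ((mG.comp measurable_swap).enorm.add (mE.comp measurable_swap).enorm)
    _ ≤ ∫⁻ γ, ENNReal.ofReal (26 * B ^ 5 * π) * (ENNReal.ofReal (PC ε ρ γ) * QQ ε ρ γ) := by
        refine lintegral_mono fun γ => ?_
        have g1 : Measurable (fun β => ‖∫ α, GG ψ X ρ r γ β α‖ₑ) :=
          (mG.comp measurable_prodMk_left).enorm
        have g2 : Measurable (fun β => ‖∫ α, EE ψ X ρ r γ β α‖ₑ) :=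
          (mE.comp measurable_prodMk_left).enorm
        rw [lintegral_const_mul' _ _ ENNReal.ofReal_ne_top, lintegral_add_left g1, mul_left_comm]
        refine mul_le_mul_right ?_ _
        refine (add_le_add (h.E1 hr γ) (h.E2 r γ)).trans ?_
        rw [← add_mul, ← ENNReal.ofReal_add (by positivity) (by positivity)]
        refine mul_le_mul_left (ENNReal.ofReal_le_ofReal ?_) _
        have : B ^ 4 ≤ B ^ 5 := pow_le_pow_right₀ hB (by norm_num)
        nlinarith [Real.pi_pos]
    _ ≤ _ := by
        have := QQ_total hε h.ρ0 h.small
        rw [lintegral_const_mul' _ _ ENNReal.ofReal_ne_top,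
          ENNReal.ofReal_mul (show 0 ≤ 26 * B ^ 5 * π by positivity)]
        gcongr

end core


section core
variable {ε ρ B : ℝ} {ψ X : ℝ → ℝ}

def LB (F : ℝ → ℝ) : Prop :=
  (∃ C, 0 ≤ C ∧ ∀ x, |F x| ≤ C) ∧ (∃ L, 0 ≤ L ∧ ∀ x y, |F x - F y| ≤ L * |x - y|)

lemma LB.meas {F : ℝ → ℝ} (h : LB F) : Measurable F := by
  obtain ⟨-, L, h0, hL⟩ := h
  have : LipschitzWith ⟨L, h0⟩ F := LipschitzWith.of_dist_le_mul fun x y => by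
    rw [Real.dist_eq, Real.dist_eq]; exact hL x y
  exact this.continuous.measurable

def SS (ψ X : ℝ → ℝ) (ρ : ℝ) (F : ℝ → ℝ) (β : ℝ) : ℝ :=
  limUnder (nhdsWithin (0:ℝ) (Ioi 0)) (fun r => Hr ψ X ρ r F β)

lemma lip_of_deriv {F F' : ℝ → ℝ} {K : ℝ} (hF : ∀ a, HasDerivAt F (F' a) a)
    (hb : ∀ a, |F' a| ≤ K) (a b : ℝ) : |F a - F b| ≤ K * |a - b| := by
  have := convex_univ.norm_image_sub_le_of_norm_hasDerivWithin_le
    (fun x _ => (hF x).hasDerivWithinAt) (fun x _ => hb x) (mem_univ b) (mem_univ a)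
  simpa [Real.norm_eq_abs] using this

def vv (ψ X : ℝ → ℝ) (ρ : ℝ) (F : ℝ → ℝ) (t a : ℝ) : ℝ := ψ (a / ρ) * ww ψ ρ (X a) t * F a

lemma Cor.v_lip (h : Cor ε ρ B ψ X) {F : ℝ → ℝ} (hF : LB F) :
    ∃ L, 0 ≤ L ∧ ∀ t a b, |vv ψ X ρ F t a - vv ψ X ρ F t b| ≤ L * |a - b| := by
  obtain ⟨⟨C, hC0, hC⟩, L, hL0, hL⟩ := hF
  have hε := h.ε0
  have hB := h.B1
  have hρ := h.ρ0
  refine ⟨B ^ 2 * L + (3 * B ^ 3 * ρ * ε⁻¹) * C, by positivity, fun t a b => ?_⟩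
  have d := lip_of_deriv (K := 3 * B ^ 3 * ρ * ε⁻¹) (h.dw_has t) (fun a => ?_) a b
  · have e : vv ψ X ρ F t a - vv ψ X ρ F t b = (ψ (a / ρ) * ww ψ ρ (X a) t) * (F a - F b) +
      (ψ (a / ρ) * ww ψ ρ (X a) t - ψ (b / ρ) * ww ψ ρ (X b) t) * F b := by unfold vv; ring
    rw [e]
    refine (abs_add_le _ _).trans ?_
    rw [abs_mul, abs_mul _ (F b), abs_mul (ψ _)]
    calc _ ≤ (1 * B ^ 2) * (L * |a - b|) + (3 * B ^ 3 * ρ * ε⁻¹ * |a - b|) * C := by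
          have := h.ψa (a / ρ)
          have := h.ww_le a t
          have := hL a b
          have := hC b
          gcongr
      _ = _ := by ring
  · by_cases ha : |a| ≤ ρ
    · refine (h.dw_bd t a).trans ?_
      have : PP ε t ≤ ε⁻¹ := by
        have := PC_le hε |t| t
        unfold PC at this; simpa using this
      have hP := (PP_pos hε t).le
      gcongr
    · unfold dw
      rw [h.ψz ha, h.dψz ha]; simp; positivity

lemma Cor.Hr_half (h : Cor ε ρ B ψ X) {F : ℝ → ℝ} (hF : LB F) {r : ℝ} (hr : 0 < r) (β : ℝ) :
    Hr ψ X ρ r F β = ∫ t in Ioi (0:ℝ), jr r t * (vv ψ X ρ F t (β + t) - vv ψ X ρ F t (β - t)) := by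
  have m1 := h.Xm
  have m2 := h.ψm
  have m3 := jr_meas r
  have m4 := hF.meas
  obtain ⟨⟨C, hC0, hC⟩, -⟩ := hF
  have i : Integrable (fun α => ψ (α / ρ) * (jr r (α - β) * ww ψ ρ (X α) (α - β)) * F α) := by
    refine Integrable.mono' (h.χ_int.abs.mul_const ((r⁻¹ * B ^ 2) * C)) ?_
      (Eventually.of_forall fun α => ?_)
    · apply Measurable.aestronglyMeasurable
      unfold ww; fun_prop
    · rw [Real.norm_eq_abs, abs_mul, abs_mul, abs_mul, mul_assoc]
      have := jr_bd hr (α - β)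
      have := h.ww_le α (α - β)
      have := hC α
      gcongr
  unfold Hr
  rw [← integral_add_left_eq_self _ β, half_int _ (i.comp_add_left β)]
  congr 1; funext t
  unfold vv
  rw [add_sub_cancel_left, add_sub_cancel_left, jr_neg, h.ww_neg, ← sub_eq_add_neg]
  ring

lemma Cor.pv (h : Cor ε ρ B ψ X) {F : ℝ → ℝ} (hF : LB F) :
    ∃ K, 0 ≤ K ∧ (∀ r, 0 < r → ∀ β, |Hr ψ X ρ r F β| ≤ K) ∧
      ∀ β, Tendsto (fun r => Hr ψ X ρ r F β) (nhdsWithin 0 (Ioi 0)) (nhds (SS ψ X ρ F β)) := by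
  obtain ⟨L, hL0, hL⟩ := h.v_lip hF
  have hρ := h.ρ0
  have m1 := h.Xm
  have m2 := h.ψm
  have m4 := hF.meas
  have ib : Integrable (fun t => (Ioc 0 ρ).indicator (fun _ => 2 * L) t)
      (volume.restrict (Ioi (0:ℝ))) := by
    apply Integrable.restrict
    rw [integrable_indicator_iff measurableSet_Ioc]
    exact integrableOn_const (by simp)
  have key : ∀ r β : ℝ, ∀ t ∈ Ioi (0:ℝ),
      ‖jr r t * (vv ψ X ρ F t (β + t) - vv ψ X ρ F t (β - t))‖ ≤
        (Ioc 0 ρ).indicator (fun _ => 2 * L) t := by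
    intro r β t ht
    have ht : 0 < t := ht
    by_cases hc : t ≤ ρ
    · rw [indicator_of_mem (show t ∈ Ioc 0 ρ from ⟨ht, hc⟩), Real.norm_eq_abs, abs_mul]
      have j := jr_mul r t
      have l := hL t (β + t) (β - t)
      rw [show β + t - (β - t) = 2 * t by ring, abs_mul, abs_two] at l
      calc _ ≤ |jr r t| * (L * (2 * |t|)) := by gcongr
        _ = (|t| * |jr r t|) * (2 * L) := by ring
        _ ≤ 1 * (2 * L) := by gcongr
        _ = _ := one_mul _
    · have : ψ (t / ρ) = 0 := h.ψz (by rwa [abs_of_pos ht])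
      simp [vv, ww, this, hc]
  refine ⟨∫ t in Ioi (0:ℝ), (Ioc 0 ρ).indicator (fun _ => 2 * L) t, ?_, fun r hr β => ?_,
    fun β => ?_⟩
  · refine integral_nonneg fun t => ?_
    unfold indicator; dsimp only; split_ifs <;> simp [hL0]
  · rw [h.Hr_half hF hr, ← Real.norm_eq_abs]
    refine norm_integral_le_of_norm_le ib ?_
    filter_upwards [ae_restrict_mem measurableSet_Ioi] with t ht using key r β t ht
  · have T : Tendsto (fun r => Hr ψ X ρ r F β) (nhdsWithin 0 (Ioi 0))
        (nhds (∫ t in Ioi (0:ℝ), t⁻¹ * (vv ψ X ρ F t (β + t) - vv ψ X ρ F t (β - t)))) := by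
      have T1 : Tendsto (fun r => ∫ t in Ioi (0:ℝ), jr r t *
          (vv ψ X ρ F t (β + t) - vv ψ X ρ F t (β - t))) (nhdsWithin 0 (Ioi 0))
          (nhds (∫ t in Ioi (0:ℝ), t⁻¹ * (vv ψ X ρ F t (β + t) - vv ψ X ρ F t (β - t)))) := by
        refine tendsto_integral_filter_of_dominated_convergence _ (Eventually.of_forall fun r => ?_)
          (Eventually.of_forall fun r => ?_) ib ?_
        · have m3 := jr_meas r
          apply Measurable.aestronglyMeasurable
          unfold vv ww; fun_prop
        · filter_upwards [ae_restrict_mem measurableSet_Ioi] with t ht using key r β t ht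
        · filter_upwards [ae_restrict_mem measurableSet_Ioi] with t ht
          have ht : 0 < t := ht
          refine tendsto_const_nhds.congr' ?_
          filter_upwards [mem_nhdsWithin_of_mem_nhds (Iio_mem_nhds ht)] with r hr
          have : r < |t| := by rw [abs_of_pos ht]; exact hr
          simp [jr, this]
      refine T1.congr' ?_
      filter_upwards [self_mem_nhdsWithin] with r hr
      exact (h.Hr_half hF hr β).symm
    unfold SS
    rw [T.limUnder_eq]
    exact T

lemma Cor.ms_le (h : Cor ε ρ B ψ X) (γ s : ℝ) :
    |ms ψ ρ (X γ) s| ≤ ε⁻¹ * ε⁻¹ + ε⁻¹ * (B / ρ) := by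
  have hε := h.ε0
  have hp := h.Xp γ
  have hρ := h.ρ0
  have hx : (X γ)⁻¹ ≤ ε⁻¹ := inv_anti₀ hε (h.Xl γ)
  unfold ms
  refine (abs_add_le _ _).trans (add_le_add ?_ ?_)
  · rw [abs_mul]
    have a1 : |-(2 * X γ * s) / (s ^ 2 + X γ ^ 2) ^ 2| ≤ (X γ)⁻¹ * (X γ)⁻¹ := by
      rw [abs_div, abs_neg, abs_of_pos (by positivity : 0 < (s ^ 2 + X γ ^ 2) ^ 2),
        div_le_iff₀ (by positivity), ← mul_inv, ← div_eq_inv_mul, le_div_iff₀ (by positivity)]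
      have : |2 * X γ * s| ≤ s ^ 2 + X γ ^ 2 := by
        rw [abs_le]; constructor <;> nlinarith [sq_nonneg (s - X γ), sq_nonneg (s + X γ)]
      have h2 : X γ * X γ ≤ s ^ 2 + X γ ^ 2 := by nlinarith
      calc _ ≤ (s ^ 2 + X γ ^ 2) * (s ^ 2 + X γ ^ 2) := by gcongr
        _ = _ := by ring
    calc _ ≤ ((X γ)⁻¹ * (X γ)⁻¹) * 1 := by
          have := h.ψa (s / ρ)
          gcongr
      _ ≤ _ := by rw [mul_one]; gcongr
  · rw [abs_mul, abs_div (deriv ψ _), abs_of_pos hρ]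
    have a1 : |X γ / (s ^ 2 + X γ ^ 2)| ≤ (X γ)⁻¹ := by
      rw [abs_of_nonneg (by positivity), div_le_iff₀ (by positivity), ← div_eq_inv_mul,
        le_div_iff₀ hp]
      nlinarith
    have := h.ψB (s / ρ)
    have := a1.trans hx
    gcongr

lemma Cor.Ms_LB (h : Cor ε ρ B ψ X) {φ : ℝ → ℝ} (hφ : Measurable φ)
    (hb : ∀ γ, |ψ (γ / ρ) * φ γ| ≤ PC ε ρ γ) : LB (Ms ψ X ρ φ) := by
  have hε := h.ε0
  have hB := h.B1
  have hρ := h.ρ0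
  have m1 := h.Xm
  have m2 := h.ψm
  have iP := PC_int hε ρ
  have hI : 0 ≤ ∫ γ, PC ε ρ γ := integral_nonneg fun γ => PC_nonneg hε ρ γ
  have key : ∀ γ α, |ψ (γ / ρ) * mm ψ ρ (X γ) (γ - α) * φ γ| ≤ (B * ε⁻¹) * PC ε ρ γ := by
    intro γ α
    rw [mul_right_comm, mul_comm, abs_mul]
    exact mul_le_mul (h.mm_le _ _) (hb γ) (abs_nonneg _) (by positivity)
  have int : ∀ α, Integrable (fun γ => ψ (γ / ρ) * mm ψ ρ (X γ) (γ - α) * φ γ) := by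
    intro α
    refine Integrable.mono' (iP.const_mul (B * ε⁻¹)) ?_ (Eventually.of_forall fun γ => key γ α)
    apply Measurable.aestronglyMeasurable
    unfold mm; fun_prop
  refine ⟨⟨(B * ε⁻¹) * ∫ γ, PC ε ρ γ, by positivity, fun α => ?_⟩,
    (ε⁻¹ * ε⁻¹ + ε⁻¹ * (B / ρ)) * ∫ γ, PC ε ρ γ, by positivity, fun a b => ?_⟩
  · rw [← integral_const_mul, ← Real.norm_eq_abs]
    exact norm_integral_le_of_norm_le (iP.const_mul _) (Eventually.of_forall fun γ => key γ α)
  · unfold Ms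
    rw [← integral_sub (int a) (int b), mul_right_comm, ← integral_const_mul, ← Real.norm_eq_abs]
    refine norm_integral_le_of_norm_le (iP.const_mul _) (Eventually.of_forall fun γ => ?_)
    rw [Real.norm_eq_abs, show ψ (γ / ρ) * mm ψ ρ (X γ) (γ - a) * φ γ -
      ψ (γ / ρ) * mm ψ ρ (X γ) (γ - b) * φ γ =
      (mm ψ ρ (X γ) (γ - a) - mm ψ ρ (X γ) (γ - b)) * (ψ (γ / ρ) * φ γ) by ring, abs_mul]
    refine mul_le_mul ?_ (hb γ) (abs_nonneg _) (by positivity)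
    refine (lip_of_deriv (h.ms_has γ) (h.ms_le γ) _ _).trans (le_of_eq ?_)
    rw [show γ - a - (γ - b) = b - a by ring, abs_sub_comm]

lemma Cor.final (h : Cor ε ρ B ψ X) {φ : ℝ → ℝ} (hφ : LB φ)
    (hb : ∀ γ, |ψ (γ / ρ) * φ γ| ≤ PC ε ρ γ) :
    ∫⁻ β, ‖SS ψ X ρ (Ms ψ X ρ φ) β - Ms ψ X ρ (SS ψ X ρ φ) β‖ₑ ≤
      ENNReal.ofReal (26 * B ^ 5 * π * (6 * π * ε * Real.log (1 / ε))) := by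
  have hB := h.B1
  have m1 := h.Xm
  have m2 := h.ψm
  have hε := h.ε0
  have hm := hφ.meas
  obtain ⟨-, -, -, T1⟩ := h.pv (h.Ms_LB hm hb)
  obtain ⟨K, hK0, hK, T2⟩ := h.pv hφ
  set r : ℕ → ℝ := fun n => 1 / ((n : ℝ) + 1) with hr
  have r0 : ∀ n, 0 < r n := fun n => by rw [hr]; positivity
  have Tr : Tendsto r atTop (nhdsWithin 0 (Ioi 0)) :=
    tendsto_nhdsWithin_iff.2 ⟨tendsto_one_div_add_atTop_nhds_zero_nat, Eventually.of_forall r0⟩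
  have T3 : ∀ β, Tendsto (fun n => Ms ψ X ρ (Hr ψ X ρ (r n) φ) β) atTop
      (nhds (Ms ψ X ρ (SS ψ X ρ φ) β)) := by
    intro β
    unfold Ms
    refine tendsto_integral_of_dominated_convergence (fun α => |ψ (α / ρ)| * (B * ε⁻¹ * K))
      (fun n => ?_) (h.χ_int.abs.mul_const _) (fun n => Eventually.of_forall fun α => ?_)
      (Eventually.of_forall fun α => ((T2 α).comp Tr).const_mul _)
    · have := h.Hr_meas (r n) hm
      apply Measurable.aestronglyMeasurable
      unfold mm; fun_prop
    · rw [Real.norm_eq_abs, abs_mul, abs_mul, mul_assoc]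
      have := hK (r n) (r0 n) α
      have := h.mm_le α (α - β)
      gcongr
  have T4 : ∀ β, Tendsto (fun n => ‖Hr ψ X ρ (r n) (Ms ψ X ρ φ) β -
      Ms ψ X ρ (Hr ψ X ρ (r n) φ) β‖ₑ) atTop
      (nhds ‖SS ψ X ρ (Ms ψ X ρ φ) β - Ms ψ X ρ (SS ψ X ρ φ) β‖ₑ) := fun β =>
    (((T1 β).comp Tr).sub (T3 β)).enorm
  calc _ = ∫⁻ β, liminf (fun n => ‖Hr ψ X ρ (r n) (Ms ψ X ρ φ) β -
      Ms ψ X ρ (Hr ψ X ρ (r n) φ) β‖ₑ) atTop := lintegral_congr fun β => (T4 β).liminf_eq.symm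
    _ ≤ liminf (fun n => ∫⁻ β, ‖Hr ψ X ρ (r n) (Ms ψ X ρ φ) β -
      Ms ψ X ρ (Hr ψ X ρ (r n) φ) β‖ₑ) atTop := lintegral_liminf_le fun n =>
        ((h.Hr_meas _ (h.Ms_meas hm)).sub (h.Ms_meas (h.Hr_meas _ hm))).enorm
    _ ≤ liminf (fun _ : ℕ => ENNReal.ofReal (26 * B ^ 5 * π * (6 * π * ε * Real.log (1 / ε))))
        atTop := liminf_le_liminf (Eventually.of_forall fun n => h.trunc_bd (r0 n) hm hb)
    _ = _ := liminf_const _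

lemma Cor.SS_smul (h : Cor ε ρ B ψ X) {F : ℝ → ℝ} (hF : LB F) (c β : ℝ) :
    SS ψ X ρ (fun x => c * F x) β = c * SS ψ X ρ F β := by
  obtain ⟨-, -, -, T⟩ := h.pv hF
  have e : ∀ r, Hr ψ X ρ r (fun x => c * F x) β = c * Hr ψ X ρ r F β := by
    intro r
    unfold Hr
    rw [← integral_const_mul]
    congr 1; funext α; ring
  conv_lhs => unfold SS
  simp_rw [e]
  exact ((T β).const_mul c).limUnder_eq

end core


lemma cutoff_bound {ψ : ℝ → ℝ} (hψ : IsCutoff ψ) :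
    ∃ B₀, 0 ≤ B₀ ∧ (∀ x, |deriv ψ x| ≤ B₀) ∧ (∀ x, |deriv ψ x| ≤ 2 * B₀ * |x|) := by
  obtain ⟨hs, -, -, h0, h1⟩ := hψ
  have hc : HasCompactSupport ψ := HasCompactSupport.intro (K := Icc (-1) 1) isCompact_Icc
    fun x hx => h0 x (by rw [mem_Icc, ← abs_le] at hx; exact not_le.mp hx)
  have hd : Continuous (deriv ψ) := hs.continuous_deriv (by simp)
  obtain ⟨C, hC⟩ := hc.deriv.exists_bound_of_continuous hd
  have hC0 : 0 ≤ C := (norm_nonneg _).trans (hC 0)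
  refine ⟨C, hC0, hC, fun x => ?_⟩
  by_cases hx : |x| < 1 / 2
  · have : ψ =ᶠ[nhds x] fun _ => 1 := by
      have ho : IsOpen {x : ℝ | |x| < 1 / 2} := isOpen_lt continuous_abs continuous_const
      filter_upwards [ho.mem_nhds hx] with y hy using h1 y (le_of_lt hy)
    rw [this.deriv_eq]; simp; positivity
  · refine (hC x).trans ?_
    have := not_lt.mp hx
    nlinarith

lemma u_facts {δ A ε : ℝ} (hδ : 0 < δ) {f g : ℝ → ℝ} (h : GoodFG δ A ε f g) :
    (∀ x, |x| < δ → ContDiffAt ℝ 1 (fun a => f a + g a) x) ∧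
    (∀ x, |x| < δ → |deriv (fun a => f a + g a) x| ≤ A * |x|) ∧
    (∀ x, |x| < δ → |f x + g x| ≤ A * x ^ 2) := by
  obtain ⟨cf, cg, f0, g0, df0, dg0, hA, -⟩ := h
  have ho : IsOpen (Ioo (-δ) δ) := isOpen_Ioo
  have h0 : (0:ℝ) ∈ Ioo (-δ) δ := ⟨by linarith, hδ⟩
  have cfa : ∀ x ∈ Ioo (-δ) δ, ContDiffAt ℝ 5 f x := fun x hx => cf.contDiffAt (ho.mem_nhds hx)
  have cga : ∀ x ∈ Ioo (-δ) δ, ContDiffAt ℝ 5 g x := fun x hx => cg.contDiffAt (ho.mem_nhds hx)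
  have dfa : ∀ x ∈ Ioo (-δ) δ, DifferentiableAt ℝ f x := fun x hx =>
    (cfa x hx).differentiableAt (by norm_num)
  have dga : ∀ x ∈ Ioo (-δ) δ, DifferentiableAt ℝ g x := fun x hx =>
    (cga x hx).differentiableAt (by norm_num)
  have ddf : ∀ x ∈ Ioo (-δ) δ, DifferentiableAt ℝ (deriv f) x := fun x hx =>
    ((cf.deriv_of_isOpen (m := 4) ho (by norm_num)).contDiffAt (ho.mem_nhds hx)).differentiableAt
      (by norm_num)
  have ddg : ∀ x ∈ Ioo (-δ) δ, DifferentiableAt ℝ (deriv g) x := fun x hx =>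
    ((cg.deriv_of_isOpen (m := 4) ho (by norm_num)).contDiffAt (ho.mem_nhds hx)).differentiableAt
      (by norm_num)
  rw [derivWithin_of_isOpen ho h0] at df0 dg0
  have hA2 : ∀ x ∈ Ioo (-δ) δ, |deriv (deriv f) x| + |deriv (deriv g) x| ≤ A := by
    intro x hx
    have := hA x hx 2 (by norm_num)
    rw [iteratedDerivWithin_of_isOpen ho hx, iteratedDerivWithin_of_isOpen ho hx] at this
    simpa [iteratedDeriv_succ, iteratedDeriv_one] using this
  have hm : ∀ x, |x| < δ → x ∈ Ioo (-δ) δ := fun x hx => abs_lt.mp hx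
  have sub : ∀ x, |x| < δ → uIcc 0 x ⊆ Ioo (-δ) δ := fun x hx =>
    (ordConnected_Ioo (a := -δ) (b := δ)).uIcc_subset h0 (hm x hx)
  have hd : ∀ x, |x| < δ → deriv (fun a => f a + g a) x = deriv f x + deriv g x := fun x hx =>
    ((dfa x (hm x hx)).hasDerivAt.fun_add (dga x (hm x hx)).hasDerivAt).deriv
  have D1 : ∀ x, |x| < δ → |deriv (fun a => f a + g a) x| ≤ A * |x| := by
    intro x hx
    rw [hd x hx]
    have := (convex_uIcc 0 x).norm_image_sub_le_of_norm_hasDerivWithin_le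
      (f := fun a => deriv f a + deriv g a) (f' := fun a => deriv (deriv f) a + deriv (deriv g) a)
      (C := A) (fun y hy => ((ddf y (sub x hx hy)).hasDerivAt.fun_add
        (ddg y (sub x hx hy)).hasDerivAt).hasDerivWithinAt)
      (fun y hy => (norm_add_le _ _).trans (hA2 y (sub x hx hy))) left_mem_uIcc right_mem_uIcc
    simpa [df0, dg0] using this
  refine ⟨fun x hx => ((cfa x (hm x hx)).add (cga x (hm x hx))).of_le (by norm_num), D1,
    fun x hx => ?_⟩
  have hA0 : 0 ≤ A := (by positivity : (0:ℝ) ≤ _).trans (hA2 0 h0)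
  have := (convex_uIcc 0 x).norm_image_sub_le_of_norm_hasDerivWithin_le
      (f := fun a => f a + g a) (f' := fun a => deriv f a + deriv g a)
      (C := A * |x|) (fun y hy => ((dfa y (sub x hx hy)).hasDerivAt.fun_add
        (dga y (sub x hx hy)).hasDerivAt).hasDerivWithinAt)
      (fun y hy => ?_) left_mem_uIcc right_mem_uIcc
  · rw [f0, g0] at this
    simp only [add_zero, sub_zero, Real.norm_eq_abs] at this
    rw [← sq_abs x]
    linarith
  · have hy' := abs_sub_left_of_mem_uIcc hy
    rw [sub_zero, sub_zero] at hy'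
    rw [← hd y (hy'.trans_lt hx)]
    refine (D1 y (hy'.trans_lt hx)).trans ?_
    gcongr

def Xh (ψ : ℝ → ℝ) (ε ρ : ℝ) (f g : ℝ → ℝ) (α : ℝ) : ℝ :=
  2 * ε + ψ (α / (2 * ρ)) * (f α + g α)

lemma mk_Cor {δ A ε : ℝ} (hδ : δ ∈ Ioc (0:ℝ) (1/100)) (hA : 1 ≤ A) {ψ : ℝ → ℝ} (hψ : IsCutoff ψ)
    {B₀ : ℝ} (hB₀ : 0 ≤ B₀) (hb1 : ∀ x, |deriv ψ x| ≤ B₀) (hb2 : ∀ x, |deriv ψ x| ≤ 2 * B₀ * |x|)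
    (hε : ε ∈ Ioc (0:ℝ) (δ ^ 2 / 100)) {f g : ℝ → ℝ} (h : GoodFG δ A ε f g) :
    Cor ε (√ε / 2 ^ 6) (10000 * (B₀ + 1) * A) ψ (Xh ψ ε (√ε / 2 ^ 6) f g) := by
  obtain ⟨hδ0, hδ1⟩ := hδ
  obtain ⟨hε0, hε1⟩ := hε
  obtain ⟨c1, d1, u1⟩ := u_facts hδ0 h
  obtain ⟨-, -, -, -, -, -, -, hlow⟩ := h
  obtain ⟨hs, he, hI, h0, h1⟩ := hψ
  have hsq : √ε ^ 2 = ε := Real.sq_sqrt hε0.le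
  have hsp : 0 < √ε := Real.sqrt_pos.mpr hε0
  have hsd : √ε ≤ δ / 10 := by
    rw [Real.sqrt_le_left (by positivity)]; linarith [hε1, show (δ / 10) ^ 2 = δ ^ 2 / 100 by ring]
  set ρ := √ε / 2 ^ 6 with hρ
  have hρ0 : 0 < ρ := by positivity
  have hρ2 : ρ ^ 2 = ε / 4096 := by rw [hρ, div_pow, hsq]; norm_num
  have hρδ : 2 * ρ < δ := by rw [hρ]; norm_num; linarith
  have hρs : 2 * ρ < 4 * √ε := by rw [hρ]; norm_num; linarith
  have hz : ∀ x, 2 * ρ < |x| → 1 < |x / (2 * ρ)| := fun x hx => by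
    rw [abs_div, abs_of_pos (by positivity : 0 < 2 * ρ), one_lt_div (by positivity)]; exact hx
  have hψd : Differentiable ℝ ψ := hs.differentiable (by simp)
  -- locally constant outside
  have hout : ∀ x, 2 * ρ < |x| → Xh ψ ε ρ f g =ᶠ[nhds x] fun _ => 2 * ε := by
    intro x hx
    have ho : IsOpen {x : ℝ | 2 * ρ < |x|} := isOpen_lt continuous_const continuous_abs
    filter_upwards [ho.mem_nhds hx] with y hy
    unfold Xh
    rw [h0 _ (hz y hy)]; ring
  have hC1 : ContDiff ℝ 1 (Xh ψ ε ρ f g) := by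
    rw [contDiff_iff_contDiffAt]
    intro x
    by_cases hx : |x| < δ
    · unfold Xh
      have : ContDiff ℝ 1 (fun a => ψ (a / (2 * ρ))) :=
        (hs.of_le (by simp)).comp (contDiff_id.div_const _)
      exact contDiffAt_const.add (this.contDiffAt.mul (c1 x hx))
    · exact contDiffAt_const.congr_of_eventuallyEq (hout x (by linarith [not_lt.mp hx]))
  have hu : ∀ x, |x| ≤ 2 * ρ → -ε ≤ f x + g x := fun x hx => by
    have : x ∈ Ioo (-(4 * √ε)) (4 * √ε) := abs_lt.mp (hx.trans_lt hρs)
    exact hlow x this x this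
  have hBig : 1 ≤ (B₀ + 1) * A := by nlinarith
  refine ⟨hε0, hρ0, by linarith, ?_, hψd, hs.continuous_deriv (by simp), he, fun x => (hI x).1,
    fun x => (hI x).2, h0, fun x => (hb1 x).trans (by nlinarith), fun x => ?_,
    hC1.differentiable (by norm_num), hC1.continuous_deriv (by norm_num), fun x => ?_, fun x => ?_,
    fun x => ?_⟩
  · have hd1 : δ ^ 2 ≤ 1 := by nlinarith
    have hε2 : ε ≤ 1 / 100 := by linarith
    rw [hρ2]; nlinarith
  · rw [abs_div, abs_of_pos hρ0, div_le_iff₀ hρ0]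
    refine (hb2 _).trans ?_
    rw [abs_div, abs_of_pos hρ0, ← mul_div_assoc, div_le_iff₀ hρ0, mul_assoc _ ρ ρ, ← pow_two, hρ2]
    have : 10000 * (B₀ + 1) * A * |x| / ε * (ε / 4096) = 10000 / 4096 * ((B₀ + 1) * A * |x|) := by
      field_simp
    rw [this]
    have : 0 ≤ |x| := abs_nonneg x
    have : B₀ * |x| ≤ (B₀ + 1) * A * |x| := by gcongr; nlinarith
    nlinarith
  · by_cases hx : |x| ≤ 2 * ρ
    · unfold Xh
      have := hu x hx
      have := hI (x / (2 * ρ))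
      nlinarith [this.1, this.2]
    · rw [(hout x (not_le.mp hx)).eq_of_nhds]; linarith
  · have hb : 2 * ε + A * ε ≤ 10000 * (B₀ + 1) * A * ε := by
      have : (2 + A) ≤ 10000 * (B₀ + 1) * A := by nlinarith
      nlinarith
    refine le_trans ?_ hb
    by_cases hx : |x| ≤ 2 * ρ
    · unfold Xh
      have hxx := (abs_le.mp (u1 x (hx.trans_lt hρδ))).2
      have hI := hI (x / (2 * ρ))
      have hx2 : x ^ 2 ≤ 4 * ρ ^ 2 := by
        rw [← sq_abs]; nlinarith [abs_nonneg x]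
      have : A * x ^ 2 ≤ A * ε := by gcongr; linarith
      have : ψ (x / (2 * ρ)) * (f x + g x) ≤ 1 * (A * ε) := by
        have : f x + g x ≤ A * ε := by linarith
        refine (mul_le_mul_of_nonneg_left this hI.1).trans ?_
        exact mul_le_mul_of_nonneg_right hI.2 (by positivity)
      linarith
    · rw [(hout x (not_le.mp hx)).eq_of_nhds]; nlinarith
  · by_cases hx : |x| ≤ 2 * ρ
    · have hxδ := hx.trans_lt hρδ
      have e1 : HasDerivAt (fun a => ψ (a / (2 * ρ))) (deriv ψ (x / (2 * ρ)) / (2 * ρ)) x := by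
        have := (hψd (x / (2 * ρ))).hasDerivAt.comp x ((hasDerivAt_id x).div_const (2 * ρ))
        simpa [Function.comp_def, div_eq_mul_inv] using this
      have e2 := ((c1 x hxδ).differentiableAt (by norm_num)).hasDerivAt
      have e3 : deriv (Xh ψ ε ρ f g) x = _ := ((e1.fun_mul e2).const_add (2 * ε)).deriv
      rw [e3]
      refine (abs_add_le _ _).trans ?_
      rw [abs_mul, abs_mul]
      have a1 : |deriv ψ (x / (2 * ρ)) / (2 * ρ)| * |f x + g x| ≤ B₀ * A * |x| := by
        rw [abs_div, abs_of_pos (by positivity : 0 < 2 * ρ)]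
        calc _ ≤ B₀ / (2 * ρ) * (A * x ^ 2) := by
              have := hb1 (x / (2 * ρ))
              have := u1 x hxδ
              gcongr
          _ = B₀ * A * |x| * (|x| / (2 * ρ)) := by rw [← sq_abs]; ring
          _ ≤ B₀ * A * |x| * 1 := by
              gcongr
              rw [div_le_one (by positivity)]; exact hx
          _ = _ := mul_one _
      have a2 : |ψ (x / (2 * ρ))| * |deriv (fun a => f a + g a) x| ≤ 1 * (A * |x|) := by
        refine mul_le_mul ?_ (d1 x hxδ) (abs_nonneg _) zero_le_one
        rw [abs_of_nonneg (hI _).1]; exact (hI _).2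
      have : 0 ≤ (B₀ + 1) * A * |x| := by positivity
      linarith
    · rw [(hout x (not_le.mp hx)).deriv_eq]
      simp; positivity

/-- **Commutator estimate (Lemma 3.5).**  For every `φ ∈ C₂`,
`‖H*M*φ − M*H*φ‖_{L¹(ℝ)} ≲ ε log(1/ε)`, with the constant depending only on `A`, `δ`
(and `ψ`). -/
theorem commutator_estimate (δ A : ℝ) (hδ : δ ∈ Ioc (0:ℝ) (1/100)) (hA : 1 ≤ A)
    (ψ : ℝ → ℝ) (hψ : IsCutoff ψ) :
    ∃ C : ℝ, 0 < C ∧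
      ∀ ε : ℝ, ε ∈ Ioc (0:ℝ) (δ ^ 2 / 100) →
      ∀ f g : ℝ → ℝ, GoodFG δ A ε f g →
      ∀ φ : ℝ → ℝ, InC2 δ ε φ →
        eLpNorm (fun α => Hstar ψ ε f g (Mstar ψ ε f g φ) α -
            Mstar ψ ε f g (Hstar ψ ε f g φ) α) 1 volume ≤
          ENNReal.ofReal (C * ε * Real.log (1 / ε)) := by
  obtain ⟨B₀, hB₀, hb1, hb2⟩ := cutoff_bound hψ
  refine ⟨26 * (10000 * (B₀ + 1) * A) ^ 5 * π * (6 * π), by positivity, ?_⟩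
  intro ε hε f g hfg φ hφ
  have h := mk_Cor hδ hA hψ hB₀ hb1 hb2 hε hfg
  obtain ⟨hδ0, hδ1⟩ := hδ
  obtain ⟨hε0, hε1⟩ := hε
  have hsp : 0 < √ε := Real.sqrt_pos.mpr hε0
  have hsd : √ε ≤ δ / 10 := by
    rw [Real.sqrt_le_left (by positivity)]; linarith [hε1, show (δ / 10) ^ 2 = δ ^ 2 / 100 by ring]
  set B := 10000 * (B₀ + 1) * A with hBdef
  set ρ := √ε / 2 ^ 6 with hρ
  set X := Xh ψ ε ρ f g with hX
  have hρ0 : 0 < ρ := by positivity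
  have hρδ : ρ < δ := by rw [hρ]; norm_num; linarith
  have hXe : ∀ α, |α| ≤ ρ → Xt ε f g α = X α := by
    intro α hα
    rw [hX]; unfold Xt Xh
    have : ψ (α / (2 * ρ)) = 1 := by
      apply hψ.2.2.2.2
      rw [abs_div, abs_of_pos (by positivity : 0 < 2 * ρ), div_le_iff₀ (by positivity)]
      linarith
    rw [this]; ring
  have eM : ∀ F : ℝ → ℝ, Mstar ψ ε f g F = fun β => (2 * π)⁻¹ * Ms ψ X ρ F β := by
    intro F; funext β
    unfold Mstar Ms
    congr 2; funext α
    unfold Mker mm scut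
    by_cases hα : |α| ≤ ρ
    · rw [hXe α hα]; ring
    · rw [← hρ, h.ψz hα]; ring
  have eH : ∀ F : ℝ → ℝ, Hstar ψ ε f g F = fun β => (2 * π)⁻¹ * SS ψ X ρ F β := by
    intro F; funext β
    unfold Hstar SS pvI
    congr 2; funext r
    have ms : MeasurableSet {α : ℝ | r < |β - α|} := measurableSet_lt (by fun_prop) (by fun_prop)
    rw [← integral_indicator ms]
    unfold Hr
    congr 1; funext α
    unfold indicator jr
    simp only [mem_ofPred_eq, abs_sub_comm β α]
    split_ifs
    · unfold Hker ww scut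
      by_cases hα : |α| ≤ ρ
      · rw [hXe α hα]; ring
      · rw [← hρ, h.ψz hα]; ring
    · ring
  obtain ⟨cφ, sφ, -, bφ⟩ := hφ
  have hLB : LB φ := by
    obtain ⟨C, hC⟩ := sφ.exists_bound_of_continuous cφ.continuous
    obtain ⟨L, hL⟩ := cφ.lipschitzWith_of_hasCompactSupport sφ (by norm_num)
    refine ⟨⟨C, (norm_nonneg _).trans (hC 0), hC⟩, L, L.2, fun x y => ?_⟩
    have := hL.dist_le_mul x y
    rwa [Real.dist_eq, Real.dist_eq] at this
  have hb : ∀ γ, |ψ (γ / ρ) * φ γ| ≤ PC ε ρ γ := by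
    intro γ
    unfold PC PP
    split_ifs with hγ
    · have := (bφ γ (abs_lt.mp (hγ.trans_lt hρδ))).1
      rw [sq_abs, add_comm] at this
      rw [abs_mul]
      calc _ ≤ 1 * |φ γ| := by
            have := h.ψa (γ / ρ)
            gcongr
        _ ≤ _ := by rw [one_mul]; exact this
    · rw [h.ψz hγ]; simp
  have fin := h.final hLB hb
  rw [eLpNorm_one_eq_lintegral_enorm]
  refine le_trans (lintegral_mono fun β => ?_) (fin.trans (le_of_eq ?_))
  · have e : Hstar ψ ε f g (Mstar ψ ε f g φ) β - Mstar ψ ε f g (Hstar ψ ε f g φ) β =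
        ((2 * π)⁻¹ * (2 * π)⁻¹) * (SS ψ X ρ (Ms ψ X ρ φ) β - Ms ψ X ρ (SS ψ X ρ φ) β) := by
      rw [eM φ, eH φ, eH, eM]
      dsimp only
      rw [h.SS_smul (h.Ms_LB hLB.meas hb)]
      have : Ms ψ X ρ (fun β => (2 * π)⁻¹ * SS ψ X ρ φ β) β
          = (2 * π)⁻¹ * Ms ψ X ρ (SS ψ X ρ φ) β := by
        unfold Ms
        rw [← integral_const_mul]
        congr 1; funext α; ring
      rw [this]; ring
    dsimp only
    rw [e, Real.enorm_eq_ofReal_abs, Real.enorm_eq_ofReal_abs]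
    refine ENNReal.ofReal_le_ofReal ?_
    rw [abs_mul]
    have hpi : (2 * π)⁻¹ ≤ 1 := inv_le_one_of_one_le₀ (by linarith [Real.pi_gt_three])
    have hpi0 : 0 ≤ (2 * π)⁻¹ := by positivity
    have : |(2 * π)⁻¹ * (2 * π)⁻¹| ≤ 1 := by
      rw [abs_of_nonneg (by positivity)]; nlinarith
    exact mul_le_of_le_one_left (abs_nonneg _) this
  · congr 1; ring
end
end

section
/- Pointwise bound on H*φ (estimate (pi110) in the proof of Lemma 3.2): For every φ ∈ C₂ and every β ∈ I_δ, one has |H*φ(β)| ≲ ε²/(ε³ + |β|³). -/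
noncomputable section
open Set MeasureTheory Filter Real

lemma pv_bound (N E B : ℝ → ℝ) (β : ℝ) (hN : AEStronglyMeasurable N volume)
    (hE : Measurable E) (hodd : ∀ s, E (β - s) = - E (β + s))
    (hEint : ∀ r > 0, IntegrableOn E {α : ℝ | r < |β - α|})
    (hB : Integrable B) (hle : ∀ α, |N α - E α| ≤ B α) :
    |pvI N β| ≤ ∫ α, B α := by
  have hD : Integrable (fun α => N α - E α) :=
    hB.mono' (hN.sub hE.aestronglyMeasurable) (Eventually.of_forall hle)
  have hS : ∀ r : ℝ, MeasurableSet {α : ℝ | r < |β - α|} := fun r =>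
    measurableSet_lt measurable_const (by fun_prop)
  have hzero : ∀ r : ℝ, ∫ α in {α : ℝ | r < |β - α|}, E α = 0 := by
    intro r
    rw [← integral_indicator (hS r)]
    set G := indicator {α : ℝ | r < |β - α|} E with hG
    have h1 : ∀ s, G (β - s) = - G (β + s) := by
      intro s
      simp only [hG, indicator, mem_ofPred_eq]
      have : |β - (β - s)| = |β - (β + s)| := by
        rw [show β - (β - s) = s by ring, show β - (β + s) = -s by ring, abs_neg]
      simp only [this, hodd]
      split_ifs <;> simp
    have h2 : ∫ s, G (β - s) = ∫ s, G s := integral_sub_left_eq_self G volume β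
    have h3 : ∫ s, G (β + s) = ∫ s, G s := integral_add_left_eq_self G β
    have h4 : ∫ s, G (β - s) = - ∫ s, G (β + s) := by
      rw [← integral_neg]; congr 1; ext s; exact h1 s
    linarith
  have hev : ∀ r > 0, ∫ α in {α : ℝ | r < |β - α|}, N α
      = ∫ α, indicator {α : ℝ | r < |β - α|} (fun α => N α - E α) α := by
    intro r hr
    rw [integral_indicator (hS r)]
    have := integral_add (μ := volume.restrict {α : ℝ | r < |β - α|})
      hD.integrableOn (hEint r hr)
    rw [hzero r, add_zero] at this
    rw [← this]
    congr 1; ext α; ring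
  have hlim : Tendsto (fun r : ℝ => ∫ α, indicator {α : ℝ | r < |β - α|} (fun α => N α - E α) α)
      (nhdsWithin (0:ℝ) (Ioi 0)) (nhds (∫ α, (N α - E α))) := by
    apply tendsto_integral_filter_of_dominated_convergence B
    · exact Eventually.of_forall fun r => hD.aestronglyMeasurable.indicator (hS r)
    · refine Eventually.of_forall fun r => Eventually.of_forall fun α => ?_
      refine (norm_indicator_le_norm_self _ _).trans (hle α)
    · exact hB
    · have : ∀ᵐ α : ℝ, α ≠ β := by
        simp [ae_iff]
      filter_upwards [this] with α hα
      have hpos : 0 < |β - α| := abs_pos.2 (sub_ne_zero.2 hα.symm)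
      apply tendsto_const_nhds.congr'
      have : ∀ᶠ r in nhdsWithin (0:ℝ) (Ioi 0), r < |β - α| :=
        nhdsWithin_le_nhds (Iio_mem_nhds hpos)
      filter_upwards [this] with r hr
      simp [indicator, hr]
  have hlim2 : Tendsto (fun r : ℝ => ∫ α in {α : ℝ | r < |β - α|}, N α)
      (nhdsWithin (0:ℝ) (Ioi 0)) (nhds (∫ α, (N α - E α))) := by
    apply hlim.congr'
    filter_upwards [self_mem_nhdsWithin] with r hr
    exact (hev r hr).symm
  unfold pvI
  rw [hlim2.limUnder_eq]
  exact norm_integral_le_of_norm_le (f := fun α => N α - E α) hB (Eventually.of_forall hle)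

lemma c2_lip {δ A : ℝ} (hδ : 0 < δ) {f : ℝ → ℝ}
    (hf : ContDiffOn ℝ 5 f (Ioo (-δ) δ))
    (h1 : derivWithin f (Ioo (-δ) δ) 0 = 0)
    (h2 : ∀ x ∈ Ioo (-δ) δ, |iteratedDerivWithin 2 f (Ioo (-δ) δ) x| ≤ A)
    {M x y : ℝ} (hA : 0 ≤ A) (hM : M < δ) (hx : |x| ≤ M) (hy : |y| ≤ M) :
    |f x - f y| ≤ A * M * |x - y| := by
  have hu : UniqueDiffOn ℝ (Ioo (-δ) δ) := uniqueDiffOn_Ioo _ _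
  have hd1 : DifferentiableOn ℝ f (Ioo (-δ) δ) := hf.differentiableOn (by norm_num)
  have hd2 : DifferentiableOn ℝ (derivWithin f (Ioo (-δ) δ)) (Ioo (-δ) δ) :=
    (hf.derivWithin (m := 1) hu (by norm_num)).differentiableOn (by norm_num)
  have hit : iteratedDerivWithin 2 f (Ioo (-δ) δ)
      = derivWithin (derivWithin f (Ioo (-δ) δ)) (Ioo (-δ) δ) := by
    ext z
    rw [show (2:ℕ) = 1 + 1 from rfl, iteratedDerivWithin_succ]
    have : iteratedDerivWithin 1 f (Ioo (-δ) δ) = derivWithin f (Ioo (-δ) δ) := by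
      ext w
      rw [iteratedDerivWithin_one]
    rw [this]
  have hb1 : ∀ z ∈ Ioo (-δ) δ, |derivWithin f (Ioo (-δ) δ) z| ≤ A * |z| := by
    intro z hz
    have := (convex_Ioo (-δ) δ).norm_image_sub_le_of_norm_derivWithin_le (C := A) hd2
      (fun w hw => by rw [← hit]; exact h2 w hw) (x := 0) (y := z) ⟨by linarith, hδ⟩ hz
    simpa [h1] using this
  have hsub : Icc (-M) M ⊆ Ioo (-δ) δ := fun z hz => ⟨by linarith [hz.1], by linarith [hz.2]⟩
  have := (convex_Icc (-M) M).norm_image_sub_le_of_norm_hasDerivWithin_le (C := A * M)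
    (f := f) (f' := derivWithin f (Ioo (-δ) δ)) (x := y) (y := x)
    (fun w hw => ((hd1 w (hsub hw)).hasDerivWithinAt).mono hsub)
    (fun w hw => (hb1 w (hsub hw)).trans (by
      have : |w| ≤ M := abs_le.2 hw
      gcongr)) (abs_le.1 hy) (abs_le.1 hx)
  simpa using this

lemma q_bound {ε L X s : ℝ} (hε : 0 < ε) (hL : 1 ≤ L) (h1 : ε ≤ X) (h2 : X ≤ L * ε) :
    X ^ 2 / (s ^ 2 + X ^ 2) ≤ L ^ 2 * ε ^ 2 / (s ^ 2 + ε ^ 2) := by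
  have hX : 0 < X := by linarith
  have h3 : ε ^ 2 ≤ X ^ 2 := by gcongr
  have h4 : X ^ 2 ≤ L ^ 2 * ε ^ 2 := by rw [← mul_pow]; gcongr
  have := sq_nonneg s
  gcongr

lemma q_diff {ε L X Y s : ℝ} (hε : 0 < ε) (hL : 1 ≤ L) (h1 : ε ≤ X) (h2 : X ≤ L * ε)
    (h1' : ε ≤ Y) (h2' : Y ≤ L * ε) :
    |X ^ 2 / (s ^ 2 + X ^ 2) - Y ^ 2 / (s ^ 2 + Y ^ 2)|
      ≤ |X - Y| * (2 * L * ε) / (s ^ 2 + ε ^ 2) := by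
  have hX : 0 < X := by linarith
  have hY : 0 < Y := by linarith
  have hs := sq_nonneg s
  have h3 : ε ^ 2 ≤ X ^ 2 := by gcongr
  have h3' : ε ^ 2 ≤ Y ^ 2 := by gcongr
  have e : X ^ 2 / (s ^ 2 + X ^ 2) - Y ^ 2 / (s ^ 2 + Y ^ 2)
      = ((X - Y) * (X + Y) / (s ^ 2 + X ^ 2)) * (s ^ 2 / (s ^ 2 + Y ^ 2)) := by
    field_simp; ring
  rw [e, abs_mul, abs_div, abs_mul, abs_of_pos (show 0 < X + Y by linarith),
    abs_of_pos (show 0 < s ^ 2 + X ^ 2 by positivity),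
    abs_of_nonneg (show 0 ≤ s ^ 2 / (s ^ 2 + Y ^ 2) by positivity)]
  have h5 : s ^ 2 / (s ^ 2 + Y ^ 2) ≤ 1 := by
    rw [div_le_one (by positivity)]; nlinarith
  calc _ ≤ |X - Y| * (X + Y) / (s ^ 2 + X ^ 2) * 1 := by gcongr
    _ ≤ _ := by
      rw [mul_one]
      gcongr
      linarith

lemma int_pois {ε : ℝ} (hε : 0 < ε) (β : ℝ) :
    Integrable (fun α : ℝ => 1 / ((α - β) ^ 2 + ε ^ 2)) ∧
      ∫ α : ℝ, 1 / ((α - β) ^ 2 + ε ^ 2) = π / ε := by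
  have e : (fun α : ℝ => 1 / (α ^ 2 + ε ^ 2)) = fun α => (ε ^ 2)⁻¹ * (1 + (α / ε) ^ 2)⁻¹ := by
    ext α; field_simp; ring
  have hi : Integrable (fun α : ℝ => 1 / (α ^ 2 + ε ^ 2)) := by
    rw [e]
    exact (integrable_inv_one_add_sq.comp_div hε.ne').const_mul _
  refine ⟨hi.comp_sub_right β, ?_⟩
  rw [integral_sub_right_eq_self (fun α : ℝ => 1 / (α ^ 2 + ε ^ 2)) β, e, integral_const_mul]
  rw [Measure.integral_comp_div (fun x : ℝ => (1 + x ^ 2)⁻¹) ε, integral_univ_inv_one_add_sq,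
    abs_of_pos hε, smul_eq_mul]
  field_simp

lemma near_bound {s ε b A K S pa pb fa fb qa qb w : ℝ} (hε : 0 < ε) (hb : 0 < b) (hA : 1 ≤ A)
    (hK : 0 ≤ K) (hS : 0 < S) (hSε : S ^ 2 = ε) (hbS : b ≤ S) (hw : |w| ≤ 1) (hpb : |pb| ≤ 1)
    (h1 : |(qa - qb) * pa| ≤ |s| * ((24 * A ^ 2 * b * ε) / (s ^ 2 + ε ^ 2)))
    (h2 : |qb| ≤ 9 * A ^ 2 * ε ^ 2 / (s ^ 2 + ε ^ 2))
    (h3 : |pa - pb| ≤ |s| * (64 * K / S))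
    (h4 : |fa| ≤ 8 * ε / b ^ 2)
    (h5 : |fa - fb| ≤ |s| * (32 * ε / b ^ 3)) :
    |s⁻¹ * qa * pa * w * fa - s⁻¹ * qb * w * pb * fb|
      ≤ A ^ 2 * (480 + 4608 * K) * (ε ^ 3 / b ^ 3) * (1 / (s ^ 2 + ε ^ 2)) := by
  have e : s⁻¹ * qa * pa * w * fa - s⁻¹ * qb * w * pb * fb
      = w * (s⁻¹ * (((qa - qb) * pa) * fa + qb * ((pa - pb) * fa) + qb * (pb * (fa - fb)))) := by
    ring
  have hD : 0 < s ^ 2 + ε ^ 2 := by positivity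
  set T := (24 * A ^ 2 * b * ε) / (s ^ 2 + ε ^ 2) * (8 * ε / b ^ 2)
    + 9 * A ^ 2 * ε ^ 2 / (s ^ 2 + ε ^ 2) * ((64 * K / S) * (8 * ε / b ^ 2))
    + 9 * A ^ 2 * ε ^ 2 / (s ^ 2 + ε ^ 2) * (32 * ε / b ^ 3) with hT
  have hT0 : 0 ≤ T := by positivity
  have hin : |((qa - qb) * pa) * fa + qb * ((pa - pb) * fa) + qb * (pb * (fa - fb))|
      ≤ |s| * T := by
    have t1 : |((qa - qb) * pa) * fa|
        ≤ |s| * ((24 * A ^ 2 * b * ε) / (s ^ 2 + ε ^ 2)) * (8 * ε / b ^ 2) := by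
      rw [abs_mul]; gcongr
    have t2 : |qb * ((pa - pb) * fa)|
        ≤ 9 * A ^ 2 * ε ^ 2 / (s ^ 2 + ε ^ 2) * (|s| * (64 * K / S) * (8 * ε / b ^ 2)) := by
      rw [abs_mul, abs_mul]; gcongr
    have t3 : |qb * (pb * (fa - fb))|
        ≤ 9 * A ^ 2 * ε ^ 2 / (s ^ 2 + ε ^ 2) * (1 * (|s| * (32 * ε / b ^ 3))) := by
      rw [abs_mul, abs_mul]; gcongr
    refine (abs_add_three _ _ _).trans ?_
    rw [hT]
    linarith
  have hfin : T ≤ A ^ 2 * (480 + 4608 * K) * (ε ^ 3 / b ^ 3) * (1 / (s ^ 2 + ε ^ 2)) := by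
    have u1 : (24 * A ^ 2 * b * ε) / (s ^ 2 + ε ^ 2) * (8 * ε / b ^ 2)
        ≤ A ^ 2 * 192 * (ε ^ 3 / b ^ 3) * (1 / (s ^ 2 + ε ^ 2)) := by
      have hb2 : b ^ 2 ≤ ε := by rw [← hSε]; gcongr
      have : (24 * A ^ 2 * b * ε) / (s ^ 2 + ε ^ 2) * (8 * ε / b ^ 2)
        = A ^ 2 * 192 * (b ^ 2 * ε ^ 2 / b ^ 3) * (1 / (s ^ 2 + ε ^ 2)) := by
        field_simp; ring
      rw [this]
      have : b ^ 2 * ε ^ 2 ≤ ε ^ 3 := by nlinarith [sq_nonneg ε]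
      gcongr
    have u2 : 9 * A ^ 2 * ε ^ 2 / (s ^ 2 + ε ^ 2) * ((64 * K / S) * (8 * ε / b ^ 2))
        ≤ A ^ 2 * (4608 * K) * (ε ^ 3 / b ^ 3) * (1 / (s ^ 2 + ε ^ 2)) := by
      have : 9 * A ^ 2 * ε ^ 2 / (s ^ 2 + ε ^ 2) * ((64 * K / S) * (8 * ε / b ^ 2))
        = A ^ 2 * (4608 * K) * (ε ^ 3 / (b ^ 2 * S)) * (1 / (s ^ 2 + ε ^ 2)) := by
        field_simp; ring
      rw [this]
      have : b ^ 3 ≤ b ^ 2 * S := by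
        have := mul_le_mul_of_nonneg_left hbS (sq_nonneg b)
        nlinarith
      gcongr
    have u3 : 9 * A ^ 2 * ε ^ 2 / (s ^ 2 + ε ^ 2) * (32 * ε / b ^ 3)
        = A ^ 2 * 288 * (ε ^ 3 / b ^ 3) * (1 / (s ^ 2 + ε ^ 2)) := by
      field_simp; ring
    rw [hT, u3]
    linarith
  rw [e, abs_mul, abs_mul]
  have hs1 : |s⁻¹| * |s| ≤ 1 := by
    rw [abs_inv]; exact inv_mul_le_one
  calc |w| * (|s⁻¹| * |((qa - qb) * pa) * fa + qb * ((pa - pb) * fa) + qb * (pb * (fa - fb))|)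
      ≤ 1 * (|s⁻¹| * (|s| * T)) := by gcongr
    _ = (|s⁻¹| * |s|) * T := by ring
    _ ≤ 1 * T := by gcongr
    _ ≤ _ := by rw [one_mul]; exact hfin

lemma far_bound {s ε b A K pa fa qa w a : ℝ} (hε : 0 < ε) (hb : 0 < b) (hA : 1 ≤ A)
    (hK : 0 ≤ K) (hw : |w| ≤ 1)
    (h1 : |qa * pa| ≤ 9 * A ^ 2 * ε ^ 2 / (s ^ 2 + ε ^ 2))
    (h4 : |fa| ≤ ε / (ε ^ 2 + |a| ^ 2)) (hs : b / 2 < |s|) :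
    |s⁻¹ * qa * pa * w * fa|
      ≤ A ^ 2 * (480 + 4608 * K) * (ε ^ 3 / b ^ 3) * (1 / (a ^ 2 + ε ^ 2)) := by
  have e : s⁻¹ * qa * pa * w * fa = w * (s⁻¹ * (qa * pa) * fa) := by ring
  rw [sq_abs] at h4
  have hs0 : 0 < |s| := by linarith
  have h1' : |qa * pa| ≤ 9 * A ^ 2 * ε ^ 2 / (b / 2) ^ 2 := by
    refine h1.trans ?_
    gcongr
    rw [← sq_abs s]
    nlinarith [sq_nonneg ε]
  have h2 : |s⁻¹| ≤ (b / 2)⁻¹ := by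
    rw [abs_inv]; gcongr
  rw [e, abs_mul, abs_mul, abs_mul]
  calc |w| * (|s⁻¹| * |qa * pa| * |fa|)
      ≤ 1 * ((b / 2)⁻¹ * (9 * A ^ 2 * ε ^ 2 / (b / 2) ^ 2) * (ε / (ε ^ 2 + a ^ 2))) := by gcongr
    _ = A ^ 2 * 72 * (ε ^ 3 / b ^ 3) * (1 / (a ^ 2 + ε ^ 2)) := by field_simp; ring
    _ ≤ _ := by gcongr; linarith

lemma decay2 {ε a b : ℝ} (hε : 0 < ε) (ha : 0 ≤ a) (hb : 0 < b) (h : b / 2 ≤ ε + a) :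
    ε / (ε ^ 2 + a ^ 2) ≤ 8 * ε / b ^ 2 := by
  rw [div_le_div_iff₀ (by positivity) (by positivity)]
  have : b ^ 2 ≤ 8 * (ε ^ 2 + a ^ 2) := by
    nlinarith [sq_nonneg (ε - a), pow_le_pow_left₀ (by positivity) h 2]
  nlinarith

lemma decay3 {ε a b : ℝ} (hε : 0 < ε) (ha : 0 ≤ a) (hb : 0 < b) (h : b / 2 ≤ ε + a) :
    ε / (ε ^ 3 + a ^ 3) ≤ 32 * ε / b ^ 3 := by
  rw [div_le_div_iff₀ (by positivity) (by positivity)]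
  have : b ^ 3 ≤ 32 * (ε ^ 3 + a ^ 3) := by
    nlinarith [mul_nonneg (add_nonneg hε.le ha) (sq_nonneg (ε - a)),
      pow_le_pow_left₀ (by positivity) h 3]
  nlinarith

set_option maxHeartbeats 4000000

/-- **Pointwise bound on `H*φ` (estimate (3.110)).**  For every `φ ∈ C₂` and every `β ∈ I_δ`,
`|H*φ(β)| ≲ ε²/(ε³+|β|³)`, with the constant depending only on `A`, `δ` (and `ψ`). -/
theorem Hstar_pointwise_bound (δ A : ℝ) (hδ : δ ∈ Ioc (0:ℝ) (1/100)) (hA : 1 ≤ A)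
    (ψ : ℝ → ℝ) (hψ : IsCutoff ψ) :
    ∃ C : ℝ, 0 < C ∧
      ∀ ε : ℝ, ε ∈ Ioc (0:ℝ) (δ ^ 2 / 100) →
      ∀ f g : ℝ → ℝ, GoodFG δ A ε f g →
      ∀ φ : ℝ → ℝ, InC2 δ ε φ →
        ∀ β ∈ Ioo (-δ) δ,
          |Hstar ψ ε f g φ β| ≤ C * (ε ^ 2 / (ε ^ 3 + |β| ^ 3)) := by
  obtain ⟨hδ0, hδ1⟩ := hδ
  obtain ⟨hψs, hψe, hψI, hψ0, hψ1⟩ := hψ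
  have hψabs : ∀ x, |ψ x| ≤ 1 := fun x => by
    rw [abs_of_nonneg (hψI x).1]; exact (hψI x).2
  have hcs : HasCompactSupport ψ := by
    apply HasCompactSupport.intro (isCompact_Icc (a := (-1:ℝ)) (b := 1))
    intro x hx
    apply hψ0
    by_contra h
    exact hx (abs_le.1 (not_lt.1 h))
  obtain ⟨K, hK⟩ := ContDiff.lipschitzWith_of_hasCompactSupport hcs hψs (by simp)
  have hψc : Continuous ψ := hψs.continuous
  have hψm : Measurable ψ := hψc.measurable
  have hK0 : (0:ℝ) ≤ K := K.2
  refine ⟨A ^ 2 * (480 + 4608 * K), by positivity, ?_⟩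
  rintro ε ⟨hε, hε1⟩ f g ⟨hf, hg, hf0, hg0, hf1, hg1, hfg, hpos⟩ φ ⟨hφ, -, hφs, hφb⟩ β hβ
  set S := Real.sqrt ε with hSdef
  have hS : 0 < S := Real.sqrt_pos.2 hε
  have hSε : S ^ 2 = ε := Real.sq_sqrt hε.le
  have hSδ : S ≤ δ / 10 := by
    rw [hSdef]; apply Real.sqrt_le_iff.2
    constructor
    · positivity
    · linarith
  set b := |β| + ε with hbdef
  have hb : 0 < b := by positivity
  set C0 := A ^ 2 * (480 + 4608 * (K:ℝ)) with hC0
  have hC0p : 0 < C0 := by positivity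
  -- the global bounds on φ
  have hφ0 : ∀ x, x ∉ Ioo (-δ) δ → φ x = 0 := fun x hx =>
    image_eq_zero_of_notMem_tsupport fun h => hx (hφs h)
  have hφA : ∀ x, |φ x| ≤ ε / (ε ^ 2 + |x| ^ 2) := by
    intro x
    by_cases hx : x ∈ Ioo (-δ) δ
    · exact (hφb x hx).1
    · rw [hφ0 x hx, abs_zero]; positivity
  have hφB : ∀ x, |deriv φ x| ≤ ε / (ε ^ 3 + |x| ^ 3) := by
    intro x
    by_cases hx : x ∈ Ioo (-δ) δ
    · exact (hφb x hx).2
    · have : deriv φ x = 0 := by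
        by_contra h
        exact hx (hφs (support_deriv_subset h))
      rw [this, abs_zero]; positivity
  -- bounds on X
  have hX1 : ∀ x, |x| ≤ S / 32 → ε ≤ Xt ε f g x := by
    intro x hx
    have h4 : x ∈ Ioo (-(4 * S)) (4 * S) := by
      have := abs_le.1 hx
      constructor <;> linarith
    have := hpos x h4 x h4
    unfold Xt; linarith
  have hXL : ∀ M x y, M ≤ S / 32 → |x| ≤ M → |y| ≤ M →
      |Xt ε f g x - Xt ε f g y| ≤ 2 * A * M * |x - y| := by
    intro M x y hM hx hy
    have h1 := c2_lip hδ0 hf hf1 (fun z hz => by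
      have := hfg z hz 2 (by norm_num)
      have h' := abs_nonneg (iteratedDerivWithin 2 g (Ioo (-δ) δ) z)
      linarith) (by linarith : (0:ℝ) ≤ A) (by linarith : M < δ) hx hy
    have h2 := c2_lip hδ0 hg hg1 (fun z hz => by
      have := hfg z hz 2 (by norm_num)
      have h' := abs_nonneg (iteratedDerivWithin 2 f (Ioo (-δ) δ) z)
      linarith) (by linarith : (0:ℝ) ≤ A) (by linarith : M < δ) hx hy
    have : Xt ε f g x - Xt ε f g y = (f x - f y) + (g x - g y) := by unfold Xt; ring
    rw [this]
    refine (abs_add_le _ _).trans ?_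
    linarith
  have hX2 : ∀ x, |x| ≤ S / 32 → Xt ε f g x ≤ 3 * A * ε := by
    intro x hx
    have h := hXL (S / 32) x 0 le_rfl hx (by rw [abs_zero]; positivity)
    rw [sub_zero] at h
    have h0 : Xt ε f g 0 = 2 * ε := by unfold Xt; rw [hf0, hg0]; ring
    rw [h0] at h
    have h' := le_abs_self (Xt ε f g x - 2 * ε)
    have h2 : 2 * A * (S / 32) * |x| ≤ 2 * A * (S / 32) * (S / 32) := by gcongr
    have h3 : 2 * A * (S / 32) * (S / 32) = A * ε / 512 := by rw [← hSε]; ring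
    have h4 : ε ≤ A * ε := by nlinarith
    nlinarith
  -- cutoff vanishing
  have hcut : ∀ x, S / 64 < |x| → scut ψ (S / 2 ^ 6) x = 0 := by
    intro x hx
    unfold scut
    apply hψ0
    rw [abs_div, abs_of_pos (by positivity : 0 < S / 2 ^ 6), lt_div_iff₀ (by positivity)]
    norm_num; linarith
  have hcutabs : ∀ x, |scut ψ (S / 2 ^ 6) x| ≤ 1 := fun x => hψabs _
  have hcutlip : ∀ x y, |scut ψ (S / 2 ^ 6) x - scut ψ (S / 2 ^ 6) y| ≤ |x - y| * (64 * K / S) := by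
    intro x y
    unfold scut
    have h := hK.dist_le_mul (x / (S / 2 ^ 6)) (y / (S / 2 ^ 6))
    rw [Real.dist_eq, Real.dist_eq, ← sub_div, abs_div,
      abs_of_pos (by positivity : 0 < S / 2 ^ 6)] at h
    refine h.trans (le_of_eq ?_)
    field_simp; norm_num
  have hcutm : Measurable (scut ψ (S / 2 ^ 6)) := by
    unfold scut; exact hψm.comp (measurable_id.div_const _)
  -- goal reduction
  have hgoal : C0 * (ε ^ 2 / b ^ 3) ≤ C0 * (ε ^ 2 / (ε ^ 3 + |β| ^ 3)) := by
    have h0 := abs_nonneg β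
    have : ε ^ 3 + |β| ^ 3 ≤ b ^ 3 := by
      rw [hbdef]
      have h1 : 0 ≤ |β| * ε * (|β| + ε) := by positivity
      nlinarith
    gcongr
  refine le_trans ?_ hgoal
  unfold Hstar
  rw [abs_mul, abs_of_pos (by positivity : 0 < (2 * π)⁻¹)]
  have hN : AEStronglyMeasurable (fun α => Hker ψ ε f g α β * φ α) volume := by
    have hI : (fun α => Hker ψ ε f g α β * φ α)
        = indicator (Ioo (-δ) δ) (fun α => Hker ψ ε f g α β * φ α) := by
      ext α
      by_cases h : α ∈ Ioo (-δ) δ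
      · rw [indicator_of_mem h]
      · rw [indicator_of_notMem h, hφ0 α h, mul_zero]
    rw [hI, aestronglyMeasurable_indicator_iff measurableSet_Ioo]
    have hXm : AEMeasurable (fun α => Xt ε f g α) (volume.restrict (Ioo (-δ) δ)) := by
      apply ContinuousOn.aemeasurable _ measurableSet_Ioo
      unfold Xt
      exact (continuousOn_const.add hf.continuousOn).add hg.continuousOn
    apply AEMeasurable.aestronglyMeasurable
    unfold Hker
    have hs : Measurable fun α : ℝ => α - β := by fun_prop
    exact (((hs.inv.aemeasurable.mul ((hXm.pow_const 2).div
      ((hs.pow_const 2).aemeasurable.add (hXm.pow_const 2)))).mul hcutm.aemeasurable).mul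
      (hcutm.comp hs).aemeasurable).mul hφ.continuous.measurable.aemeasurable
  by_cases hβS : S / 32 < |β|
  · have hz : ∀ α, Hker ψ ε f g α β * φ α = 0 := by
      intro α
      unfold Hker
      by_cases h1 : S / 64 < |α|
      · rw [hcut α h1]; ring
      · have : S / 64 < |α - β| := by
          have := abs_sub_abs_le_abs_sub β α
          rw [abs_sub_comm] at this
          linarith
        rw [hcut _ this]; ring
    have := pv_bound (fun α => Hker ψ ε f g α β * φ α) (fun _ => 0) (fun _ => 0) β hN
      measurable_const (by simp) (fun r _ => integrableOn_zero) (integrable_zero _ _ _)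
      (by intro α; simp [hz α])
    rw [integral_zero] at this
    have h2 : |pvI (fun α => Hker ψ ε f g α β * φ α) β| = 0 := le_antisymm this (abs_nonneg _)
    rw [h2, mul_zero]
    positivity
  · have hβS' : |β| ≤ S / 32 := not_lt.1 hβS
    have hεS : ε ≤ S / 1000 := by rw [← hSε]; nlinarith
    have hbS : b ≤ S := by rw [hbdef]; linarith
    set E : ℝ → ℝ := indicator {α : ℝ | |α - β| ≤ b / 2} (fun α =>
      (α - β)⁻¹ * ((Xt ε f g β) ^ 2 / ((α - β) ^ 2 + (Xt ε f g β) ^ 2))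
        * scut ψ (S / 2 ^ 6) (α - β) * scut ψ (S / 2 ^ 6) β * φ β) with hE
    have hset : MeasurableSet {α : ℝ | |α - β| ≤ b / 2} :=
      measurableSet_le (by fun_prop) measurable_const
    have hEm : Measurable E := by
      apply Measurable.indicator _ hset
      have hs : Measurable fun α : ℝ => α - β := by fun_prop
      exact (((hs.inv.mul (measurable_const.div ((hs.pow_const 2).add measurable_const))).mul
        (hcutm.comp hs)).mul_const _).mul_const _
    have hodd : ∀ s, E (β - s) = - E (β + s) := by
      intro s
      have hev : scut ψ (S / 2 ^ 6) (-s) = scut ψ (S / 2 ^ 6) s := by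
        unfold scut; rw [neg_div, hψe]
      have e1 : β - s - β = -s := by ring
      have e2 : β + s - β = s := by ring
      by_cases h : |s| ≤ b / 2
      · rw [hE, indicator_of_mem (by simpa [e1] using h), indicator_of_mem (by simpa [e2] using h)]
        rw [e1, e2, hev, inv_neg, neg_sq]; ring
      · rw [hE, indicator_of_notMem (by simpa [e1] using h),
          indicator_of_notMem (by simpa [e2] using h), neg_zero]
    have hEint : ∀ r > 0, IntegrableOn E {α : ℝ | r < |β - α|} := by
      intro r hr
      have hS : MeasurableSet {α : ℝ | r < |β - α|} :=
        measurableSet_lt measurable_const (by fun_prop)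
      rw [← integrable_indicator_iff hS]
      have hbd : Integrable (indicator (Icc (β - b / 2) (β + b / 2)) (fun _ => r⁻¹ * |φ β|)) := by
        rw [integrable_indicator_iff measurableSet_Icc]
        exact integrableOn_const (by simp)
      refine hbd.mono' (hEm.indicator hS).aestronglyMeasurable (Eventually.of_forall fun α => ?_)
      have hnn : 0 ≤ indicator (Icc (β - b / 2) (β + b / 2)) (fun _ => r⁻¹ * |φ β|) α :=
        indicator_nonneg (fun _ _ => by positivity) _
      by_cases h1 : r < |β - α|
      · rw [indicator_of_mem (show α ∈ {α : ℝ | r < |β - α|} from h1)]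
        by_cases h2 : |α - β| ≤ b / 2
        · have h3 := abs_le.1 h2
          rw [hE, indicator_of_mem (show α ∈ {α : ℝ | |α - β| ≤ b / 2} from h2),
            indicator_of_mem (show α ∈ Icc (β - b / 2) (β + b / 2) from
              ⟨by linarith, by linarith⟩)]
          rw [Real.norm_eq_abs, abs_mul, abs_mul, abs_mul, abs_mul]
          have k1 : |(α - β)⁻¹| ≤ r⁻¹ := by
            rw [abs_inv, abs_sub_comm]; gcongr
          have k2 : |(Xt ε f g β) ^ 2 / ((α - β) ^ 2 + (Xt ε f g β) ^ 2)| ≤ 1 := by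
            rw [abs_of_nonneg (by positivity)]
            exact div_le_one_of_le₀ (by nlinarith [sq_nonneg (α - β)]) (by positivity)
          calc _ ≤ r⁻¹ * 1 * 1 * 1 * |φ β| := by
                gcongr
                · exact hcutabs _
                · exact hcutabs _
            _ = _ := by ring
        · rw [hE, indicator_of_notMem (show α ∉ {α : ℝ | |α - β| ≤ b / 2} from h2), norm_zero]
          exact hnn
      · rw [indicator_of_notMem (show α ∉ {α : ℝ | r < |β - α|} from h1), norm_zero]
        exact hnn
    obtain ⟨i1, v1⟩ := int_pois hε β
    obtain ⟨i2, v2⟩ := int_pois hε 0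
    simp only [sub_zero] at i2 v2
    set B : ℝ → ℝ := fun α => C0 * (ε ^ 3 / b ^ 3) * (1 / ((α - β) ^ 2 + ε ^ 2))
      + C0 * (ε ^ 3 / b ^ 3) * (1 / (α ^ 2 + ε ^ 2)) with hB
    have hBi : Integrable B := (i1.const_mul _).add (i2.const_mul _)
    have hBv : ∫ α, B α = (2 * π) * (C0 * (ε ^ 2 / b ^ 3)) := by
      rw [hB, integral_add (i1.const_mul _) (i2.const_mul _), integral_const_mul,
        integral_const_mul, v1, v2]
      field_simp; ring
    have hle : ∀ α, |Hker ψ ε f g α β * φ α - E α| ≤ B α := by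
      intro α
      have p1 : 0 ≤ C0 * (ε ^ 3 / b ^ 3) * (1 / ((α - β) ^ 2 + ε ^ 2)) := by positivity
      have p2 : 0 ≤ C0 * (ε ^ 3 / b ^ 3) * (1 / (α ^ 2 + ε ^ 2)) := by positivity
      have eL : 9 * A ^ 2 = (3 * A) ^ 2 := by ring
      by_cases h : |α - β| ≤ b / 2
      · rw [hE, indicator_of_mem (show α ∈ {α : ℝ | |α - β| ≤ b / 2} from h)]
        have hcmp : ∀ x, |x - β| ≤ b / 2 → b / 2 ≤ ε + |x| := by
          intro x hx
          have := abs_sub_abs_le_abs_sub β x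
          rw [abs_sub_comm] at this
          rw [hbdef] at *
          linarith
        have hn := near_bound (s := α - β) (ε := ε) (b := b) (A := A) (K := K) (S := S)
          (pa := scut ψ (S / 2 ^ 6) α) (pb := scut ψ (S / 2 ^ 6) β) (fa := φ α) (fb := φ β)
          (qa := (Xt ε f g α) ^ 2 / ((α - β) ^ 2 + (Xt ε f g α) ^ 2))
          (qb := (Xt ε f g β) ^ 2 / ((α - β) ^ 2 + (Xt ε f g β) ^ 2))
          (w := scut ψ (S / 2 ^ 6) (α - β)) hε hb hA hK0 hS hSε hbS (hcutabs _) (hcutabs _)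
          (by
            by_cases hα : S / 64 < |α|
            · rw [hcut α hα, mul_zero, abs_zero]; positivity
            · have hα' : |α| ≤ S / 32 := by linarith
              have hM : |Xt ε f g α - Xt ε f g β| ≤ 2 * A * (2 * b) * |α - β| := by
                have hmax : max |α| |β| ≤ 2 * b := by
                  apply max_le
                  · have := abs_sub_abs_le_abs_sub α β
                    rw [hbdef] at *; linarith [abs_nonneg β]
                  · rw [hbdef]; linarith [abs_nonneg β]
                refine (hXL _ α β (max_le hα' hβS') (le_max_left _ _) (le_max_right _ _)).trans ?_
                gcongr
              have hq := q_diff (s := α - β) hε (by linarith : 1 ≤ 3 * A) (hX1 α hα') (hX2 α hα')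
                (hX1 β hβS') (hX2 β hβS')
              rw [abs_mul]
              calc _ ≤ (2 * A * (2 * b) * |α - β|) * (2 * (3 * A) * ε) / ((α - β) ^ 2 + ε ^ 2) * 1 := by
                    gcongr
                    · exact hq.trans (by gcongr)
                    · exact hcutabs _
                _ = _ := by ring)
          (by
            rw [abs_of_nonneg (by positivity), eL]
            exact q_bound hε (by linarith : 1 ≤ 3 * A) (hX1 β hβS') (hX2 β hβS'))
          (hcutlip α β)
          ((hφA α).trans (decay2 hε (abs_nonneg _) hb (hcmp α h)))
          (by
            have := (convex_closedBall β (b / 2)).norm_image_sub_le_of_norm_deriv_le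
              (f := φ) (C := 32 * ε / b ^ 3) (x := β) (y := α)
              (fun x _ => hφ.differentiable (by norm_num) x)
              (fun x hx => (hφB x).trans (decay3 hε (abs_nonneg _) hb (hcmp x (by
                rwa [Metric.mem_closedBall, Real.dist_eq] at hx))))
              (Metric.mem_closedBall_self (by positivity))
              (by rwa [Metric.mem_closedBall, Real.dist_eq])
            rw [mul_comm]
            simpa using this)
        unfold Hker
        exact hn.trans (by rw [hB]; linarith)
      · rw [hE, indicator_of_notMem (show α ∉ {α : ℝ | |α - β| ≤ b / 2} from h), sub_zero]
        have hn := far_bound (s := α - β) (ε := ε) (b := b) (A := A) (K := K) (a := α)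
          (pa := scut ψ (S / 2 ^ 6) α) (fa := φ α)
          (qa := (Xt ε f g α) ^ 2 / ((α - β) ^ 2 + (Xt ε f g α) ^ 2))
          (w := scut ψ (S / 2 ^ 6) (α - β)) hε hb hA hK0 (hcutabs _)
          (by
            by_cases hα : S / 64 < |α|
            · rw [hcut α hα, mul_zero, abs_zero]; positivity
            · have hα' : |α| ≤ S / 32 := by linarith
              rw [abs_mul, abs_of_nonneg (by positivity), eL]
              calc _ ≤ ((3 * A) ^ 2 * ε ^ 2 / ((α - β) ^ 2 + ε ^ 2)) * 1 := by
                    gcongr ?_ * ?_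
                    · exact q_bound hε (by linarith : 1 ≤ 3 * A) (hX1 α hα') (hX2 α hα')
                    · exact hcutabs _
                _ = _ := by ring)
          (hφA α) (not_le.1 h)
        unfold Hker
        exact hn.trans (by rw [hB]; linarith)
    have hfin := pv_bound _ E B β hN hEm hodd hEint hBi hle
    rw [hBv] at hfin
    calc (2 * π)⁻¹ * |pvI (fun α => Hker ψ ε f g α β * φ α) β|
        ≤ (2 * π)⁻¹ * ((2 * π) * (C0 * (ε ^ 2 / b ^ 3))) := by gcongr
      _ = C0 * (ε ^ 2 / b ^ 3) := by field_simp
end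
end

section
/- Pointwise bound on the commutator kernel (estimate (pi152.5) in the proof of Lemma 3.5): Set X̃(α) := 2ε + f(α) + g(α) and define, for α, β ∈ ℝ, K(α,β) := ∫_ℝ (ψ_{√ε/2⁶}(ρ)/ρ)·ψ_{√ε/2⁶}(β−α−ρ)·K̃(α,β;ρ) dρ, where K̃(α,β;ρ) := [X̃(α+ρ)²ψ_{√ε/2⁶}(α+ρ)/(ρ² + X̃(α+ρ)²)]·[X̃(β)ψ_{√ε/2⁶}(β)/((β−α−ρ)² + X̃(β)²)] − [X̃(β)²ψ_{√ε/2⁶}(β)/(ρ² + X̃(β)²)]·[X̃(β−ρ)ψ_{√ε/2⁶}(β−ρ)/((β−α−ρ)² + X̃(β−ρ)²)] (the integrand is understood to vanish whenever one of the cutoffs ψ_{√ε/2⁶} vanishes, so all arguments of f and g lie in (−δ,δ)); this K is the kernel of the commutator in the sense that (H*M* − M*H*)φ(α) = (1/4π²)∫_ℝ K(α,β)φ(β) dβ. Then for all α, β ∈ ℝ one has |K(α,β)| ≲ ψ_{√ε}(β)·ψ_{√ε}(α)·ε(|α| + |β| + ε)/((β−α)² + ε²). -/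
noncomputable section
open Set MeasureTheory Filter Real

/-- The inner commutator kernel `K̃(α,β;ρ)` from the proof of Lemma 3.5. -/
def Ktil (ψ : ℝ → ℝ) (ε : ℝ) (f g : ℝ → ℝ) (α β ρ : ℝ) : ℝ :=
  (Xt ε f g (α + ρ)) ^ 2 * scut ψ (Real.sqrt ε / 2 ^ 6) (α + ρ) /
      (ρ ^ 2 + (Xt ε f g (α + ρ)) ^ 2) *
      (Xt ε f g β * scut ψ (Real.sqrt ε / 2 ^ 6) β /
        ((β - α - ρ) ^ 2 + (Xt ε f g β) ^ 2)) -
    (Xt ε f g β) ^ 2 * scut ψ (Real.sqrt ε / 2 ^ 6) β / (ρ ^ 2 + (Xt ε f g β) ^ 2) *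
      (Xt ε f g (β - ρ) * scut ψ (Real.sqrt ε / 2 ^ 6) (β - ρ) /
        ((β - α - ρ) ^ 2 + (Xt ε f g (β - ρ)) ^ 2))

/-- The commutator kernel `K(α,β)` from the proof of Lemma 3.5. -/
def Kcom (ψ : ℝ → ℝ) (ε : ℝ) (f g : ℝ → ℝ) (α β : ℝ) : ℝ :=
  ∫ ρ : ℝ, scut ψ (Real.sqrt ε / 2 ^ 6) ρ / ρ * scut ψ (Real.sqrt ε / 2 ^ 6) (β - α - ρ) *
    Ktil ψ ε f g α β ρ


lemma ck_lip {δ A : ℝ} (hA : 0 ≤ A) {f : ℝ → ℝ} (hf : ContDiffOn ℝ 5 f (Ioo (-δ) δ))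
    (h1 : derivWithin f (Ioo (-δ) δ) 0 = 0)
    (h2 : ∀ x ∈ Ioo (-δ) δ, |iteratedDerivWithin 2 f (Ioo (-δ) δ) x| ≤ A)
    {x y m : ℝ} (hx : |x| ≤ m) (hy : |y| ≤ m) (hm : m < δ) :
    |f x - f y| ≤ A * m * |x - y| := by
  have hm0 : 0 ≤ m := (abs_nonneg x).trans hx
  have hu : UniqueDiffOn ℝ (Ioo (-δ) δ) := uniqueDiffOn_Ioo _ _
  have h0 : (0:ℝ) ∈ Ioo (-δ) δ := ⟨by linarith, by linarith⟩
  have hd : DifferentiableOn ℝ (derivWithin f (Ioo (-δ) δ)) (Ioo (-δ) δ) :=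
    (hf.derivWithin hu (m := 1) (by norm_num)).differentiableOn (by norm_num)
  have hb : ∀ z ∈ Ioo (-δ) δ, |derivWithin f (Ioo (-δ) δ) z| ≤ A * |z| := by
    intro z hz
    have := (convex_Ioo (-δ) δ).norm_image_sub_le_of_norm_derivWithin_le hd (C := A)
      (fun t ht => by
        have := h2 t ht
        have e1 : iteratedDerivWithin 1 f (Ioo (-δ) δ) = derivWithin f (Ioo (-δ) δ) :=
          iteratedDerivWithin_one
        rw [iteratedDerivWithin_succ, e1] at this
        simpa using this) h0 hz
    simpa [h1] using this
  have hsub : Icc (-m) m ⊆ Ioo (-δ) δ := fun t ht => ⟨by linarith [ht.1], by linarith [ht.2]⟩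
  have := (convex_Icc (-m) m).norm_image_sub_le_of_norm_hasDerivWithin_le (f := f)
    (f' := derivWithin f (Ioo (-δ) δ)) (C := A * m) (x := y) (y := x)
    (fun t ht => ((hf.differentiableOn (by norm_num)) t (hsub ht)).hasDerivWithinAt.mono hsub)
    (fun t ht => (hb t (hsub ht)).trans (mul_le_mul_of_nonneg_left (abs_le.2 ht) hA))
    (abs_le.1 hy) (abs_le.1 hx)
  simpa using this

lemma ck_adiff {ε B X Y w v κ r : ℝ} (hε : 0 < ε) (hB : 1 ≤ B) (hX : ε ≤ X) (hX' : X ≤ B * ε)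
    (hY : ε ≤ Y) (hY' : Y ≤ B * ε) (hw : 0 ≤ w) (hw1 : w ≤ 1)
    (hk : |X - Y| ≤ κ) (hk2 : |w - v| * ε ≤ κ) :
    |X ^ 2 * w / (r ^ 2 + X ^ 2) - Y ^ 2 * v / (r ^ 2 + Y ^ 2)| ≤
      3 * B ^ 2 * κ * ε / (r ^ 2 + ε ^ 2) := by
  have hκ : 0 ≤ κ := (abs_nonneg _).trans hk
  have hXp : 0 < X := by linarith
  have hYp : 0 < Y := by linarith
  have hR : 0 < r ^ 2 + ε ^ 2 := by positivity
  have e : X ^ 2 * w / (r ^ 2 + X ^ 2) - Y ^ 2 * v / (r ^ 2 + Y ^ 2)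
      = w * ((X - Y) * (X + Y) * (r ^ 2 / (r ^ 2 + X ^ 2)) / (r ^ 2 + Y ^ 2)) +
        (w - v) * (Y ^ 2 / (r ^ 2 + Y ^ 2)) := by
    field_simp; ring
  have hYR : r ^ 2 + ε ^ 2 ≤ r ^ 2 + Y ^ 2 := by nlinarith
  have q : r ^ 2 / (r ^ 2 + X ^ 2) ≤ 1 := by
    rw [div_le_one (by positivity)]; nlinarith
  have t1 : |w * ((X - Y) * (X + Y) * (r ^ 2 / (r ^ 2 + X ^ 2)) / (r ^ 2 + Y ^ 2))| ≤
      1 * (κ * (B * ε + B * ε) * 1 / (r ^ 2 + ε ^ 2)) := by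
    rw [abs_mul, abs_div, abs_mul, abs_mul, abs_of_nonneg hw, abs_of_pos (by positivity : 0 < X + Y),
      abs_of_nonneg (by positivity : 0 ≤ r ^ 2 / (r ^ 2 + X ^ 2)),
      abs_of_pos (by positivity : 0 < r ^ 2 + Y ^ 2)]
    gcongr
  have t2 : |(w - v) * (Y ^ 2 / (r ^ 2 + Y ^ 2))| ≤ B ^ 2 * κ * ε / (r ^ 2 + ε ^ 2) := by
    rw [abs_mul, abs_of_nonneg (by positivity : 0 ≤ Y ^ 2 / (r ^ 2 + Y ^ 2))]
    calc |w - v| * (Y ^ 2 / (r ^ 2 + Y ^ 2)) ≤ |w - v| * ((B * ε) ^ 2 / (r ^ 2 + ε ^ 2)) := by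
          gcongr
      _ = B ^ 2 * (|w - v| * ε) * ε / (r ^ 2 + ε ^ 2) := by ring
      _ ≤ _ := by gcongr
  rw [e]
  refine (abs_add_le _ _).trans ((add_le_add t1 t2).trans ?_)
  rw [one_mul, ← add_div]
  gcongr
  nlinarith [mul_nonneg (mul_nonneg hκ hε.le) (mul_nonneg (by linarith : 0 ≤ B) (by linarith : 0 ≤ B - 1))]

lemma ck_bdiff {ε B X Y w v κ u : ℝ} (hε : 0 < ε) (hB : 1 ≤ B) (hX : ε ≤ X) (hX' : X ≤ B * ε)
    (hY : ε ≤ Y) (hY' : Y ≤ B * ε) (hw : 0 ≤ w) (hw1 : w ≤ 1)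
    (hk : |X - Y| ≤ κ) (hk2 : |w - v| * ε ≤ κ) :
    |X * w / (u ^ 2 + X ^ 2) - Y * v / (u ^ 2 + Y ^ 2)| ≤
      2 * B ^ 2 * κ / (u ^ 2 + ε ^ 2) := by
  have hκ : 0 ≤ κ := (abs_nonneg _).trans hk
  have hXp : 0 < X := by linarith
  have hYp : 0 < Y := by linarith
  have hR : 0 < u ^ 2 + ε ^ 2 := by positivity
  have e : X * w / (u ^ 2 + X ^ 2) - Y * v / (u ^ 2 + Y ^ 2)
      = w * ((X - Y) * (u ^ 2 - X * Y) / ((u ^ 2 + X ^ 2) * (u ^ 2 + Y ^ 2))) +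
        (w - v) * (Y / (u ^ 2 + Y ^ 2)) := by
    field_simp; ring
  have hXR : u ^ 2 + ε ^ 2 ≤ u ^ 2 + X ^ 2 := by nlinarith
  have hYR : u ^ 2 + ε ^ 2 ≤ u ^ 2 + Y ^ 2 := by nlinarith
  have hXY : X * Y ≤ B ^ 2 * ε ^ 2 := by
    calc X * Y ≤ (B * ε) * (B * ε) := by gcongr
      _ = _ := by ring
  have hB2 : 1 ≤ B ^ 2 := by nlinarith
  have q : |u ^ 2 - X * Y| ≤ B ^ 2 * (u ^ 2 + ε ^ 2) := by
    rw [abs_le]; constructor <;> nlinarith [mul_pos hXp hYp, sq_nonneg u, mul_nonneg (by linarith : 0 ≤ B ^ 2 - 1) (sq_nonneg u), mul_nonneg (by linarith : 0 ≤ B ^ 2) (sq_nonneg ε)]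
  have t1 : |w * ((X - Y) * (u ^ 2 - X * Y) / ((u ^ 2 + X ^ 2) * (u ^ 2 + Y ^ 2)))| ≤
      1 * (κ * (B ^ 2 * (u ^ 2 + ε ^ 2)) / ((u ^ 2 + ε ^ 2) * (u ^ 2 + ε ^ 2))) := by
    rw [abs_mul, abs_div, abs_mul, abs_of_nonneg hw, 
      abs_of_pos (by positivity : 0 < (u ^ 2 + X ^ 2) * (u ^ 2 + Y ^ 2))]
    gcongr
  have t2 : |(w - v) * (Y / (u ^ 2 + Y ^ 2))| ≤ B * κ / (u ^ 2 + ε ^ 2) := by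
    rw [abs_mul, abs_of_nonneg (by positivity : 0 ≤ Y / (u ^ 2 + Y ^ 2))]
    calc |w - v| * (Y / (u ^ 2 + Y ^ 2)) ≤ |w - v| * ((B * ε) / (u ^ 2 + ε ^ 2)) := by
          gcongr
      _ = B * (|w - v| * ε) / (u ^ 2 + ε ^ 2) := by ring
      _ ≤ _ := by gcongr
  rw [e]
  refine (abs_add_le _ _).trans ((add_le_add t1 t2).trans ?_)
  have : 1 * (κ * (B ^ 2 * (u ^ 2 + ε ^ 2)) / ((u ^ 2 + ε ^ 2) * (u ^ 2 + ε ^ 2)))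
    = B ^ 2 * κ / (u ^ 2 + ε ^ 2) := by field_simp
  rw [this, ← add_div]
  gcongr
  nlinarith [mul_nonneg hκ (mul_nonneg (by linarith : 0 ≤ B) (by linarith : 0 ≤ B - 1))]

/-- size bounds -/
lemma ck_abd {ε B X w r : ℝ} (hε : 0 < ε) (hX : ε ≤ X) (hX' : X ≤ B * ε)
    (hw : 0 ≤ w) (hw1 : w ≤ 1) :
    |X ^ 2 * w / (r ^ 2 + X ^ 2)| ≤ B ^ 2 * ε ^ 2 / (r ^ 2 + ε ^ 2) := by
  have hXp : 0 < X := by linarith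
  have hR : 0 < r ^ 2 + ε ^ 2 := by positivity
  have h1 : X ^ 2 * w ≤ B ^ 2 * ε ^ 2 := by
    calc X ^ 2 * w ≤ (B * ε) ^ 2 * 1 := by gcongr
      _ = _ := by ring
  rw [abs_of_nonneg (by positivity)]
  exact div_le_div₀ (by positivity) h1 hR (by nlinarith)

lemma ck_bbd {ε B X w r : ℝ} (hε : 0 < ε) (hX : ε ≤ X) (hX' : X ≤ B * ε)
    (hw : 0 ≤ w) (hw1 : w ≤ 1) :
    |X * w / (r ^ 2 + X ^ 2)| ≤ B * ε / (r ^ 2 + ε ^ 2) := by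
  have hXp : 0 < X := by linarith
  have hR : 0 < r ^ 2 + ε ^ 2 := by positivity
  have h1 : X * w ≤ B * ε := by nlinarith
  have h2 : 0 ≤ B * ε := by linarith
  rw [abs_of_nonneg (by positivity)]
  exact div_le_div₀ h2 h1 hR (by nlinarith)

/-- product of two Poisson kernels -/
lemma ck_prod {ε ρ u D N : ℝ} (hε : 0 < ε) (hD : D = ρ + u) (hN : |D| + ε ≤ N) :
    ε ^ 2 * (N + |ρ|) / ((ρ ^ 2 + ε ^ 2) * (u ^ 2 + ε ^ 2)) ≤
      4 * (ε ^ 2 * N / (D ^ 2 + ε ^ 2)) * (1 / (ρ ^ 2 + ε ^ 2) + 1 / (u ^ 2 + ε ^ 2)) := by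
  have hN0 : 0 < N := by have := abs_nonneg D; linarith
  have hV : D ^ 2 + ε ^ 2 ≤ 2 * ((ρ ^ 2 + ε ^ 2) + (u ^ 2 + ε ^ 2)) := by
    subst hD; nlinarith [sq_nonneg (ρ - u)]
  have hV2 : D ^ 2 + ε ^ 2 ≤ N * (|D| + ε) := by
    have := mul_le_mul_of_nonneg_right hN (by positivity : 0 ≤ |D| + ε)
    nlinarith [sq_abs D, abs_nonneg D]
  have h3 : |ρ| * (|D| + ε) ≤ 2 * ((ρ ^ 2 + ε ^ 2) + (u ^ 2 + ε ^ 2)) := by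
    nlinarith [sq_nonneg (|ρ| - |D|), sq_nonneg (|ρ| - ε), sq_abs ρ, sq_abs D, sq_nonneg u]
  have key : (N + |ρ|) * (D ^ 2 + ε ^ 2) ≤ 4 * N * ((ρ ^ 2 + ε ^ 2) + (u ^ 2 + ε ^ 2)) := by
    have a1 := mul_le_mul_of_nonneg_left hV hN0.le
    have a2 := mul_le_mul_of_nonneg_left hV2 (abs_nonneg ρ)
    have a3 := mul_le_mul_of_nonneg_left h3 hN0.le
    nlinarith
  have e : 4 * (ε ^ 2 * N / (D ^ 2 + ε ^ 2)) * (1 / (ρ ^ 2 + ε ^ 2) + 1 / (u ^ 2 + ε ^ 2)) =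
    (ε ^ 2 * (4 * N * ((ρ ^ 2 + ε ^ 2) + (u ^ 2 + ε ^ 2)))) / ((D ^ 2 + ε ^ 2) * ((ρ ^ 2 + ε ^ 2) * (u ^ 2 + ε ^ 2))) := by
    field_simp; ring
  rw [e, div_le_div_iff₀ (by positivity) (by positivity)]
  have := mul_le_mul_of_nonneg_left key (by positivity : 0 ≤ ε ^ 2 * ((ρ ^ 2 + ε ^ 2) * (u ^ 2 + ε ^ 2)))
  nlinarith

lemma ck_int {ε : ℝ} (hε : 0 < ε) : Integrable (fun x : ℝ => 1 / (x ^ 2 + ε ^ 2)) ∧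
    ∫ x : ℝ, 1 / (x ^ 2 + ε ^ 2) = π / ε := by
  have e : (fun x : ℝ => 1 / (x ^ 2 + ε ^ 2)) = fun x => (1 / ε ^ 2) * (fun y => (1 + y ^ 2)⁻¹) (x / ε) := by
    funext x; simp only; field_simp; ring
  constructor
  · rw [e]; exact (integrable_inv_one_add_sq.comp_div hε.ne').const_mul _
  · rw [e, integral_const_mul, Measure.integral_comp_div (fun y : ℝ => (1 + y ^ 2)⁻¹),
      integral_univ_inv_one_add_sq, abs_of_pos hε, smul_eq_mul]
    field_simp

def ckA (X w : ℝ → ℝ) (x r : ℝ) : ℝ := X x ^ 2 * w x / (r ^ 2 + X x ^ 2)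
def ckB (X w : ℝ → ℝ) (x r : ℝ) : ℝ := X x * w x / (r ^ 2 + X x ^ 2)

structure CkH (ε s K L B : ℝ) (X w : ℝ → ℝ) : Prop where
  hε : 0 < ε
  hs : 0 < s
  hK : 0 ≤ K
  hL : 0 ≤ L
  hB : 1 ≤ B
  hX : ∀ x, |x| ≤ 4 * s → ε ≤ X x ∧ X x ≤ B * ε
  hw : ∀ x, 0 ≤ w x ∧ w x ≤ 1
  hXl : ∀ x y m, |x| ≤ 4 * s → |y| ≤ 4 * s → |x| ≤ m → |y| ≤ m → |X x - X y| ≤ K * m * |x - y|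
  hwl : ∀ x y m, |x| ≤ m → |y| ≤ m → |w x - w y| * ε ≤ K * m * |x - y|
  hwL : ∀ x y, |w x - w y| * s ≤ L * |x - y|
  hev : ∀ x, w (-x) = w x

lemma CkH.dA {ε s K L B : ℝ} {X w : ℝ → ℝ} (H : CkH ε s K L B X w) {x y m r : ℝ}
    (hx : |x| ≤ 4 * s) (hy : |y| ≤ 4 * s) (hxm : |x| ≤ m) (hym : |y| ≤ m) :
    |ckA X w x r - ckA X w y r| ≤ 3 * B ^ 2 * (K * m * |x - y|) * ε / (r ^ 2 + ε ^ 2) :=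
  ck_adiff H.hε H.hB (H.hX x hx).1 (H.hX x hx).2 (H.hX y hy).1 (H.hX y hy).2
    (H.hw x).1 (H.hw x).2 (H.hXl x y m hx hy hxm hym) (H.hwl x y m hxm hym)

lemma CkH.dB {ε s K L B : ℝ} {X w : ℝ → ℝ} (H : CkH ε s K L B X w) {x y m r : ℝ}
    (hx : |x| ≤ 4 * s) (hy : |y| ≤ 4 * s) (hxm : |x| ≤ m) (hym : |y| ≤ m) :
    |ckB X w x r - ckB X w y r| ≤ 2 * B ^ 2 * (K * m * |x - y|) / (r ^ 2 + ε ^ 2) :=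
  ck_bdiff H.hε H.hB (H.hX x hx).1 (H.hX x hx).2 (H.hX y hy).1 (H.hX y hy).2
    (H.hw x).1 (H.hw x).2 (H.hXl x y m hx hy hxm hym) (H.hwl x y m hxm hym)

lemma CkH.bA {ε s K L B : ℝ} {X w : ℝ → ℝ} (H : CkH ε s K L B X w) {x r : ℝ}
    (hx : |x| ≤ 4 * s) : |ckA X w x r| ≤ B ^ 2 * ε ^ 2 / (r ^ 2 + ε ^ 2) :=
  ck_abd H.hε (H.hX x hx).1 (H.hX x hx).2 (H.hw x).1 (H.hw x).2

lemma CkH.bB {ε s K L B : ℝ} {X w : ℝ → ℝ} (H : CkH ε s K L B X w) {x r : ℝ}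
    (hx : |x| ≤ 4 * s) : |ckB X w x r| ≤ B * ε / (r ^ 2 + ε ^ 2) :=
  ck_bbd H.hε (H.hX x hx).1 (H.hX x hx).2 (H.hw x).1 (H.hw x).2

lemma CkH.P {ε s K L B : ℝ} {X w : ℝ → ℝ} (H : CkH ε s K L B X w) {α β ρ : ℝ}
    (hα : |α| ≤ 3 * s) (hβ : |β| ≤ s) (hρ : |ρ| ≤ s) (hρ0 : ρ ≠ 0) :
    |w ρ / ρ * w (β - α - ρ) * ((ckA X w (α + ρ) ρ - ckA X w α ρ) * ckB X w β (β - α - ρ) +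
      ckA X w β ρ * (ckB X w β (β - α - ρ) - ckB X w (β - ρ) (β - α - ρ)))| ≤
    20 * B ^ 4 * K * (ε ^ 2 * (|α| + |β| + ε) / ((β - α) ^ 2 + ε ^ 2)) *
      (1 / (ρ ^ 2 + ε ^ 2) + 1 / ((β - α - ρ) ^ 2 + ε ^ 2)) := by
  have hε := H.hε
  have hs := H.hs
  have hB := H.hB
  have hK := H.hK
  set N := |α| + |β| + ε with hN
  set u := β - α - ρ with hu
  have hβ4 : |β| ≤ 4 * s := by linarith
  have hN0 : 0 < N := by positivity
  have hr : 0 < |ρ| := abs_pos.2 hρ0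
  have h1 : |α + ρ| ≤ |α| + |ρ| := abs_add_le _ _
  have h2 : |β - ρ| ≤ |β| + |ρ| := abs_sub _ _
  have a0 := abs_nonneg α
  have b0 := abs_nonneg β
  have d1 := H.dA (x := α + ρ) (y := α) (m := N + |ρ|) (r := ρ) (by linarith) (by linarith)
    (by linarith) (by linarith)
  have d2 := H.dB (x := β) (y := β - ρ) (m := N + |ρ|) (r := u) (by linarith) (by linarith)
    (by linarith) (by linarith)
  rw [show α + ρ - α = ρ by ring] at d1
  rw [show β - (β - ρ) = ρ by ring] at d2
  have e1 := H.bB (r := u) hβ4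
  have e2 := H.bA (r := ρ) hβ4
  have hin : |(ckA X w (α + ρ) ρ - ckA X w α ρ) * ckB X w β u +
      ckA X w β ρ * (ckB X w β u - ckB X w (β - ρ) u)| ≤
      |ρ| * (5 * B ^ 4 * K) * (ε ^ 2 * (N + |ρ|) / ((ρ ^ 2 + ε ^ 2) * (u ^ 2 + ε ^ 2))) := by
    refine (abs_add_le _ _).trans ?_
    rw [abs_mul, abs_mul]
    have f1 := mul_le_mul d1 e1 (abs_nonneg _) (by positivity)
    have f2 := mul_le_mul e2 d2 (abs_nonneg _) (by positivity)
    refine (add_le_add f1 f2).trans ?_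
    have hb : B ^ 3 ≤ B ^ 4 := pow_le_pow_right₀ hB (by norm_num)
    have e : 3 * B ^ 2 * (K * (N + |ρ|) * |ρ|) * ε / (ρ ^ 2 + ε ^ 2) * (B * ε / (u ^ 2 + ε ^ 2)) +
      B ^ 2 * ε ^ 2 / (ρ ^ 2 + ε ^ 2) * (2 * B ^ 2 * (K * (N + |ρ|) * |ρ|) / (u ^ 2 + ε ^ 2)) =
      |ρ| * ((3 * B ^ 3 + 2 * B ^ 4) * K) * (ε ^ 2 * (N + |ρ|) / ((ρ ^ 2 + ε ^ 2) * (u ^ 2 + ε ^ 2))) := by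
      field_simp
    rw [e]
    gcongr
    linarith
  have hp := ck_prod (ε := ε) (ρ := ρ) (u := u) (D := β - α) (N := N) hε (by rw [hu]; ring)
    (by have := abs_sub β α; linarith)
  rw [abs_mul, abs_mul, abs_div, abs_of_nonneg (H.hw ρ).1, abs_of_nonneg (H.hw u).1]
  calc w ρ / |ρ| * w u * _ ≤ 1 / |ρ| * 1 * (|ρ| * (5 * B ^ 4 * K) * (ε ^ 2 * (N + |ρ|) / ((ρ ^ 2 + ε ^ 2) * (u ^ 2 + ε ^ 2)))) := by
        gcongr
        · exact (H.hw u).1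
        · exact (H.hw ρ).2
        · exact (H.hw u).2
    _ = (5 * B ^ 4 * K) * (ε ^ 2 * (N + |ρ|) / ((ρ ^ 2 + ε ^ 2) * (u ^ 2 + ε ^ 2))) := by
        field_simp
    _ ≤ (5 * B ^ 4 * K) * _ := mul_le_mul_of_nonneg_left hp (by positivity)
    _ = _ := by ring

lemma CkH.hdiff {ε s K L B : ℝ} {X w : ℝ → ℝ} (H : CkH ε s K L B X w) {β ρ D : ℝ}
    (hβ : |β| ≤ s) (hD : |D| ≤ 4 * s) :
    |D| * |w (D - ρ) * ckB X w β (D - ρ) - w (D + ρ) * ckB X w β (D + ρ)| ≤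
      |ρ| * ((32 * L + 64) * B * ε * (1 / (D ^ 2 + ε ^ 2) + 1 / ((D - ρ) ^ 2 + ε ^ 2) +
        1 / ((D + ρ) ^ 2 + ε ^ 2))) := by
  have hε := H.hε
  have hs := H.hs
  have hB := H.hB
  have hL := H.hL
  have hβ4 : |β| ≤ 4 * s := by linarith
  have e1 := H.bB (r := D - ρ) hβ4
  have e2 := H.bB (r := D + ρ) hβ4
  set u := D - ρ with hu
  set v := D + ρ with hv
  have hXβ := H.hX β hβ4
  have hX0 : 0 < X β := by linarith
  have hwu := H.hw u
  have hwv := H.hw v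
  have hwβ := H.hw β
  rcases le_or_gt (2 * |ρ|) |D| with hc | hc
  · have hsq : ∀ z : ℝ, |D| ≤ 2 * |z| → (D ^ 2 + ε ^ 2) / 4 ≤ z ^ 2 + ε ^ 2 := by
      intro z hz
      have := mul_self_le_mul_self (abs_nonneg D) hz
      nlinarith [sq_abs D, sq_abs z, sq_nonneg ε]
    have hU := hsq u (by have := abs_add_le u ρ; rw [show u + ρ = D by rw [hu]; ring] at this; linarith)
    have hV := hsq v (by have := abs_sub v ρ; rw [show v - ρ = D by rw [hv]; ring] at this; linarith)
    have hd : w u * ckB X w β u - w v * ckB X w β v =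
        (w u - w v) * ckB X w β u + w v * (X β * w β * (4 * D * ρ) / ((u ^ 2 + X β ^ 2) * (v ^ 2 + X β ^ 2))) := by
      unfold ckB
      have : 4 * D * ρ = v ^ 2 - u ^ 2 := by rw [hu, hv]; ring
      rw [this]
      field_simp; ring
    have hDV : 0 < D ^ 2 + ε ^ 2 := by positivity
    have hUX : u ^ 2 + ε ^ 2 ≤ u ^ 2 + X β ^ 2 := by nlinarith
    have hVX : v ^ 2 + ε ^ 2 ≤ v ^ 2 + X β ^ 2 := by nlinarith
    have t1 : |D| * |(w u - w v) * ckB X w β u| ≤ |ρ| * (32 * L * B * ε / (D ^ 2 + ε ^ 2)) := by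
      have h := H.hwL u v
      have huv : |u - v| = 2 * |ρ| := by
        rw [show u - v = -(2 * ρ) by rw [hu, hv]; ring, abs_neg, abs_mul]; norm_num
      rw [huv] at h
      have e1' : |ckB X w β u| ≤ B * ε / ((D ^ 2 + ε ^ 2) / 4) := e1.trans (by gcongr)
      rw [abs_mul]
      calc |D| * (|w u - w v| * |ckB X w β u|) ≤ (4 * s) * (|w u - w v| * |ckB X w β u|) := by gcongr
        _ = 4 * (|w u - w v| * s) * |ckB X w β u| := by ring
        _ ≤ 4 * (L * (2 * |ρ|)) * (B * ε / ((D ^ 2 + ε ^ 2) / 4)) := by gcongr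
        _ = _ := by field_simp; ring
    have t2 : |D| * |w v * (X β * w β * (4 * D * ρ) / ((u ^ 2 + X β ^ 2) * (v ^ 2 + X β ^ 2)))| ≤
        |ρ| * (64 * B * ε / (D ^ 2 + ε ^ 2)) := by
      rw [abs_mul, abs_div, abs_mul, abs_mul, abs_mul, abs_mul, abs_of_nonneg hwv.1, abs_of_pos hX0,
        abs_of_nonneg hwβ.1, abs_of_pos (by positivity : 0 < (u ^ 2 + X β ^ 2) * (v ^ 2 + X β ^ 2)),
        show |(4:ℝ)| = 4 by norm_num]
      calc _ ≤ |D| * (1 * ((B * ε) * 1 * (4 * |D| * |ρ|) / (((D ^ 2 + ε ^ 2) / 4) * ((D ^ 2 + ε ^ 2) / 4)))) := by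
            have := hwβ.1; have := hwβ.2; have := hwv.1; have := hwv.2
            gcongr
            · exact hXβ.2
            · linarith
            · linarith
        _ = |ρ| * (64 * B * ε / (D ^ 2 + ε ^ 2)) * (D ^ 2 / (D ^ 2 + ε ^ 2)) := by
            rw [← sq_abs D]; field_simp; ring
        _ ≤ |ρ| * (64 * B * ε / (D ^ 2 + ε ^ 2)) * 1 := by
            gcongr
            rw [div_le_one hDV]; nlinarith
        _ = _ := by ring
    rw [hd]
    calc _ ≤ |D| * (|(w u - w v) * ckB X w β u| + |w v * (X β * w β * (4 * D * ρ) / ((u ^ 2 + X β ^ 2) * (v ^ 2 + X β ^ 2)))|) := by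
          gcongr; exact abs_add_le _ _
      _ ≤ |ρ| * (32 * L * B * ε / (D ^ 2 + ε ^ 2)) + |ρ| * (64 * B * ε / (D ^ 2 + ε ^ 2)) := by
          rw [mul_add]; exact add_le_add t1 t2
      _ = |ρ| * ((32 * L + 64) * B * ε * (1 / (D ^ 2 + ε ^ 2))) := by ring
      _ ≤ _ := by
          gcongr
          rw [add_assoc]
          exact le_add_of_nonneg_right (by positivity)
  · have g1 : |w u * ckB X w β u - w v * ckB X w β v| ≤ B * ε / (u ^ 2 + ε ^ 2) + B * ε / (v ^ 2 + ε ^ 2) := by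
      refine (abs_sub _ _).trans ?_
      rw [abs_mul, abs_mul, abs_of_nonneg hwu.1, abs_of_nonneg hwv.1]
      exact add_le_add ((mul_le_of_le_one_left (abs_nonneg _) hwu.2).trans e1)
        ((mul_le_of_le_one_left (abs_nonneg _) hwv.2).trans e2)
    calc _ ≤ (2 * |ρ|) * (B * ε / (u ^ 2 + ε ^ 2) + B * ε / (v ^ 2 + ε ^ 2)) := by gcongr
      _ = |ρ| * (2 * B * ε * (0 + 1 / (u ^ 2 + ε ^ 2) + 1 / (v ^ 2 + ε ^ 2))) := by ring
      _ ≤ _ := by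
          gcongr
          · linarith
          · positivity

lemma ck_prod' {ε ρ u D N : ℝ} (hε : 0 < ε) (hD : D = ρ + u) (hN : |D| + ε ≤ N) :
    ε ^ 2 * N * (1 / (ρ ^ 2 + ε ^ 2)) * (1 / (u ^ 2 + ε ^ 2)) ≤
      4 * (ε ^ 2 * N / (D ^ 2 + ε ^ 2)) * (1 / (ρ ^ 2 + ε ^ 2) + 1 / (u ^ 2 + ε ^ 2)) := by
  refine le_trans ?_ (ck_prod hε hD hN)
  have : ε ^ 2 * N * (1 / (ρ ^ 2 + ε ^ 2)) * (1 / (u ^ 2 + ε ^ 2)) =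
    ε ^ 2 * N / ((ρ ^ 2 + ε ^ 2) * (u ^ 2 + ε ^ 2)) := by field_simp
  rw [this]
  gcongr
  exact le_add_of_nonneg_right (abs_nonneg _)

lemma CkH.Q {ε s K L B : ℝ} {X w : ℝ → ℝ} (H : CkH ε s K L B X w) {α β ρ : ℝ}
    (hα : |α| ≤ 3 * s) (hβ : |β| ≤ s) (hρ0 : ρ ≠ 0) :
    |w ρ / ρ * (ckA X w α ρ - ckA X w β ρ) *
      (w (β - α - ρ) * ckB X w β (β - α - ρ) - w (β - α + ρ) * ckB X w β (β - α + ρ))| ≤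
    3 * B ^ 3 * K * (32 * L + 64) * (ε ^ 2 * (|α| + |β| + ε) / ((β - α) ^ 2 + ε ^ 2)) *
      (9 * (1 / (ρ ^ 2 + ε ^ 2)) + 4 * (1 / ((β - α - ρ) ^ 2 + ε ^ 2)) +
        4 * (1 / ((β - α + ρ) ^ 2 + ε ^ 2))) := by
  have hε := H.hε
  have hs := H.hs
  have hB := H.hB
  have hL := H.hL
  have hK := H.hK
  have hr : 0 < |ρ| := abs_pos.2 hρ0
  have a0 := abs_nonneg α
  have b0 := abs_nonneg β
  have hDab := abs_sub β α
  have d1 := H.dA (x := α) (y := β) (m := |α| + |β| + ε) (r := ρ) (by linarith) (by linarith)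
    (by linarith) (by linarith)
  rw [abs_sub_comm α β] at d1
  have d2 := H.hdiff (ρ := ρ) (D := β - α) hβ (by linarith)
  set N := |α| + |β| + ε with hN
  have hN0 : 0 < N := by positivity
  set D := β - α with hD
  have p1 := ck_prod' (ε := ε) (ρ := ρ) (u := D - ρ) (D := D) (N := N) hε (by ring) (by linarith)
  have p2 := ck_prod' (ε := ε) (ρ := -ρ) (u := D + ρ) (D := D) (N := N) hε (by ring) (by linarith)
  rw [neg_sq] at p2
  set R := 1 / (ρ ^ 2 + ε ^ 2) with hR
  set U := 1 / ((D - ρ) ^ 2 + ε ^ 2) with hU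
  set V := 1 / ((D + ρ) ^ 2 + ε ^ 2) with hV
  have hR0 : 0 < R := by positivity
  set Δ := |w (D - ρ) * ckB X w β (D - ρ) - w (D + ρ) * ckB X w β (D + ρ)| with hΔ
  rw [abs_mul, abs_mul, abs_div, abs_of_nonneg (H.hw ρ).1, ← hΔ]
  calc w ρ / |ρ| * |ckA X w α ρ - ckA X w β ρ| * Δ
      ≤ 1 / |ρ| * (3 * B ^ 2 * (K * N * |D|) * ε / (ρ ^ 2 + ε ^ 2)) * Δ := by
        have := (H.hw ρ).2
        gcongr
    _ = 1 / |ρ| * (3 * B ^ 2 * K * N * ε * R) * (|D| * Δ) := by rw [hR]; ring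
    _ ≤ 1 / |ρ| * (3 * B ^ 2 * K * N * ε * R) * (|ρ| * ((32 * L + 64) * B * ε * (1 / (D ^ 2 + ε ^ 2) + U + V))) := by
        gcongr
    _ = 3 * B ^ 3 * K * (32 * L + 64) * (ε ^ 2 * N / (D ^ 2 + ε ^ 2) * R + ε ^ 2 * N * R * U + ε ^ 2 * N * R * V) := by
        field_simp
    _ ≤ 3 * B ^ 3 * K * (32 * L + 64) * (ε ^ 2 * N / (D ^ 2 + ε ^ 2) * R + 4 * (ε ^ 2 * N / (D ^ 2 + ε ^ 2)) * (R + U) + 4 * (ε ^ 2 * N / (D ^ 2 + ε ^ 2)) * (R + V)) := by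
        gcongr
    _ = _ := by ring

def ckJ (X w : ℝ → ℝ) (α β ρ : ℝ) : ℝ :=
  w ρ / ρ * w (β - α - ρ) * (ckA X w (α + ρ) ρ * ckB X w β (β - α - ρ) -
    ckA X w β ρ * ckB X w (β - ρ) (β - α - ρ))

lemma CkH.point {ε s K L B : ℝ} {X w : ℝ → ℝ} (H : CkH ε s K L B X w) {α β ρ : ℝ}
    (hw0 : ∀ x, s < |x| → w x = 0)
    (hα : |α| ≤ 3 * s) (hβ : |β| ≤ s) :
    |ckJ X w α β ρ + ckJ X w α β (-ρ)| ≤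
    (40 * B ^ 4 * K + 27 * B ^ 3 * K * (32 * L + 64)) *
      (ε ^ 2 * (|α| + |β| + ε) / ((β - α) ^ 2 + ε ^ 2)) *
      (1 / (ρ ^ 2 + ε ^ 2) + 1 / ((β - α - ρ) ^ 2 + ε ^ 2) + 1 / ((β - α + ρ) ^ 2 + ε ^ 2)) := by
  have hε := H.hε
  have hs := H.hs
  have hB := H.hB
  have hL := H.hL
  have hK := H.hK
  have hT : 0 ≤ ε ^ 2 * (|α| + |β| + ε) / ((β - α) ^ 2 + ε ^ 2) := by positivity
  by_cases hρ0 : ρ = 0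
  · have : ckJ X w α β ρ + ckJ X w α β (-ρ) = 0 := by simp [ckJ, hρ0]
    rw [this, abs_zero]; positivity
  rcases lt_or_ge s |ρ| with hρ | hρ
  · have h1 := hw0 ρ hρ
    have h2 := hw0 (-ρ) (by rwa [abs_neg])
    have : ckJ X w α β ρ + ckJ X w α β (-ρ) = 0 := by simp [ckJ, h1, h2]
    rw [this, abs_zero]; positivity
  have p1 := H.P hα hβ hρ hρ0
  have p2 := H.P hα hβ (ρ := -ρ) (by rwa [abs_neg]) (neg_ne_zero.2 hρ0)
  have q := H.Q hα hβ hρ0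
  have e : ckJ X w α β ρ + ckJ X w α β (-ρ) =
    (w ρ / ρ * w (β - α - ρ) * ((ckA X w (α + ρ) ρ - ckA X w α ρ) * ckB X w β (β - α - ρ) +
      ckA X w β ρ * (ckB X w β (β - α - ρ) - ckB X w (β - ρ) (β - α - ρ)))) +
    (w (-ρ) / (-ρ) * w (β - α - (-ρ)) * ((ckA X w (α + (-ρ)) (-ρ) - ckA X w α (-ρ)) * ckB X w β (β - α - (-ρ)) +
      ckA X w β (-ρ) * (ckB X w β (β - α - (-ρ)) - ckB X w (β - (-ρ)) (β - α - (-ρ))))) +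
    (w ρ / ρ * (ckA X w α ρ - ckA X w β ρ) *
      (w (β - α - ρ) * ckB X w β (β - α - ρ) - w (β - α + ρ) * ckB X w β (β - α + ρ))) := by
    have en : ∀ x, ckA X w x (-ρ) = ckA X w x ρ := fun x => by simp [ckA]
    simp only [ckJ, en, H.hev, sub_neg_eq_add, div_neg]
    ring
  rw [e]
  refine (abs_add_le _ _).trans ?_
  refine (add_le_add ((abs_add_le _ _).trans (add_le_add p1 p2)) q).trans ?_
  rw [sub_neg_eq_add, neg_sq]
  set T := ε ^ 2 * (|α| + |β| + ε) / ((β - α) ^ 2 + ε ^ 2)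
  have hR : 0 < 1 / (ρ ^ 2 + ε ^ 2) := by positivity
  have hU : 0 < 1 / ((β - α - ρ) ^ 2 + ε ^ 2) := by positivity
  have hV : 0 < 1 / ((β - α + ρ) ^ 2 + ε ^ 2) := by positivity
  set R := 1 / (ρ ^ 2 + ε ^ 2)
  set U := 1 / ((β - α - ρ) ^ 2 + ε ^ 2)
  set V := 1 / ((β - α + ρ) ^ 2 + ε ^ 2)
  have c1 : 0 ≤ B ^ 4 * K * T := by positivity
  have c2 : 0 ≤ B ^ 3 * K * (32 * L + 64) * T := by positivity
  have d1 : 0 ≤ (B ^ 4 * K * T) * (20 * U + 20 * V) := by positivity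
  have d2 : 0 ≤ (B ^ 3 * K * (32 * L + 64) * T) * (15 * U + 15 * V) := by positivity
  nlinarith [d1, d2]

lemma CkH.final {ε s K L B : ℝ} {X w : ℝ → ℝ} (H : CkH ε s K L B X w) {α β : ℝ}
    (hw0 : ∀ x, s < |x| → w x = 0)
    (hα : |α| ≤ 3 * s) (hβ : |β| ≤ s) :
    |∫ ρ, ckJ X w α β ρ| ≤
    (40 * B ^ 4 * K + 27 * B ^ 3 * K * (32 * L + 64)) * (3 * π) *
      (ε * (|α| + |β| + ε) / ((β - α) ^ 2 + ε ^ 2)) := by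
  have hε := H.hε
  have hB := H.hB
  have hL := H.hL
  have hK := H.hK
  have hpi := Real.pi_pos
  by_cases hi : Integrable (fun ρ => ckJ X w α β ρ)
  swap
  · rw [integral_undef hi, abs_zero]; positivity
  have h2 : ∫ ρ, (ckJ X w α β ρ + ckJ X w α β (-ρ)) = 2 * ∫ ρ, ckJ X w α β ρ := by
    rw [integral_add hi hi.comp_neg, integral_neg_eq_self (fun ρ => ckJ X w α β ρ) volume]; ring
  obtain ⟨i0, v0⟩ := ck_int hε
  have i1 := i0.comp_sub_left (β - α)
  have i2 := i0.comp_add_left (β - α)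
  have v1 := integral_sub_left_eq_self (fun x : ℝ => 1 / (x ^ 2 + ε ^ 2)) volume (β - α)
  have v2 := integral_add_left_eq_self (μ := volume) (fun x : ℝ => 1 / (x ^ 2 + ε ^ 2)) (β - α)
  rw [v0] at v1 v2
  set c := (40 * B ^ 4 * K + 27 * B ^ 3 * K * (32 * L + 64)) *
      (ε ^ 2 * (|α| + |β| + ε) / ((β - α) ^ 2 + ε ^ 2)) with hc
  have hn := norm_integral_le_of_norm_le (f := fun ρ => ckJ X w α β ρ + ckJ X w α β (-ρ)) (((i0.add i1).add i2).const_mul c)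
    (Eventually.of_forall fun ρ => H.point (ρ := ρ) hw0 hα hβ)
  simp only [Pi.add_apply] at hn
  have i01 : Integrable (fun x : ℝ => 1 / (x ^ 2 + ε ^ 2) + 1 / ((β - α - x) ^ 2 + ε ^ 2)) :=
    i0.add i1
  rw [h2, integral_const_mul, integral_add i01 i2, integral_add i0 i1, v0, v1, v2,
    Real.norm_eq_abs, abs_mul, abs_two] at hn
  have e : c * (π / ε + π / ε + π / ε) = (40 * B ^ 4 * K + 27 * B ^ 3 * K * (32 * L + 64)) * (3 * π) *
      (ε * (|α| + |β| + ε) / ((β - α) ^ 2 + ε ^ 2)) := by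
    rw [hc]; field_simp; ring
  rw [e] at hn
  have := abs_nonneg (∫ ρ, ckJ X w α β ρ)
  linarith

/-- **Pointwise bound on the commutator kernel (estimate (3.152.5)).**  For all `α, β ∈ ℝ`,
`|K(α,β)| ≲ ψ_{√ε}(β) ψ_{√ε}(α) ε(|α|+|β|+ε)/((β−α)²+ε²)`, with the constant depending only on
`A`, `δ` (and `ψ`). -/
theorem commutator_kernel_bound (δ A : ℝ) (hδ : δ ∈ Ioc (0:ℝ) (1/100)) (hA : 1 ≤ A)
    (ψ : ℝ → ℝ) (hψ : IsCutoff ψ) :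
    ∃ C : ℝ, 0 < C ∧
      ∀ ε : ℝ, ε ∈ Ioc (0:ℝ) (δ ^ 2 / 100) →
      ∀ f g : ℝ → ℝ, GoodFG δ A ε f g →
      ∀ α β : ℝ,
        |Kcom ψ ε f g α β| ≤
          C * scut ψ (Real.sqrt ε) β * scut ψ (Real.sqrt ε) α *
            (ε * (|α| + |β| + ε) / ((β - α) ^ 2 + ε ^ 2)) := by
  obtain ⟨hsm, hev, hrg, hout, hin⟩ := hψ
  have hcs : HasCompactSupport ψ := HasCompactSupport.intro (K := Icc (-1) 1) isCompact_Icc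
    (fun x hx => hout x (by
      by_contra h
      exact hx (abs_le.1 (not_lt.1 h))))
  obtain ⟨L0, hL0⟩ := (hsm.of_le (by exact_mod_cast le_top : (1 : WithTop ℕ∞) ≤ ((⊤ : ℕ∞) : WithTop ℕ∞))).lipschitzWith_of_hasCompactSupport hcs (by norm_num)
  set L : ℝ := (L0 : ℝ) with hL
  have hLn : 0 ≤ L := L0.2
  have hlip : ∀ x y, |ψ x - ψ y| ≤ L * |x - y| := fun x y => by
    have := hL0.dist_le_mul x y
    simpa [Real.dist_eq] using this
  set K := 2 * A + 8192 * L with hK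
  set B := 2 + 2 * A with hB
  have hKn : 0 ≤ K := by positivity
  refine ⟨(40 * B ^ 4 * K + 27 * B ^ 3 * K * (32 * L + 64)) * (3 * π) + 1, by positivity, ?_⟩
  rintro ε ⟨hε, hεδ⟩ f g ⟨hf, hg, hf0, hg0, hf1, hg1, hbd, hlow⟩ α β
  obtain ⟨hδ0, hδ1⟩ := hδ
  set t := Real.sqrt ε with ht
  have ht0 : 0 < t := Real.sqrt_pos.2 hε
  have htt : t ^ 2 = ε := Real.sq_sqrt hε.le
  have htδ : t ≤ δ / 10 := by
    rw [ht, Real.sqrt_le_left (by positivity)]; nlinarith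
  set s := t / 2 ^ 6 with hs
  have hs0 : 0 < s := by positivity
  have hst : t = 64 * s := by rw [hs]; ring
  have hsε : ε = 4096 * s ^ 2 := by rw [← htt, hst]; ring
  have lf : ∀ x y m, |x| ≤ m → |y| ≤ m → m < δ → |f x - f y| ≤ A * m * |x - y| :=
    fun x y m hx hy hm => ck_lip (by linarith) hf hf1 (fun z hz => by
      have := hbd z hz 2 (by norm_num)
      have := abs_nonneg (iteratedDerivWithin 2 g (Ioo (-δ) δ) z)
      linarith) hx hy hm
  have lg : ∀ x y m, |x| ≤ m → |y| ≤ m → m < δ → |g x - g y| ≤ A * m * |x - y| :=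
    fun x y m hx hy hm => ck_lip (by linarith) hg hg1 (fun z hz => by
      have := hbd z hz 2 (by norm_num)
      have := abs_nonneg (iteratedDerivWithin 2 f (Ioo (-δ) δ) z)
      linarith) hx hy hm
  set X := Xt ε f g with hX
  set w := scut ψ s with hw
  have hw0 : ∀ x, s < |x| → w x = 0 := fun x hx => hout _ (by
    rw [abs_div, abs_of_pos hs0]; exact (one_lt_div hs0).2 hx)
  have hwL : ∀ x y, |w x - w y| * s ≤ L * |x - y| := fun x y => by
    have := hlip (x / s) (y / s)
    rw [← sub_div, abs_div, abs_of_pos hs0] at this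
    calc |w x - w y| * s ≤ L * (|x - y| / s) * s := mul_le_mul_of_nonneg_right this hs0.le
      _ = _ := by field_simp
  have H : CkH ε s K L B X w := by
    refine ⟨hε, hs0, hKn, hLn, by linarith, ?_, fun x => hrg _, ?_, ?_, hwL, ?_⟩
    · intro x hx
      have hxb := abs_le.1 hx
      have hxI : x ∈ Ioo (-(4 * t)) (4 * t) := ⟨by linarith, by linarith⟩
      constructor
      · have := hlow x hxI x hxI
        simp only [hX, Xt]; linarith
      · have a1 := lf x 0 (4 * s) hx (by simp; positivity) (by linarith)
        have a2 := lg x 0 (4 * s) hx (by simp; positivity) (by linarith)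
        rw [hf0, sub_zero, sub_zero] at a1
        rw [hg0, sub_zero, sub_zero] at a2
        have b1 : A * (4 * s) * |x| ≤ A * (4 * s) * (4 * s) := by gcongr
        have c1 := le_abs_self (f x)
        have c2 := le_abs_self (g x)
        have b2 : A * (4 * s) * (4 * s) ≤ A * ε := by
          rw [hsε]; nlinarith [mul_nonneg (by linarith : 0 ≤ A) (sq_nonneg s)]
        simp only [hX, Xt, hB]; nlinarith
    · intro x y m hx hy hxm hym
      have a1 := lf x y (max |x| |y|) (le_max_left _ _) (le_max_right _ _)
        ((max_le hx hy).trans_lt (by linarith))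
      have a2 := lg x y (max |x| |y|) (le_max_left _ _) (le_max_right _ _)
        ((max_le hx hy).trans_lt (by linarith))
      have e : X x - X y = (f x - f y) + (g x - g y) := by simp only [hX, Xt]; ring
      have hm0 : 0 ≤ m := (abs_nonneg x).trans hxm
      rw [e]
      calc _ ≤ |f x - f y| + |g x - g y| := abs_add_le _ _
        _ ≤ 2 * A * max |x| |y| * |x - y| := by linarith
        _ ≤ K * m * |x - y| := by
          have : 2 * A ≤ K := by linarith
          have : max |x| |y| ≤ m := max_le hxm hym
          gcongr
    · intro x y m hxm hym
      have hm0 : 0 ≤ m := (abs_nonneg x).trans hxm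
      rcases le_or_gt m (s / 2) with hm | hm
      · have h1 : ∀ z, |z| ≤ m → w z = 1 := fun z hz => hin _ (by
          rw [abs_div, abs_of_pos hs0, div_le_iff₀ hs0]; linarith)
        rw [h1 x hxm, h1 y hym]
        simp; positivity
      · calc |w x - w y| * ε = 4096 * s * (|w x - w y| * s) := by rw [hsε]; ring
          _ ≤ 4096 * (2 * m) * (L * |x - y|) := by
            have := hwL x y
            gcongr; linarith
          _ = 8192 * L * m * |x - y| := by ring
          _ ≤ K * m * |x - y| := by
            have : 8192 * L ≤ K := by linarith
            gcongr
    · intro x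
      simp only [hw, scut, neg_div, hev]
  have hKJ : Kcom ψ ε f g α β = ∫ ρ, ckJ X w α β ρ := rfl
  have hRHS : 0 ≤ ε * (|α| + |β| + ε) / ((β - α) ^ 2 + ε ^ 2) := by positivity
  have hcut : ∀ z, 0 ≤ scut ψ t z := fun z => (hrg _).1
  have hzero : (∀ ρ, ckJ X w α β ρ = 0) → |Kcom ψ ε f g α β| ≤
      ((40 * B ^ 4 * K + 27 * B ^ 3 * K * (32 * L + 64)) * (3 * π) + 1) * scut ψ t β *
        scut ψ t α * (ε * (|α| + |β| + ε) / ((β - α) ^ 2 + ε ^ 2)) := by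
    intro h
    rw [hKJ]
    simp only [h, integral_zero, abs_zero]
    have := hcut α
    have := hcut β
    positivity
  rcases lt_or_ge s |β| with hβ | hβ
  · apply hzero
    intro ρ
    simp [ckJ, ckA, ckB, hw0 β hβ]
  rcases lt_or_ge (3 * s) |α| with hα | hα
  · apply hzero
    intro ρ
    rcases lt_or_ge s |ρ| with h | h
    · simp [ckJ, hw0 ρ h]
    · have : s < |β - α - ρ| := by
        have h1 : |α| ≤ |β - ρ| + |β - α - ρ| := by
          have := abs_sub (β - ρ) (β - α - ρ)
          rwa [show β - ρ - (β - α - ρ) = α by ring] at this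
        have h2 := abs_sub β ρ
        linarith
      simp [ckJ, hw0 _ this]
  have one : ∀ z, |z| ≤ 3 * s → scut ψ t z = 1 := fun z hz => hin _ (by
    rw [abs_div, abs_of_pos ht0, div_le_iff₀ ht0]; linarith)
  rw [one α hα, one β (by linarith), hKJ, mul_one, mul_one, add_mul, one_mul]
  have := H.final hw0 hα hβ
  linarith
end
end
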